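/- arXiv:1301.0726 — 2 statements merged into one kernel-verified Lean document; each statement's English description precedes it below -/
import Mathlib

section
/- Let (X_i)_{i∈ℕ} be a sequence of identically distributed real random variables with common distribution function F, and suppose (X_i) is α-mixing with mixing coefficients (α(n)). Let r ∈ [0, 1/2) and assume α(n) ≤ K·n^{−ϑ} for all n ∈ ℕ and some constants K > 0 and ϑ > 2r. Then n^r · sup_{x∈ℝ} |F̂_n(x) − F(x)| → 0 ℙ-almost surely as n → ∞. -/
open MeasureTheory Filter Set

/-- The empirical distribution function of `X 0, …, X (n-1)` evaluated at `x`. -/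
noncomputable def empDF {Ω : Type*} (X : ℕ → Ω → ℝ) (n : ℕ) (ω : Ω) (x : ℝ) : ℝ :=
  (((Finset.range n).filter fun i => X i ω ≤ x).card : ℝ) / n

/-- Distribution function of a random variable. -/
noncomputable def distFun {Ω : Type*} [MeasurableSpace Ω] (P : Measure Ω) (Y : Ω → ℝ) (x : ℝ) : ℝ :=
  (P {ω | Y ω ≤ x}).toReal

/-- α-mixing coefficients of a sequence of real random variables. -/
noncomputable def alphaCoef {Ω : Type*} [MeasurableSpace Ω] (P : Measure Ω)
    (X : ℕ → Ω → ℝ) (n : ℕ) : ℝ :=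
  sSup { c : ℝ | ∃ (k : ℕ) (A B : Set Ω),
    MeasurableSet[⨆ i ∈ {i : ℕ | i ≤ k}, MeasurableSpace.comap (X i) Real.measurableSpace] A ∧
    MeasurableSet[⨆ i ∈ {i : ℕ | k + n ≤ i}, MeasurableSpace.comap (X i) Real.measurableSpace] B ∧
    c = |(P (A ∩ B)).toReal - (P A).toReal * (P B).toReal| }

lemma alpha_bound {Ω : Type*} [MeasurableSpace Ω] (P : Measure Ω) [IsProbabilityMeasure P]
    (X : ℕ → Ω → ℝ) (i d : ℕ) (S T : Set ℝ) (hS : MeasurableSet S) (hT : MeasurableSet T) :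
    |P.real (X i ⁻¹' S ∩ X (i + d) ⁻¹' T) - P.real (X i ⁻¹' S) * P.real (X (i + d) ⁻¹' T)|
      ≤ alphaCoef P X d := by
  apply le_csSup
  · refine ⟨1, ?_⟩
    rintro c ⟨k, A, B, -, -, rfl⟩
    change |P.real _ - P.real _ * P.real _| ≤ 1
    have h1 : P.real (A ∩ B) ≤ 1 := measureReal_le_one
    have h2 : P.real A ≤ 1 := measureReal_le_one
    have h3 : P.real B ≤ 1 := measureReal_le_one
    have h4 : 0 ≤ P.real (A ∩ B) := measureReal_nonneg
    have h5 : 0 ≤ P.real A := measureReal_nonneg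
    have h6 : 0 ≤ P.real B := measureReal_nonneg
    rw [abs_le]
    constructor <;> nlinarith
  · refine ⟨i, X i ⁻¹' S, X (i + d) ⁻¹' T, ?_, ?_, rfl⟩
    · have : MeasurableSpace.comap (X i) Real.measurableSpace ≤
        ⨆ j ∈ {j : ℕ | j ≤ i}, MeasurableSpace.comap (X j) Real.measurableSpace :=
        le_iSup₂_of_le i (by simp) le_rfl
      exact this _ ⟨S, hS, rfl⟩
    · have : MeasurableSpace.comap (X (i + d)) Real.measurableSpace ≤
        ⨆ j ∈ {j : ℕ | i + d ≤ j}, MeasurableSpace.comap (X j) Real.measurableSpace :=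
        le_iSup₂_of_le (i + d) (by simp) le_rfl
      exact this _ ⟨T, hT, rfl⟩

/-- Sign selection for bilinear forms. -/
lemma sign_selection {ι : Type*} [DecidableEq ι] (c : ι → ι → ℝ) (s : Finset ι) :
    ∃ T U : Finset ι, T ⊆ s ∧ U ⊆ s ∧
      ∑ p ∈ s, c p p ≤ (∑ p ∈ T, ∑ q ∈ T, c p q) + (∑ p ∈ U, ∑ q ∈ U, c p q)
        - (∑ p ∈ T, ∑ q ∈ U, c p q) - (∑ p ∈ U, ∑ q ∈ T, c p q) := by
  induction s using Finset.induction_on with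
  | empty => exact ⟨∅, ∅, by simp, by simp, by simp⟩
  | insert a s ha ih =>
    obtain ⟨T, U, hT, hU, h⟩ := ih
    have haT : a ∉ T := fun h => ha (hT h)
    have haU : a ∉ U := fun h => ha (hU h)
    by_cases hs : 0 ≤ (∑ q ∈ T, c a q) + (∑ q ∈ T, c q a) - (∑ q ∈ U, c a q) - (∑ q ∈ U, c q a)
    · refine ⟨insert a T, U, Finset.insert_subset_insert _ hT,
        hU.trans (Finset.subset_insert _ _), ?_⟩
      simp only [Finset.sum_insert ha, Finset.sum_insert haT, Finset.sum_add_distrib]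
      linarith
    · refine ⟨T, insert a U, hT.trans (Finset.subset_insert _ _),
        Finset.insert_subset_insert _ hU, ?_⟩
      simp only [Finset.sum_insert ha, Finset.sum_insert haU, Finset.sum_add_distrib]
      linarith

/-- Covariances summed over a disjoint family of cells. -/
lemma cell_cov {Ω : Type*} [MeasurableSpace Ω] (P : Measure Ω) [IsProbabilityMeasure P]
    (Y Z : Ω → ℝ) (hY : Measurable Y) (hZ : Measurable Z) (κ : ℝ)
    (h : ∀ S T : Set ℝ, MeasurableSet S → MeasurableSet T →
      |P.real (Y ⁻¹' S ∩ Z ⁻¹' T) - P.real (Y ⁻¹' S) * P.real (Z ⁻¹' T)| ≤ κ)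
    (s : Finset ℕ) (I : ℕ → Set ℝ) (hI : ∀ p, MeasurableSet (I p))
    (hd : Pairwise (fun p q => Disjoint (I p) (I q))) :
    ∑ p ∈ s, (P.real (Y ⁻¹' I p ∩ Z ⁻¹' I p) - P.real (Y ⁻¹' I p) * P.real (Z ⁻¹' I p))
      ≤ 4 * κ := by
  set c : ℕ → ℕ → ℝ := fun p q =>
    P.real (Y ⁻¹' I p ∩ Z ⁻¹' I q) - P.real (Y ⁻¹' I p) * P.real (Z ⁻¹' I q) with hc
  have key : ∀ T U : Finset ℕ, |∑ p ∈ T, ∑ q ∈ U, c p q| ≤ κ := by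
    intro T U
    have := h (⋃ p ∈ T, I p) (⋃ q ∈ U, I q) (Finset.measurableSet_biUnion _ fun p _ => hI p)
      (Finset.measurableSet_biUnion _ fun p _ => hI p)
    have e1 : P.real (Y ⁻¹' ⋃ p ∈ T, I p) = ∑ p ∈ T, P.real (Y ⁻¹' I p) := by
      rw [preimage_iUnion₂]
      exact measureReal_biUnion_finset (fun p _ q _ hpq => (hd hpq).preimage _)
        (fun p _ => hY (hI p))
    have e2 : P.real (Z ⁻¹' ⋃ p ∈ U, I p) = ∑ p ∈ U, P.real (Z ⁻¹' I p) := by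
      rw [preimage_iUnion₂]
      exact measureReal_biUnion_finset (fun p _ q _ hpq => (hd hpq).preimage _)
        (fun p _ => hZ (hI p))
    have e3 : P.real ((Y ⁻¹' ⋃ p ∈ T, I p) ∩ (Z ⁻¹' ⋃ p ∈ U, I p))
        = ∑ p ∈ T, ∑ q ∈ U, P.real (Y ⁻¹' I p ∩ Z ⁻¹' I q) := by
      rw [preimage_iUnion₂, iUnion₂_inter, measureReal_biUnion_finset]
      · refine Finset.sum_congr rfl fun p _ => ?_
        rw [preimage_iUnion₂, inter_iUnion₂, measureReal_biUnion_finset]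
        · exact fun a _ b _ hab => ((hd hab).preimage _).mono inter_subset_right inter_subset_right
        · exact fun q _ => (hY (hI p)).inter (hZ (hI q))
      · exact fun a _ b _ hab => ((hd hab).preimage _).mono inter_subset_left inter_subset_left
      · exact fun p _ => (hY (hI p)).inter (hZ (Finset.measurableSet_biUnion _ fun p _ => hI p))
    rw [e1, e2, e3, Finset.sum_mul_sum] at this
    simpa [hc, Finset.sum_sub_distrib] using this
  obtain ⟨T, U, -, -, hTU⟩ := sign_selection c s
  have a1 := abs_le.1 (key T T)
  have a2 := abs_le.1 (key T U)
  have a3 := abs_le.1 (key U T)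
  have a4 := abs_le.1 (key U U)
  have : ∑ p ∈ s, c p p ≤ 4 * κ := by linarith [a1.1, a1.2, a2.1, a2.2, a3.1, a3.2, a4.1, a4.2]
  exact this

lemma double_sum_bound (f : ℕ → ℕ → ℝ) (g : ℕ → ℝ) (A : ℝ) (hg : ∀ d, 0 ≤ g d)
    (h0 : ∀ i, f i i ≤ A) (h1 : ∀ i d, 1 ≤ d → f i (i + d) ≤ g d)
    (h2 : ∀ i d, 1 ≤ d → f (i + d) i ≤ g d) (n : ℕ) :
    ∑ i ∈ Finset.range n, ∑ k ∈ Finset.range n, f i k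
      ≤ n * (A + 2 * ∑ d ∈ Finset.range n, g (d + 1)) := by
  have aux : ∀ m, ∑ i ∈ Finset.range m, g (m - i) = ∑ d ∈ Finset.range m, g (d + 1) := by
    intro m
    rw [← Finset.sum_range_reflect]
    refine Finset.sum_congr rfl fun i hi => ?_
    rw [Finset.mem_range] at hi
    congr 1; omega
  have main : ∀ m, m ≤ n → ∑ i ∈ Finset.range m, ∑ k ∈ Finset.range m, f i k
      ≤ m * (A + 2 * ∑ d ∈ Finset.range n, g (d + 1)) := by
    intro m
    induction m with
    | zero => simp
    | succ m ih =>
      intro hm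
      have ih := ih (by omega)
      have b1 : ∑ i ∈ Finset.range m, f i m ≤ ∑ d ∈ Finset.range m, g (d + 1) := by
        rw [← aux]
        refine Finset.sum_le_sum fun i hi => ?_
        rw [Finset.mem_range] at hi
        have := h1 i (m - i) (by omega)
        rwa [show i + (m - i) = m by omega] at this
      have b2 : ∑ i ∈ Finset.range m, f m i ≤ ∑ d ∈ Finset.range m, g (d + 1) := by
        rw [← aux]
        refine Finset.sum_le_sum fun i hi => ?_
        rw [Finset.mem_range] at hi
        have := h2 i (m - i) (by omega)
        rwa [show i + (m - i) = m by omega] at this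
      have b3 : ∑ d ∈ Finset.range m, g (d + 1) ≤ ∑ d ∈ Finset.range n, g (d + 1) :=
        Finset.sum_le_sum_of_subset_of_nonneg
          (Finset.range_subset_range.2 (by omega)) fun _ _ _ => hg _
      rw [Finset.sum_range_succ]
      simp only [Finset.sum_range_succ (fun k => f _ k), Finset.sum_add_distrib]
      have := h0 m
      push_cast
      linarith
  exact main n le_rfl

lemma sum_rpow_bound (ϑ : ℝ) (h0 : 0 < ϑ) (h1 : ϑ < 1) (n : ℕ) :
    ∑ d ∈ Finset.range n, ((d + 1 : ℕ) : ℝ) ^ (-ϑ) ≤ (n : ℝ) ^ (1 - ϑ) / (1 - ϑ) := by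
  have hs : 0 < 1 - ϑ := by linarith
  induction n with
  | zero => simp [Real.zero_rpow hs.ne']
  | succ n ih =>
    rw [Finset.sum_range_succ]
    have hn : (0 : ℝ) < (n + 1 : ℕ) := by positivity
    have hb : (1 + (-1 / ((n + 1 : ℕ) : ℝ))) ^ (1 - ϑ) ≤ 1 + (1 - ϑ) * (-1 / ((n + 1 : ℕ) : ℝ)) := by
      apply rpow_one_add_le_one_add_mul_self _ hs.le (by linarith)
      rw [le_div_iff₀ hn]; push_cast; linarith [Nat.cast_nonneg (α := ℝ) n]
    have e : (n : ℝ) = ((n + 1 : ℕ) : ℝ) * (1 + (-1 / ((n + 1 : ℕ) : ℝ))) := by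
      field_simp; push_cast; ring
    have hpos : 0 ≤ 1 + (-1 / ((n + 1 : ℕ) : ℝ)) := by
      by_contra hneg
      push Not at hneg
      have := mul_neg_of_pos_of_neg hn hneg
      rw [← e] at this
      linarith [Nat.cast_nonneg (α := ℝ) n]
    have e2 : (n : ℝ) ^ (1 - ϑ) ≤ ((n + 1 : ℕ) : ℝ) ^ (1 - ϑ) * (1 + (1 - ϑ) * (-1 / ((n + 1 : ℕ) : ℝ))) := by
      conv_lhs => rw [e]
      rw [Real.mul_rpow hn.le hpos]
      exact mul_le_mul_of_nonneg_left hb (by positivity)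
    have e3 : ((n + 1 : ℕ) : ℝ) ^ (-ϑ) = ((n + 1 : ℕ) : ℝ) ^ (1 - ϑ) * (1 / ((n + 1 : ℕ) : ℝ)) := by
      rw [show -ϑ = (1 - ϑ) - 1 by ring, Real.rpow_sub_one hn.ne']; ring
    have : ((n + 1 : ℕ) : ℝ) ^ (-ϑ) ≤ ((n + 1 : ℕ) : ℝ) ^ (1 - ϑ) / (1 - ϑ) - (n : ℝ) ^ (1 - ϑ) / (1 - ϑ) := by
      rw [← sub_div, le_div_iff₀ hs, e3]
      have : ((n + 1 : ℕ) : ℝ) ^ (1 - ϑ) * (1 + (1 - ϑ) * (-1 / ((n + 1 : ℕ) : ℝ))) =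
        ((n + 1 : ℕ) : ℝ) ^ (1 - ϑ) - ((n + 1 : ℕ) : ℝ) ^ (1 - ϑ) * (1 / ((n + 1 : ℕ) : ℝ)) * (1 - ϑ) := by ring
      linarith
    linarith

/-- Rademacher–Menshov chaining. -/
lemma chaining (N : ℕ) : ∀ (g : ℕ → ℝ) (m : ℕ), m ≤ 2 ^ N →
    (g m - g 0) ^ 2 ≤ (N + 1) * ∑ l ∈ Finset.range (N + 1), ∑ j ∈ Finset.range (2 ^ (N - l)),
      (g (2 ^ l * (j + 1)) - g (2 ^ l * j)) ^ 2 := by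
  induction N with
  | zero =>
    intro g m hm
    have : m = 0 ∨ m = 1 := by simp at hm; omega
    rcases this with rfl | rfl
    · simp; positivity
    · simp
  | succ N ih =>
    intro g m hm
    rw [Finset.sum_range_succ']
    have ih' := ih (fun j => g (2 * j)) (m / 2) (by rw [pow_succ] at hm; omega)
    have e : ∑ l ∈ Finset.range (N + 1), ∑ j ∈ Finset.range (2 ^ (N + 1 - (l + 1))),
      (g (2 ^ (l + 1) * (j + 1)) - g (2 ^ (l + 1) * j)) ^ 2 =
      ∑ l ∈ Finset.range (N + 1), ∑ j ∈ Finset.range (2 ^ (N - l)),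
      ((fun j => g (2 * j)) (2 ^ l * (j + 1)) - (fun j => g (2 * j)) (2 ^ l * j)) ^ 2 := by
      refine Finset.sum_congr rfl fun l _ => ?_
      rw [Nat.add_sub_add_right]
      refine Finset.sum_congr rfl fun j _ => ?_
      simp only [pow_succ]
      congr 3 <;> ring_nf
    rw [e]
    set V := ∑ l ∈ Finset.range (N + 1), ∑ j ∈ Finset.range (2 ^ (N - l)),
      ((fun j => g (2 * j)) (2 ^ l * (j + 1)) - (fun j => g (2 * j)) (2 ^ l * j)) ^ 2
    simp only [pow_zero, one_mul, Nat.sub_zero, mul_zero] at ih' ⊢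
    set W := ∑ j ∈ Finset.range (2 ^ (N + 1)), (g (j + 1) - g j) ^ 2 with hW
    have hW0 : 0 ≤ W := Finset.sum_nonneg fun _ _ => sq_nonneg _
    have hV0 : 0 ≤ V := Finset.sum_nonneg fun _ _ => Finset.sum_nonneg fun _ _ => sq_nonneg _
    have ha : (g m - g (2 * (m / 2))) ^ 2 ≤ W := by
      rcases Nat.even_or_odd' m with ⟨k, rfl | rfl⟩
      · simpa using hW0
      · rw [show 2 * ((2 * k + 1) / 2) = 2 * k by omega]
        exact Finset.single_le_sum (f := fun j => (g (j + 1) - g j) ^ 2)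
          (fun _ _ => sq_nonneg _) (Finset.mem_range.2 (by omega))
    set a := g m - g (2 * (m / 2))
    set b := g (2 * (m / 2)) - g 0
    have : g m - g 0 = a + b := by simp [a, b]
    rw [this]
    push_cast
    have hN : (0 : ℝ) < N + 1 := by positivity
    have h1 : (a + b) ^ 2 ≤ (N + 1 + 1) * (a ^ 2 + b ^ 2 / (N + 1)) := by
      have : (N + 1 + 1) * (a ^ 2 + b ^ 2 / (N + 1)) - (a + b) ^ 2 = ((N + 1) * a - b) ^ 2 / (N + 1) := by
        field_simp; ring
      have h2 : 0 ≤ ((N + 1) * a - b) ^ 2 / ((N : ℝ) + 1) := by positivity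
      linarith
    have h3 : b ^ 2 / (N + 1) ≤ V := by rw [div_le_iff₀ hN]; linarith
    refine h1.trans (mul_le_mul_of_nonneg_left (by linarith) (by positivity))

/-- Centered indicator. -/
noncomputable def dev {Ω : Type*} [MeasurableSpace Ω] (P : Measure Ω) (X : ℕ → Ω → ℝ)
    (S : Set ℝ) (i : ℕ) (ω : Ω) : ℝ :=
  (X i ⁻¹' S).indicator (fun _ => (1 : ℝ)) ω - P.real (X 0 ⁻¹' S)

lemma measurable_dev {Ω : Type*} [MeasurableSpace Ω] (P : Measure Ω) (X : ℕ → Ω → ℝ)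
    (hX : ∀ i, Measurable (X i)) (S : Set ℝ) (hS : MeasurableSet S) (i : ℕ) :
    Measurable (dev P X S i) :=
  (measurable_const.indicator (hX i hS)).sub_const _

lemma abs_dev_le {Ω : Type*} [MeasurableSpace Ω] (P : Measure Ω) [IsProbabilityMeasure P]
    (X : ℕ → Ω → ℝ) (S : Set ℝ) (i : ℕ) (ω : Ω) : |dev P X S i ω| ≤ 1 := by
  have h1 : P.real (X 0 ⁻¹' S) ≤ 1 := measureReal_le_one
  have h2 : 0 ≤ P.real (X 0 ⁻¹' S) := measureReal_nonneg
  unfold dev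
  rw [abs_le]
  by_cases h : ω ∈ X i ⁻¹' S
  · rw [indicator_of_mem h]; constructor <;> linarith
  · rw [indicator_of_notMem h]; constructor <;> linarith

lemma integrable_dev_mul {Ω : Type*} [MeasurableSpace Ω] (P : Measure Ω) [IsProbabilityMeasure P]
    (X : ℕ → Ω → ℝ) (hX : ∀ i, Measurable (X i)) (S : Set ℝ) (hS : MeasurableSet S) (i k : ℕ) :
    Integrable (fun ω => dev P X S i ω * dev P X S k ω) P := by
  refine Integrable.of_bound
    ((measurable_dev P X hX S hS i).mul (measurable_dev P X hX S hS k)).aestronglyMeasurable 1 ?_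
  refine Eventually.of_forall fun ω => ?_
  rw [norm_mul, Real.norm_eq_abs, Real.norm_eq_abs]
  exact mul_le_one₀ (abs_dev_le P X S i ω) (abs_nonneg _) (abs_dev_le P X S k ω)

lemma integral_dev_mul {Ω : Type*} [MeasurableSpace Ω] (P : Measure Ω) [IsProbabilityMeasure P]
    (X : ℕ → Ω → ℝ) (hX : ∀ i, Measurable (X i))
    (hp : ∀ i S, MeasurableSet S → P.real (X i ⁻¹' S) = P.real (X 0 ⁻¹' S))
    (S : Set ℝ) (hS : MeasurableSet S) (i k : ℕ) :
    ∫ ω, dev P X S i ω * dev P X S k ω ∂P =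
      P.real (X i ⁻¹' S ∩ X k ⁻¹' S) - P.real (X i ⁻¹' S) * P.real (X k ⁻¹' S) := by
  have hA := hX i hS
  have hB := hX k hS
  have e : ∀ ω, dev P X S i ω * dev P X S k ω =
      (X i ⁻¹' S ∩ X k ⁻¹' S).indicator (fun _ => (1 : ℝ)) ω
      - P.real (X 0 ⁻¹' S) * (X i ⁻¹' S).indicator (fun _ => (1 : ℝ)) ω
      - P.real (X 0 ⁻¹' S) * (X k ⁻¹' S).indicator (fun _ => (1 : ℝ)) ω
      + P.real (X 0 ⁻¹' S) * P.real (X 0 ⁻¹' S) := by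
    intro ω
    unfold dev
    by_cases h1 : ω ∈ X i ⁻¹' S <;> by_cases h2 : ω ∈ X k ⁻¹' S <;>
      simp only [indicator, mem_inter_iff, h1, h2, if_true, if_false, and_true, and_false] <;> ring
  have i1 : ∀ A : Set Ω, MeasurableSet A → Integrable (A.indicator (fun _ => (1 : ℝ))) P :=
    fun A hA => (integrable_const _).indicator hA
  have i2 : ∀ A : Set Ω, MeasurableSet A → ∫ ω, A.indicator (fun _ => (1 : ℝ)) ω ∂P = P.real A := by
    intro A hA
    rw [integral_indicator hA]; simp
  simp_rw [e]
  rw [integral_add, integral_sub, integral_sub, integral_const_mul, integral_const_mul,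
    i2 _ hA, i2 _ hB, i2 _ (hA.inter hB), hp i S hS, hp k S hS]
  · simp
  · exact i1 _ (hA.inter hB)
  · exact (i1 _ hA).const_mul _
  · exact (i1 _ (hA.inter hB)).sub ((i1 _ hA).const_mul _)
  · exact (i1 _ hB).const_mul _
  · exact ((i1 _ (hA.inter hB)).sub ((i1 _ hA).const_mul _)).sub ((i1 _ hB).const_mul _)
  · exact integrable_const _

lemma sq_block {Ω : Type*} [MeasurableSpace Ω] (P : Measure Ω)
    (X : ℕ → Ω → ℝ) (S : Set ℝ) (a n : ℕ) (ω : Ω) :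
    (∑ i ∈ Finset.range n, dev P X S (a + i) ω) ^ 2 =
      ∑ i ∈ Finset.range n, ∑ k ∈ Finset.range n, dev P X S (a + i) ω * dev P X S (a + k) ω := by
  rw [sq, Finset.sum_mul_sum]

lemma integrable_block {Ω : Type*} [MeasurableSpace Ω] (P : Measure Ω) [IsProbabilityMeasure P]
    (X : ℕ → Ω → ℝ) (hX : ∀ i, Measurable (X i)) (S : Set ℝ) (hS : MeasurableSet S) (a n : ℕ) :
    Integrable (fun ω => (∑ i ∈ Finset.range n, dev P X S (a + i) ω) ^ 2) P := by
  simp_rw [sq_block]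
  exact integrable_finsetSum _ fun i _ => integrable_finsetSum _ fun k _ =>
    integrable_dev_mul P X hX S hS _ _

lemma second_moment {Ω : Type*} [MeasurableSpace Ω] (P : Measure Ω) [IsProbabilityMeasure P]
    (X : ℕ → Ω → ℝ) (hX : ∀ i, Measurable (X i))
    (hp : ∀ i S, MeasurableSet S → P.real (X i ⁻¹' S) = P.real (X 0 ⁻¹' S))
    (K ϑ : ℝ) (hK : 0 < K) (h0 : 0 < ϑ) (h1 : ϑ < 1)
    (hm : ∀ i d : ℕ, 1 ≤ d → ∀ S T : Set ℝ, MeasurableSet S → MeasurableSet T →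
      |P.real (X i ⁻¹' S ∩ X (i + d) ⁻¹' T) - P.real (X i ⁻¹' S) * P.real (X (i + d) ⁻¹' T)|
      ≤ K * (d : ℝ) ^ (-ϑ))
    (s : Finset ℕ) (I : ℕ → Set ℝ) (hI : ∀ p, MeasurableSet (I p))
    (hd : Pairwise (fun p q => Disjoint (I p) (I q))) (a n : ℕ) :
    ∑ p ∈ s, ∫ ω, (∑ i ∈ Finset.range n, dev P X (I p) (a + i) ω) ^ 2 ∂P
      ≤ (1 + 8 * K / (1 - ϑ)) * (n : ℝ) ^ (2 - ϑ) := by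
  have hs : 0 < 1 - ϑ := by linarith
  set f : ℕ → ℕ → ℝ := fun i k => ∑ p ∈ s, (P.real (X (a + i) ⁻¹' I p ∩ X (a + k) ⁻¹' I p)
    - P.real (X (a + i) ⁻¹' I p) * P.real (X (a + k) ⁻¹' I p)) with hf
  have e : ∑ p ∈ s, ∫ ω, (∑ i ∈ Finset.range n, dev P X (I p) (a + i) ω) ^ 2 ∂P =
      ∑ i ∈ Finset.range n, ∑ k ∈ Finset.range n, f i k := by
    have : ∀ p, ∫ ω, (∑ i ∈ Finset.range n, dev P X (I p) (a + i) ω) ^ 2 ∂P =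
        ∑ i ∈ Finset.range n, ∑ k ∈ Finset.range n,
          (P.real (X (a + i) ⁻¹' I p ∩ X (a + k) ⁻¹' I p)
            - P.real (X (a + i) ⁻¹' I p) * P.real (X (a + k) ⁻¹' I p)) := by
      intro p
      simp_rw [sq_block]
      rw [integral_finsetSum _ fun i _ => integrable_finsetSum _ fun k _ =>
        integrable_dev_mul P X hX _ (hI p) _ _]
      refine Finset.sum_congr rfl fun i _ => ?_
      rw [integral_finsetSum _ fun k _ => integrable_dev_mul P X hX _ (hI p) _ _]
      exact Finset.sum_congr rfl fun k _ => integral_dev_mul P X hX hp _ (hI p) _ _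
    simp_rw [this]
    rw [Finset.sum_comm]
    refine Finset.sum_congr rfl fun i _ => ?_
    rw [Finset.sum_comm]
  rw [e]
  have d1 : ∀ i d, 1 ≤ d → f i (i + d) ≤ 4 * (K * (d : ℝ) ^ (-ϑ)) := by
    intro i d hd1
    refine cell_cov P _ _ (hX _) (hX _) _ ?_ s I hI hd
    rw [← add_assoc]
    exact hm (a + i) d hd1
  have hsymm : ∀ i k, f i k = f k i := by
    intro i k
    refine Finset.sum_congr rfl fun p _ => ?_
    rw [inter_comm, mul_comm]
  have hdiag : ∀ i, f i i ≤ 1 := by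
    intro i
    calc f i i ≤ ∑ p ∈ s, P.real (X (a + i) ⁻¹' I p) := by
          refine Finset.sum_le_sum fun p _ => ?_
          rw [inter_self]
          have : 0 ≤ P.real (X (a + i) ⁻¹' I p) := measureReal_nonneg
          nlinarith
      _ = P.real (⋃ p ∈ s, X (a + i) ⁻¹' I p) := by
          rw [measureReal_biUnion_finset (fun p _ q _ hpq => (hd hpq).preimage _)
            (fun p _ => hX _ (hI p))]
      _ ≤ 1 := measureReal_le_one
  have := double_sum_bound f (fun d => 4 * (K * (d : ℝ) ^ (-ϑ))) 1 (fun d => by positivity)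
    hdiag d1 (fun i d h => by rw [hsymm]; exact d1 i d h) n
  refine this.trans ?_
  rcases Nat.eq_zero_or_pos n with rfl | hn
  · simp [Real.zero_rpow (show (2 - ϑ) ≠ 0 by linarith)]
  have hn' : (1 : ℝ) ≤ n := by exact_mod_cast hn
  have hb := sum_rpow_bound ϑ h0 h1 n
  simp_rw [← Finset.mul_sum]
  have h1n : (1 : ℝ) ≤ (n : ℝ) ^ (1 - ϑ) := Real.one_le_rpow hn' hs.le
  rw [show 2 - ϑ = 1 + (1 - ϑ) by ring, Real.rpow_add (by linarith), Real.rpow_one]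
  have : 1 + 2 * (4 * (K * ∑ d ∈ Finset.range n, ((d + 1 : ℕ) : ℝ) ^ (-ϑ))) ≤
      (1 + 8 * K / (1 - ϑ)) * (n : ℝ) ^ (1 - ϑ) := by
    have h3 := mul_le_mul_of_nonneg_left hb hK.le
    have : (1 + 8 * K / (1 - ϑ)) * (n : ℝ) ^ (1 - ϑ) =
      (n : ℝ) ^ (1 - ϑ) + 8 * (K * ((n : ℝ) ^ (1 - ϑ) / (1 - ϑ))) := by field_simp
    linarith
  calc _ ≤ (n : ℝ) * ((1 + 8 * K / (1 - ϑ)) * (n : ℝ) ^ (1 - ϑ)) :=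
        mul_le_mul_of_nonneg_left this (by linarith)
    _ = _ := by ring

/-- Finite chain of half-lines approximating all half-lines. -/
lemma exists_chain (μ : Measure ℝ) [IsProbabilityMeasure μ] (M : ℕ) (hM : 1 ≤ M) :
    ∃ H : ℕ → Set ℝ, Monotone H ∧ H 0 = ∅ ∧ (∀ m, MeasurableSet (H m)) ∧
      ∀ x, ∃ m m' : ℕ, m ≤ 2 * M + 2 ∧ m' ≤ 2 * M + 2 ∧ H m ⊆ Iic x ∧ Iic x ⊆ H m' ∧
        μ.real (H m') - μ.real (H m) ≤ 1 / M := by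
  set F : ℝ → ℝ := fun x => μ.real (Iic x) with hF
  have hFmono : Monotone F := fun x y h => measureReal_mono (Iic_subset_Iic.2 h)
  have hF0 : ∀ x, 0 ≤ F x := fun x => measureReal_nonneg
  have hF1 : ∀ x, F x ≤ 1 := fun x => measureReal_le_one
  have hFc : F = ProbabilityTheory.cdf μ := by
    ext x; rw [ProbabilityTheory.cdf_eq_real]
  have hbot : Tendsto F atBot (nhds 0) := by rw [hFc]; exact ProbabilityTheory.tendsto_cdf_atBot μ
  have htop : Tendsto F atTop (nhds 1) := by rw [hFc]; exact ProbabilityTheory.tendsto_cdf_atTop μ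
  have hrc : ∀ x, ContinuousWithinAt F (Ici x) x := by
    rw [hFc]; exact (ProbabilityTheory.cdf μ).right_continuous
  have hM0 : (0 : ℝ) < M := by exact_mod_cast hM
  set A : ℝ → Set ℝ := fun t => {x | F x < t} with hA
  set C : ℝ → Set ℝ := fun t => {x | ∀ y, t ≤ F y → x ≤ y} with hC
  have hAC : ∀ t, A t ⊆ C t := by
    intro t x hx y hy
    by_contra h
    push Not at h
    exact absurd (hy.trans (hFmono h.le)) (not_le.2 hx)
  have hAm : ∀ t, MeasurableSet (A t) := fun t => measurableSet_lt hFmono.measurable measurable_const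
  have hCm : ∀ t, MeasurableSet (C t) := by
    intro t
    have : IsLowerSet (C t) := fun x y hyx hx z hz => hyx.trans (hx z hz)
    exact this.ordConnected.measurableSet
  have hAmu : ∀ t, 0 ≤ t → μ.real (A t) ≤ t := by
    intro t ht
    by_cases hne : (A t)ᶜ.Nonempty
    · -- countable increasing union
      obtain ⟨b, hb⟩ := hne
      by_cases hAe : A t = ∅
      · rw [hAe]; simpa using ht
      have hAne : (A t).Nonempty := nonempty_iff_ne_empty.2 hAe
      have hbd : ∀ x ∈ A t, x ≤ b := fun x hx => hAC t hx b (not_lt.1 hb)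
      obtain ⟨u, hu, hut, hu2⟩ := exists_seq_tendsto_sSup hAne ⟨b, hbd⟩
      have hnotin : sSup (A t) ∉ A t := by
        intro hmem
        have hev : ∀ᶠ y in nhdsWithin (sSup (A t)) (Ici (sSup (A t))), F y < t :=
          (hrc (sSup (A t))).eventually (gt_mem_nhds hmem)
        have hev2 : ∀ᶠ y in nhdsWithin (sSup (A t)) (Ioi (sSup (A t))), F y < t :=
          hev.filter_mono (nhdsWithin_mono _ Ioi_subset_Ici_self)
        obtain ⟨y, hy1, hy2⟩ := (hev2.and self_mem_nhdsWithin).exists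
        exact absurd (le_csSup ⟨b, hbd⟩ (show y ∈ A t from hy1)) (not_le.2 hy2)
      have hun : A t = ⋃ n, Iic (u n) := by
        ext x
        simp only [mem_iUnion, mem_Iic]
        constructor
        · intro hx
          have hlt : x < sSup (A t) := lt_of_le_of_ne (le_csSup ⟨b, hbd⟩ hx)
            (fun h => hnotin (h ▸ hx))
          obtain ⟨n, hn⟩ := (hut.eventually (lt_mem_nhds hlt)).exists
          exact ⟨n, hn.le⟩
        · rintro ⟨n, hn⟩
          exact lt_of_le_of_lt (hFmono hn) (hu2 n)
      have hlim : Tendsto (fun n => μ (Iic (u n))) atTop (nhds (μ (A t))) := by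
        rw [hun]
        exact tendsto_measure_iUnion_atTop (fun i j hij => Iic_subset_Iic.2 (hu hij))
      have : μ (A t) ≤ ENNReal.ofReal t := by
        refine le_of_tendsto' hlim fun n => ?_
        rw [← ofReal_measureReal]
        exact ENNReal.ofReal_le_ofReal (le_of_lt (hu2 n))
      exact ENNReal.toReal_le_of_le_ofReal ht this
    · rw [not_nonempty_iff_eq_empty] at hne
      have hall : ∀ x, F x < t := fun x => by
        by_contra h
        exact (eq_empty_iff_forall_notMem.1 hne x) h
      exact measureReal_le_one.trans (le_of_tendsto' htop fun x => (hall x).le)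
  have hCmu : ∀ t x, t ≤ F x → t ≤ μ.real (C t) := by
    intro t x hx
    by_cases ht : t ≤ 0
    · exact ht.trans measureReal_nonneg
    push Not at ht
    set B : Set ℝ := {y | t ≤ F y} with hB
    obtain ⟨b, hb⟩ := (hbot.eventually (gt_mem_nhds ht)).exists
    have hbB : ∀ y ∈ B, b ≤ y := by
      intro y hy
      by_contra h
      push Not at h
      exact absurd (hy.trans (hFmono h.le)) (not_le.2 hb)
    have hBne : B.Nonempty := ⟨x, hx⟩
    have hq : t ≤ F (sInf B) := by
      by_contra h
      push Not at h
      have hev : ∀ᶠ y in nhdsWithin (sInf B) (Ici (sInf B)), F y < t :=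
        (hrc (sInf B)).eventually (gt_mem_nhds h)
      have hev2 : ∀ᶠ y in nhdsWithin (sInf B) (Ioi (sInf B)), F y < t :=
        hev.filter_mono (nhdsWithin_mono _ Ioi_subset_Ici_self)
      obtain ⟨y, hy1, hy2⟩ := (hev2.and self_mem_nhdsWithin).exists
      obtain ⟨z, hz, hzy⟩ := exists_lt_of_csInf_lt hBne (show sInf B < y from hy2)
      exact absurd (hz.trans (hFmono hzy.le)) (not_le.2 hy1)
    refine hq.trans (measureReal_mono ?_)
    intro y hy z hz
    exact (show y ≤ sInf B from hy).trans (csInf_le ⟨b, hbB⟩ hz)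
  refine ⟨fun m => if Even m then A ((m / 2 : ℕ) / M)
    else C ((m / 2 : ℕ) / M) ∩ A ((m / 2 + 1 : ℕ) / M), ?_, ?_, ?_, ?_⟩
  · apply monotone_nat_of_le_succ
    intro m
    rcases Nat.even_or_odd' m with ⟨j, rfl | rfl⟩
    · rw [if_pos (by simp), if_neg (by simp)]
      rw [show (2 * j + 1) / 2 = j by omega, show 2 * j / 2 = j by omega]
      refine subset_inter (hAC _) ?_
      intro x hx
      refine lt_of_lt_of_le (show F x < _ from hx) ?_
      gcongr
      simp
    · rw [if_neg (by simp), if_pos (by simp [Nat.even_add_one])]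
      rw [show (2 * j + 1) / 2 = j by omega, show (2 * j + 1 + 1) / 2 = j + 1 by omega]
      exact inter_subset_right
  · simp only [Even.zero, if_true]
    ext x
    simp [hA, hF0 x]
  · intro m
    dsimp only
    split_ifs
    · exact hAm _
    · exact (hCm _).inter (hAm _)
  · intro x
    set j := ⌊F x * M⌋₊ with hj
    have hj1 : (j : ℝ) / M ≤ F x := by
      rw [div_le_iff₀ hM0]; exact Nat.floor_le (mul_nonneg (hF0 x) hM0.le)
    have hj2 : F x < ((j + 1 : ℕ) : ℝ) / M := by
      rw [lt_div_iff₀ hM0]; push_cast; exact Nat.lt_floor_add_one _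
    have hjM : j ≤ M := by
      have : (j : ℝ) ≤ M := by
        rw [div_le_iff₀ hM0] at hj1
        nlinarith [hF1 x]
      exact_mod_cast this
    have hCx : C ((j : ℝ) / M) ⊆ Iic x := fun y hy => hy x hj1
    have hxA : Iic x ⊆ A (((j + 1 : ℕ) : ℝ) / M) := fun y hy =>
      lt_of_le_of_lt (hFmono hy) hj2
    refine ⟨2 * j + 1, 2 * j + 2, by omega, by omega, ?_, ?_, ?_⟩
    · dsimp only
      rw [if_neg (by simp), show (2 * j + 1) / 2 = j by omega]
      exact inter_subset_left.trans hCx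
    · dsimp only
      rw [if_pos (by simp [Nat.even_add]), show (2 * j + 2) / 2 = j + 1 by omega]
      exact hxA
    · dsimp only
      rw [if_pos (by simp [Nat.even_add]), if_neg (by simp), show (2 * j + 1) / 2 = j by omega,
        show (2 * j + 2) / 2 = j + 1 by omega, inter_eq_left.2 (hCx.trans hxA)]
      have h1 := hAmu (((j + 1 : ℕ) : ℝ) / M) (by positivity)
      have h2 := hCmu ((j : ℝ) / M) x hj1
      have : (((j + 1 : ℕ) : ℝ) / M) = (j : ℝ) / M + 1 / M := by push_cast; ring
      linarith

/-- The total chaining functional. -/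
noncomputable def chainQ {Ω : Type*} [MeasurableSpace Ω] (P : Measure Ω) (X : ℕ → Ω → ℝ)
    (H : ℕ → Set ℝ) (N L : ℕ) (ω : Ω) : ℝ :=
  ∑ l ∈ Finset.range (N + 1), ∑ j ∈ Finset.range (2 ^ (N - l)),
    ∑ l' ∈ Finset.range (L + 1), ∑ j' ∈ Finset.range (2 ^ (L - l')),
      (∑ i ∈ Finset.range (2 ^ l),
        dev P X (H (2 ^ l' * (j' + 1)) \ H (2 ^ l' * j')) (2 ^ l * j + i) ω) ^ 2

lemma dev_diff {Ω : Type*} [MeasurableSpace Ω] (P : Measure Ω) [IsProbabilityMeasure P]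
    (X : ℕ → Ω → ℝ) (hX : ∀ i, Measurable (X i)) (S T : Set ℝ) (hS : MeasurableSet S)
    (h : S ⊆ T) (i : ℕ) (ω : Ω) :
    dev P X (T \ S) i ω = dev P X T i ω - dev P X S i ω := by
  unfold dev
  rw [preimage_sdiff, preimage_sdiff, measureReal_sdiff (preimage_mono h) (hX 0 hS),
    indicator_sdiff (preimage_mono h)]
  simp only [Pi.sub_apply]
  ring

lemma chainQ_bound {Ω : Type*} [MeasurableSpace Ω] (P : Measure Ω) [IsProbabilityMeasure P]
    (X : ℕ → Ω → ℝ) (hX : ∀ i, Measurable (X i)) (H : ℕ → Set ℝ) (hH : Monotone H)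
    (hH0 : H 0 = ∅) (hHm : ∀ m, MeasurableSet (H m)) (N L n m : ℕ) (hn : n ≤ 2 ^ N)
    (hm : m ≤ 2 ^ L) (ω : Ω) :
    (∑ i ∈ Finset.range n, dev P X (H m) i ω) ^ 2 ≤ (N + 1) * (L + 1) * chainQ P X H N L ω := by
  have h1 := chaining N (fun n => ∑ i ∈ Finset.range n, dev P X (H m) i ω) n hn
  simp only [Finset.range_zero, Finset.sum_empty, sub_zero] at h1
  refine h1.trans ?_
  rw [mul_assoc]
  refine mul_le_mul_of_nonneg_left ?_ (by positivity)
  unfold chainQ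
  rw [Finset.mul_sum]
  refine Finset.sum_le_sum fun l _ => ?_
  rw [Finset.mul_sum]
  refine Finset.sum_le_sum fun j _ => ?_
  have e : ∀ S, (∑ i ∈ Finset.range (2 ^ l * (j + 1)), dev P X S i ω) -
      ∑ i ∈ Finset.range (2 ^ l * j), dev P X S i ω =
      ∑ i ∈ Finset.range (2 ^ l), dev P X S (2 ^ l * j + i) ω := by
    intro S
    rw [mul_add, mul_one, Finset.sum_range_add]; ring
  rw [e]
  have h2 := chaining L (fun m => ∑ i ∈ Finset.range (2 ^ l), dev P X (H m) (2 ^ l * j + i) ω) m hm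
  have e0 : ∑ i ∈ Finset.range (2 ^ l), dev P X (H 0) (2 ^ l * j + i) ω = 0 := by
    apply Finset.sum_eq_zero
    intro i _
    simp [dev, hH0]
  rw [e0, sub_zero] at h2
  refine h2.trans (le_of_eq ?_)
  congr 1
  refine Finset.sum_congr rfl fun l' _ => Finset.sum_congr rfl fun j' _ => ?_
  rw [← Finset.sum_sub_distrib]
  congr 1
  refine Finset.sum_congr rfl fun i _ => ?_
  rw [dev_diff P X hX _ _ (hHm _) (hH (by gcongr; simp))]

lemma chainQ_integrable {Ω : Type*} [MeasurableSpace Ω] (P : Measure Ω) [IsProbabilityMeasure P]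
    (X : ℕ → Ω → ℝ) (hX : ∀ i, Measurable (X i)) (H : ℕ → Set ℝ)
    (hHm : ∀ m, MeasurableSet (H m)) (N L : ℕ) : Integrable (chainQ P X H N L) P := by
  unfold chainQ
  exact integrable_finsetSum _ fun _ _ => integrable_finsetSum _ fun _ _ =>
    integrable_finsetSum _ fun _ _ => integrable_finsetSum _ fun _ _ =>
    integrable_block P X hX _ ((hHm _).diff (hHm _)) _ _

lemma chainQ_nonneg {Ω : Type*} [MeasurableSpace Ω] (P : Measure Ω)
    (X : ℕ → Ω → ℝ) (H : ℕ → Set ℝ) (N L : ℕ) (ω : Ω) : 0 ≤ chainQ P X H N L ω :=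
  Finset.sum_nonneg fun _ _ => Finset.sum_nonneg fun _ _ => Finset.sum_nonneg fun _ _ =>
    Finset.sum_nonneg fun _ _ => sq_nonneg _

lemma chainQ_integral {Ω : Type*} [MeasurableSpace Ω] (P : Measure Ω) [IsProbabilityMeasure P]
    (X : ℕ → Ω → ℝ) (hX : ∀ i, Measurable (X i))
    (hp : ∀ i S, MeasurableSet S → P.real (X i ⁻¹' S) = P.real (X 0 ⁻¹' S))
    (K ϑ : ℝ) (hK : 0 < K) (h0 : 0 < ϑ) (h1 : ϑ < 1)
    (hm : ∀ i d : ℕ, 1 ≤ d → ∀ S T : Set ℝ, MeasurableSet S → MeasurableSet T →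
      |P.real (X i ⁻¹' S ∩ X (i + d) ⁻¹' T) - P.real (X i ⁻¹' S) * P.real (X (i + d) ⁻¹' T)|
      ≤ K * (d : ℝ) ^ (-ϑ))
    (H : ℕ → Set ℝ) (hH : Monotone H) (hHm : ∀ m, MeasurableSet (H m)) (N L : ℕ) :
    ∫ ω, chainQ P X H N L ω ∂P ≤
      (N + 1) * (L + 1) * ((1 + 8 * K / (1 - ϑ)) * ((2 : ℝ) ^ N) ^ (2 - ϑ)) := by
  have hs : 0 < 1 - ϑ := by linarith
  set C := 1 + 8 * K / (1 - ϑ) with hC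
  have hC0 : 0 ≤ C := by positivity
  have hblk : ∀ l j l' j', Integrable (fun ω => (∑ i ∈ Finset.range (2 ^ l),
        dev P X (H (2 ^ l' * (j' + 1)) \ H (2 ^ l' * j')) (2 ^ l * j + i) ω) ^ 2) P :=
    fun l j l' j' => integrable_block P X hX _ ((hHm _).diff (hHm _)) _ _
  unfold chainQ
  rw [integral_finsetSum _ fun l _ => integrable_finsetSum _ fun j _ =>
    integrable_finsetSum _ fun l' _ => integrable_finsetSum _ fun j' _ => hblk l j l' j']
  have key : ∀ l ∈ Finset.range (N + 1), ∫ ω, (∑ j ∈ Finset.range (2 ^ (N - l)),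
    ∑ l' ∈ Finset.range (L + 1), ∑ j' ∈ Finset.range (2 ^ (L - l')),
      (∑ i ∈ Finset.range (2 ^ l),
        dev P X (H (2 ^ l' * (j' + 1)) \ H (2 ^ l' * j')) (2 ^ l * j + i) ω) ^ 2) ∂P ≤
      (L + 1) * (C * ((2 : ℝ) ^ N) ^ (2 - ϑ)) := by
    intro l hl
    have hlN : l ≤ N := by rw [Finset.mem_range] at hl; omega
    rw [integral_finsetSum _ fun j _ =>
      integrable_finsetSum _ fun l' _ => integrable_finsetSum _ fun j' _ => hblk l j l' j']
    have k2 : ∀ j ∈ Finset.range (2 ^ (N - l)), ∫ ω, (∑ l' ∈ Finset.range (L + 1),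
      ∑ j' ∈ Finset.range (2 ^ (L - l')), (∑ i ∈ Finset.range (2 ^ l),
        dev P X (H (2 ^ l' * (j' + 1)) \ H (2 ^ l' * j')) (2 ^ l * j + i) ω) ^ 2) ∂P ≤
        (L + 1) * (C * ((2 : ℝ) ^ l) ^ (2 - ϑ)) := by
      intro j _
      rw [integral_finsetSum _ fun l' _ => integrable_finsetSum _ fun j' _ => hblk l j l' j']
      have k3 : ∀ l' ∈ Finset.range (L + 1), ∫ ω, (∑ j' ∈ Finset.range (2 ^ (L - l')),
        (∑ i ∈ Finset.range (2 ^ l),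
          dev P X (H (2 ^ l' * (j' + 1)) \ H (2 ^ l' * j')) (2 ^ l * j + i) ω) ^ 2) ∂P ≤
          C * ((2 : ℝ) ^ l) ^ (2 - ϑ) := by
        intro l' _
        rw [integral_finsetSum _ fun j' _ => hblk l j l' j']
        have := second_moment P X hX hp K ϑ hK h0 h1 hm (Finset.range (2 ^ (L - l')))
          (fun j' => H (2 ^ l' * (j' + 1)) \ H (2 ^ l' * j')) (fun j' => (hHm _).diff (hHm _))
          ?_ (2 ^ l * j) (2 ^ l)
        · push_cast at this
          exact this
        · have hmono : Monotone fun j => H (2 ^ l' * j) := fun a b hab => hH (by gcongr)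
          have aux : ∀ p q, p < q → Disjoint (H (2 ^ l' * (p + 1)) \ H (2 ^ l' * p))
              (H (2 ^ l' * (q + 1)) \ H (2 ^ l' * q)) := by
            intro p q hpq
            rw [Set.disjoint_left]
            intro x hx hx2
            exact hx2.2 (hmono (show p + 1 ≤ q from hpq) hx.1)
          intro p q hpq
          rcases lt_or_gt_of_ne hpq with h | h
          · exact aux p q h
          · exact (aux q p h).symm
      refine (Finset.sum_le_sum k3).trans (le_of_eq ?_)
      simp
    refine (Finset.sum_le_sum k2).trans ?_
    rw [Finset.sum_const, Finset.card_range, nsmul_eq_mul]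
    have p1 : (0 : ℝ) < 2 ^ l := by positivity
    have p2 : (0 : ℝ) < 2 ^ N := by positivity
    have k4 : ((2 ^ (N - l) : ℕ) : ℝ) * ((2 : ℝ) ^ l) ^ (2 - ϑ) ≤ ((2 : ℝ) ^ N) ^ (2 - ϑ) := by
      rw [show 2 - ϑ = 1 + (1 - ϑ) by ring, Real.rpow_add p1, Real.rpow_add p2, Real.rpow_one,
        Real.rpow_one, ← mul_assoc]
      push_cast
      rw [← pow_add, Nat.sub_add_cancel hlN]
      gcongr
      norm_num
    calc _ = (L + 1) * (C * (((2 ^ (N - l) : ℕ) : ℝ) * ((2 : ℝ) ^ l) ^ (2 - ϑ))) := by ring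
      _ ≤ _ := by gcongr
  refine (Finset.sum_le_sum key).trans (le_of_eq ?_)
  simp; ring

lemma ae_tendsto_zero_of_summable {Ω : Type*} [MeasurableSpace Ω] (P : Measure Ω)
    (f : ℕ → Ω → ℝ) (b : ℕ → ℝ) (hf : ∀ n ω, 0 ≤ f n ω) (hi : ∀ n, Integrable (f n) P)
    (hb : ∀ n, ∫ ω, f n ω ∂P ≤ b n) (hs : Summable b) :
    ∀ᵐ ω ∂P, Tendsto (fun n => f n ω) atTop (nhds 0) := by
  have hm : ∀ n, AEMeasurable (fun ω => ENNReal.ofReal (f n ω)) P :=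
    fun n => (hi n).aemeasurable.ennreal_ofReal
  have h1 : ∫⁻ ω, ∑' n, ENNReal.ofReal (f n ω) ∂P ≠ ⊤ := by
    rw [lintegral_tsum hm]
    have : ∀ n, ∫⁻ ω, ENNReal.ofReal (f n ω) ∂P ≤ ENNReal.ofReal (b n) := by
      intro n
      rw [← ofReal_integral_eq_lintegral_ofReal (hi n) (Eventually.of_forall (hf n))]
      exact ENNReal.ofReal_le_ofReal (hb n)
    refine ne_top_of_le_ne_top ?_ (ENNReal.tsum_le_tsum this)
    exact hs.tsum_ofReal_ne_top
  have h2 := ae_lt_top' (AEMeasurable.tsum hm) h1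
  filter_upwards [h2] with ω hω
  have := ENNReal.tendsto_atTop_zero_of_tsum_ne_top hω.ne
  have h3 := (ENNReal.tendsto_toReal ENNReal.zero_ne_top).comp this
  simpa [Function.comp_def, ENNReal.toReal_ofReal (hf _ _)] using h3

lemma empDF_sub {Ω : Type*} [MeasurableSpace Ω] (P : Measure Ω)
    (X : ℕ → Ω → ℝ) (n : ℕ) (hn : 1 ≤ n) (ω : Ω) (x : ℝ) :
    (n : ℝ) * (empDF X n ω x - distFun P (X 0) x) =
      ∑ i ∈ Finset.range n, dev P X (Iic x) i ω := by
  have hn' : (n : ℝ) ≠ 0 := by positivity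
  unfold empDF distFun dev
  rw [Finset.sum_sub_distrib, Finset.sum_const, Finset.card_range, nsmul_eq_mul, mul_sub,
    mul_div_cancel₀ _ hn']
  congr 1
  rw [Finset.card_filter]
  push_cast
  refine Finset.sum_congr rfl fun i _ => ?_
  simp [indicator]

/-- Sandwich between elements of the chain. -/
lemma dev_sandwich {Ω : Type*} [MeasurableSpace Ω] (P : Measure Ω) [IsProbabilityMeasure P]
    (X : ℕ → Ω → ℝ) (S T U : Set ℝ) (h1 : S ⊆ T) (h2 : T ⊆ U) (δ R : ℝ)
    (hδ : P.real (X 0 ⁻¹' U) - P.real (X 0 ⁻¹' S) ≤ δ) (n : ℕ) (ω : Ω)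
    (hS : |∑ i ∈ Finset.range n, dev P X S i ω| ≤ R)
    (hU : |∑ i ∈ Finset.range n, dev P X U i ω| ≤ R) :
    |∑ i ∈ Finset.range n, dev P X T i ω| ≤ R + n * δ := by
  have m1 : P.real (X 0 ⁻¹' S) ≤ P.real (X 0 ⁻¹' T) := measureReal_mono (preimage_mono h1)
  have m2 : P.real (X 0 ⁻¹' T) ≤ P.real (X 0 ⁻¹' U) := measureReal_mono (preimage_mono h2)
  have up : ∑ i ∈ Finset.range n, dev P X T i ω ≤ ∑ i ∈ Finset.range n, (dev P X U i ω + δ) := by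
    refine Finset.sum_le_sum fun i _ => ?_
    have : (X i ⁻¹' T).indicator (fun _ => (1 : ℝ)) ω ≤ (X i ⁻¹' U).indicator (fun _ => (1 : ℝ)) ω :=
      indicator_le_indicator_of_subset (preimage_mono h2) (fun _ => zero_le_one) ω
    unfold dev; linarith
  have lo : ∑ i ∈ Finset.range n, (dev P X S i ω - δ) ≤ ∑ i ∈ Finset.range n, dev P X T i ω := by
    refine Finset.sum_le_sum fun i _ => ?_
    have : (X i ⁻¹' S).indicator (fun _ => (1 : ℝ)) ω ≤ (X i ⁻¹' T).indicator (fun _ => (1 : ℝ)) ω :=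
      indicator_le_indicator_of_subset (preimage_mono h1) (fun _ => zero_le_one) ω
    unfold dev; linarith
  rw [Finset.sum_add_distrib, Finset.sum_const, Finset.card_range, nsmul_eq_mul] at up
  rw [Finset.sum_sub_distrib, Finset.sum_const, Finset.card_range, nsmul_eq_mul] at lo
  rw [abs_le] at hS hU ⊢
  constructor <;> linarith [hS.1, hU.2]

/-- **Marcinkiewicz–Zygmund SLLN for empirical distribution functions of α-mixing data.**
If `(X i)` is identically distributed and α-mixing with `α(n) ≤ K n^{-ϑ}` for some `K > 0`
and `ϑ > 2r`, where `r ∈ [0,1/2)`, then `n^r · sup_x |F̂_n(x) - F(x)| → 0` almost surely. -/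
theorem mz_slln_empirical_alpha_mixing
    {Ω : Type*} [MeasurableSpace Ω] (P : Measure Ω) [IsProbabilityMeasure P]
    (X : ℕ → Ω → ℝ) (hmeas : ∀ i, Measurable (X i))
    (hident : ∀ i, Measure.map (X i) P = Measure.map (X 0) P)
    (hmix : Tendsto (alphaCoef P X) atTop (nhds 0))
    (r K ϑ : ℝ) (hr0 : 0 ≤ r) (hr : r < 1 / 2) (hK : 0 < K) (hϑ : 2 * r < ϑ)
    (hα : ∀ n : ℕ, 1 ≤ n → alphaCoef P X n ≤ K * (n : ℝ) ^ (-ϑ)) :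
    ∀ᵐ ω ∂P, Tendsto
      (fun n : ℕ => (n : ℝ) ^ r * ⨆ x : ℝ, |empDF X n ω x - distFun P (X 0) x|)
      atTop (nhds 0) := by
  have hp : ∀ i S, MeasurableSet S → P.real (X i ⁻¹' S) = P.real (X 0 ⁻¹' S) := by
    intro i S hS
    rw [← map_measureReal_apply (hmeas i) hS, ← map_measureReal_apply (hmeas 0) hS, hident i]
  -- reduce to an exponent below one
  obtain ⟨θ, hθ1, hθ2, hθ3⟩ : ∃ θ, 2 * r < θ ∧ θ < 1 ∧ θ ≤ ϑ := by
    refine ⟨min ϑ (r + 1 / 2), lt_min hϑ (by linarith), ?_, min_le_left _ _⟩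
    exact lt_of_le_of_lt (min_le_right _ _) (by linarith)
  have hθ0 : 0 < θ := by linarith
  have hm : ∀ i d : ℕ, 1 ≤ d → ∀ S T : Set ℝ, MeasurableSet S → MeasurableSet T →
      |P.real (X i ⁻¹' S ∩ X (i + d) ⁻¹' T) - P.real (X i ⁻¹' S) * P.real (X (i + d) ⁻¹' T)|
      ≤ K * (d : ℝ) ^ (-θ) := by
    intro i d hd S T hS hT
    refine (alpha_bound P X i d S T hS hT).trans ((hα d hd).trans ?_)
    refine mul_le_mul_of_nonneg_left ?_ hK.le
    exact Real.rpow_le_rpow_of_exponent_le (by exact_mod_cast hd) (by linarith)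
  have hprob : IsProbabilityMeasure (Measure.map (X 0) P) :=
    Measure.isProbabilityMeasure_map (hmeas 0).aemeasurable
  choose H hHmono hH0 hHm hHx using fun N : ℕ =>
    exists_chain (Measure.map (X 0) P) (2 ^ N) Nat.one_le_two_pow
  set C : ℝ := 1 + 8 * K / (1 - θ) with hC
  set Z : ℕ → Ω → ℝ := fun N ω =>
    ((N : ℝ) + 1) * ((N + 2 : ℕ) + 1) * chainQ P X (H N) N (N + 2) ω * (((2 : ℝ) ^ N) ^ (1 - r))⁻¹ ^ 2
    with hZ
  have hZ0 : ∀ N ω, 0 ≤ Z N ω := fun N ω => by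
    have := chainQ_nonneg P X (H N) N (N + 2) ω
    positivity
  set ρ : ℝ := (2 : ℝ) ^ (2 * r - θ) with hρ
  have hρ0 : 0 < ρ := by positivity
  have hρ1 : ρ < 1 := Real.rpow_lt_one_of_one_lt_of_neg (by norm_num) (by linarith)
  have hC0 : 0 ≤ C := by
    have : 0 < 1 - θ := by linarith
    positivity
  have hZlim : ∀ᵐ ω ∂P, Tendsto (fun N => Z N ω) atTop (nhds 0) := by
    refine ae_tendsto_zero_of_summable P Z
      (fun N => C * (ρ ^ 3)⁻¹ * (((N + 3 : ℕ) : ℝ) ^ 4 * ρ ^ (N + 3))) hZ0 ?_ ?_ ?_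
    · intro N
      exact ((chainQ_integrable P X hmeas (H N) (hHm N) N (N + 2)).const_mul _).mul_const _
    · intro N
      rw [hZ]
      simp only
      rw [integral_mul_const, integral_const_mul]
      have h1 := chainQ_integral P X hmeas hp K θ hK hθ0 hθ2 hm (H N) (hHmono N) (hHm N) N (N + 2)
      rw [← hC] at h1
      have p2 : (0 : ℝ) < 2 ^ N := by positivity
      have e1 : ((2 : ℝ) ^ N) ^ (2 - θ) * (((2 : ℝ) ^ N) ^ (1 - r))⁻¹ ^ 2 = ρ ^ N := by
        rw [← Real.rpow_neg p2.le, ← Real.rpow_natCast (((2 : ℝ) ^ N) ^ (-(1 - r))) 2,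
          ← Real.rpow_mul p2.le, ← Real.rpow_add p2, ← Real.rpow_natCast, ← Real.rpow_mul (by norm_num),
          ← Real.rpow_natCast ρ, hρ, ← Real.rpow_mul (by norm_num)]
        congr 1
        push_cast
        ring
      calc _ ≤ ((N : ℝ) + 1) * ((N + 2 : ℕ) + 1) * (((N : ℝ) + 1) * ((N + 2 : ℕ) + 1) *
              (C * ((2 : ℝ) ^ N) ^ (2 - θ))) * (((2 : ℝ) ^ N) ^ (1 - r))⁻¹ ^ 2 := by gcongr
        _ = C * ((((N : ℝ) + 1) * ((N + 2 : ℕ) + 1)) ^ 2 * ρ ^ N) := by rw [← e1]; ring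
        _ ≤ C * ((((N : ℝ) + 3) * ((N : ℝ) + 3)) ^ 2 * ρ ^ N) := by
          push_cast
          have hN0 : (0 : ℝ) ≤ N := Nat.cast_nonneg N
          have a1 : (N : ℝ) + 1 ≤ N + 3 := by linarith
          have a2 : (N : ℝ) + 2 + 1 ≤ N + 3 := by linarith
          gcongr
        _ = _ := by
          push_cast
          rw [pow_add ρ N 3]
          field_simp
    · refine Summable.mul_left _ ?_
      have := summable_pow_mul_geometric_of_norm_lt_one (R := ℝ) 4 (r := ρ)
        (by rw [Real.norm_of_nonneg hρ0.le]; exact hρ1)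
      exact (summable_nat_add_iff 3).2 this
  filter_upwards [hZlim] with ω hω
  -- the pathwise bound
  have hr1 : 0 < 1 - r := by linarith
  set W : ℕ → ℝ := fun N => 2 * (Real.sqrt (Z N ω) + (((2 : ℝ) ^ (1 - r))⁻¹) ^ N) with hW
  have hWlim : Tendsto W atTop (nhds 0) := by
    have h1 : Tendsto (fun N => Real.sqrt (Z N ω)) atTop (nhds 0) := by
      simpa [Function.comp_def] using (Real.continuous_sqrt.tendsto 0).comp hω
    have h2 : Tendsto (fun N : ℕ => (((2 : ℝ) ^ (1 - r))⁻¹) ^ N) atTop (nhds 0) :=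
      tendsto_pow_atTop_nhds_zero_of_lt_one (by positivity)
        (inv_lt_one_of_one_lt₀ (Real.one_lt_rpow (by norm_num) hr1))
    simpa [hW] using (h1.add h2).const_mul 2
  have hlog : Tendsto (fun n : ℕ => Nat.log 2 n + 1) atTop atTop :=
    (tendsto_add_atTop_nat 1).comp <| tendsto_atTop.2 fun b => by
      filter_upwards [eventually_ge_atTop (2 ^ b)] with n hn
      exact Nat.le_log_of_pow_le (by norm_num) hn
  refine squeeze_zero' ?_ ?_ (hWlim.comp hlog)
  · exact Eventually.of_forall fun n => mul_nonneg (by positivity)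
      (Real.iSup_nonneg fun x => abs_nonneg _)
  · filter_upwards [eventually_ge_atTop 1] with n hn
    simp only [Function.comp_apply]
    set N := Nat.log 2 n + 1 with hN
    have hn2 : n ≤ 2 ^ N := (Nat.lt_pow_succ_log_self (by norm_num) n).le
    have hn1 : 2 ^ N ≤ 2 * n := by
      rw [hN, pow_succ]
      have := Nat.pow_log_le_self 2 (show n ≠ 0 by omega)
      omega
    have hn0 : (0 : ℝ) < n := by exact_mod_cast hn
    set R := Real.sqrt (((N : ℝ) + 1) * ((N + 2 : ℕ) + 1) * chainQ P X (H N) N (N + 2) ω) with hR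
    have hbound : ∀ m, m ≤ 2 ^ (N + 2) → |∑ i ∈ Finset.range n, dev P X (H N m) i ω| ≤ R := by
      intro m hmle
      exact Real.abs_le_sqrt
        (chainQ_bound P X hmeas (H N) (hHmono N) (hH0 N) (hHm N) N (N + 2) n m hn2 hmle ω)
    have hx : ∀ x, |empDF X n ω x - distFun P (X 0) x| ≤ (R + 1) / n := by
      intro x
      obtain ⟨m, m', hm1, hm2, hs1, hs2, hmu⟩ := hHx N x
      have hpow : 2 * 2 ^ N + 2 ≤ 2 ^ (N + 2) := by
        have : 1 ≤ 2 ^ N := Nat.one_le_two_pow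
        have e4 : 2 ^ (N + 2) = 4 * 2 ^ N := by rw [pow_succ, pow_succ]; ring
        omega
      rw [map_measureReal_apply (hmeas 0) (hHm N _), map_measureReal_apply (hmeas 0) (hHm N _)] at hmu
      have h3 := dev_sandwich P X _ _ _ hs1 hs2 _ R hmu n ω (hbound m (hm1.trans hpow))
        (hbound m' (hm2.trans hpow))
      rw [← empDF_sub P X n hn, abs_mul, abs_of_pos hn0] at h3
      rw [le_div_iff₀ hn0, mul_comm]
      refine h3.trans ?_
      have : (n : ℝ) * (1 / (2 ^ N : ℕ)) ≤ 1 := by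
        rw [mul_one_div, div_le_one (by positivity)]
        exact_mod_cast hn2
      linarith
    have hsup : ⨆ x : ℝ, |empDF X n ω x - distFun P (X 0) x| ≤ (R + 1) / n := ciSup_le hx
    have p2 : (0 : ℝ) < 2 ^ N := by positivity
    have hR0 : 0 ≤ R := Real.sqrt_nonneg _
    have eW : W N = 2 * ((R + 1) * (((2 : ℝ) ^ N) ^ (1 - r))⁻¹) := by
      have e1 : Real.sqrt (Z N ω) = R * (((2 : ℝ) ^ N) ^ (1 - r))⁻¹ := by
        rw [hZ]
        simp only
        rw [Real.sqrt_mul' _ (by positivity), Real.sqrt_sq (by positivity)]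
      have e2 : (((2 : ℝ) ^ (1 - r))⁻¹) ^ N = (((2 : ℝ) ^ N) ^ (1 - r))⁻¹ := by
        rw [inv_pow, ← Real.rpow_natCast, ← Real.rpow_natCast, ← Real.rpow_mul (by norm_num),
          ← Real.rpow_mul (by norm_num), mul_comm]
      rw [hW]
      simp only
      rw [e1, e2]; ring
    rw [eW]
    have hn1' : (2 : ℝ) ^ N ≤ 2 * n := by exact_mod_cast hn1
    have h5 : ((2 : ℝ) ^ N) ^ (1 - r) ≤ 2 * (n : ℝ) ^ (1 - r) := by
      calc ((2 : ℝ) ^ N) ^ (1 - r) ≤ (2 * (n : ℝ)) ^ (1 - r) :=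
            Real.rpow_le_rpow p2.le hn1' hr1.le
        _ = (2 : ℝ) ^ (1 - r) * (n : ℝ) ^ (1 - r) := Real.mul_rpow (by norm_num) hn0.le
        _ ≤ (2 : ℝ) ^ (1 : ℝ) * (n : ℝ) ^ (1 - r) := by
            gcongr
            · norm_num
            · linarith
        _ = _ := by rw [Real.rpow_one]
    have h6 : (n : ℝ) ^ r / n = ((n : ℝ) ^ (1 - r))⁻¹ := by
      rw [← Real.rpow_neg hn0.le, neg_sub, Real.rpow_sub_one hn0.ne']
    have q1 : (0 : ℝ) < ((2 : ℝ) ^ N) ^ (1 - r) := by positivity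
    have q2 : (0 : ℝ) < (n : ℝ) ^ (1 - r) := by positivity
    have h7 : ((n : ℝ) ^ (1 - r))⁻¹ ≤ 2 * (((2 : ℝ) ^ N) ^ (1 - r))⁻¹ := by
      rw [← div_eq_mul_inv, inv_eq_one_div, div_le_div_iff₀ q2 q1]
      linarith
    calc _ ≤ (n : ℝ) ^ r * ((R + 1) / n) := by gcongr
      _ = (R + 1) * ((n : ℝ) ^ r / n) := by ring
      _ ≤ (R + 1) * (2 * (((2 : ℝ) ^ N) ^ (1 - r))⁻¹) := by rw [h6]; gcongr
      _ = _ := by ring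
end

section
/- Let (X_i)_{i∈ℕ} be a sequence of identically distributed real random variables with common distribution function F, let φ be a weight function with ∫_{−∞}^{∞} φ dF < ∞, and suppose (X_i) is α-mixing with mixing coefficients (α(n))_{n≥1}; extend α to [0,∞) by α(t) := α(⌊t⌋) for t ≥ 1 and α(t) := 1/4 for t ∈ [0,1). Let G be the distribution function of φ(X_1) and Ḡ := 1 − G. If ∫_0^1 log(1 + α^→(s/2)) · Ḡ^→(s) ds < ∞, then sup_{x∈ℝ} |F̂_n(x) − F(x)|·φ(x) → 0 ℙ-almost surely as n → ∞. -/
open MeasureTheory Filter Set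

/-- A weight function: continuous, bounded away from 0, and u-shaped. -/
def IsWeightFun (φ : ℝ → ℝ) : Prop :=
  Continuous φ ∧ (∃ ε > 0, ∀ x, ε ≤ φ x) ∧
    ∃ x₀ : ℝ, (∀ x y, x ≤ y → y ≤ x₀ → φ y ≤ φ x) ∧ ∀ x y, x₀ ≤ x → x ≤ y → φ x ≤ φ y

/-- Càdlàg extension of mixing coefficients, equal to `1/4` on `[0,1)`
and to `α ⌊t⌋` for `t ≥ 1`. -/
noncomputable def alphaExt (α : ℕ → ℝ) (t : ℝ) : ℝ :=
  if t < 1 then 1 / 4 else α ⌊t⌋₊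

/-- Right-continuous inverse of a nonincreasing function on `[0,∞)`, with `sup ∅ = 0`. -/
noncomputable def rcInv (h : ℝ → ℝ) (y : ℝ) : ℝ :=
  sSup { x : ℝ | 0 ≤ x ∧ y < h x }

lemma geo_sum_low (c q : ℝ) (hc : 1 < c) (hq : 0 ≤ q) (K : ℕ) :
    ∑ k ∈ Finset.range K, (if c ^ k ≤ q then c ^ k else 0) ≤ min (c ^ K) (c * q) / (c - 1) := by
  have h1 : 0 < c - 1 := by linarith
  have h0 : 0 < c := by linarith
  induction K with
  | zero =>
    simp only [Finset.range_zero, Finset.sum_empty]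
    have : 0 ≤ min (c ^ 0) (c * q) := le_min (by positivity) (by positivity)
    positivity
  | succ K ih =>
    rw [Finset.sum_range_succ]
    rw [le_div_iff₀ h1] at ih ⊢
    have hK : 0 < c ^ K := by positivity
    have hm1 := min_le_left (c ^ K) (c * q)
    have hm2 := min_le_right (c ^ K) (c * q)
    split_ifs with h
    · have : min (c ^ (K+1)) (c * q) = c ^ (K+1) := min_eq_left (by rw [pow_succ]; nlinarith)
      rw [this, pow_succ]
      nlinarith
    · rw [add_zero]
      refine ih.trans (min_le_min ?_ le_rfl)
      rw [pow_succ]; nlinarith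

lemma geo_sum_high (c R : ℝ) (hc : 1 < c) (hR : 0 ≤ R) (K : ℕ) :
    ∑ k ∈ Finset.range K, (if R < c ^ k then R / c ^ k else 0) ≤ c / (c - 1) := by
  have h1 : 0 < c - 1 := by linarith
  have h0 : 0 < c := by linarith
  have key : ∑ k ∈ Finset.range K, (if R < c ^ k then R / c ^ k else 0)
      + min 1 (R / c ^ K) * (c / (c - 1)) ≤ c / (c - 1) := by
    induction K with
    | zero =>
      simp only [Finset.range_zero, Finset.sum_empty]
      have : 0 < c / (c - 1) := by positivity
      nlinarith [min_le_left 1 (R / c ^ 0)]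
    | succ K ih =>
      rw [Finset.sum_range_succ]
      have hK : 0 < c ^ K := by positivity
      have hC : 0 < c / (c - 1) := by positivity
      split_ifs with h
      · have h2 : min 1 (R / c ^ K) = R / c ^ K := min_eq_right (by rw [div_le_one hK]; exact h.le)
        rw [h2] at ih
        have h3 := min_le_right 1 (R / c ^ (K+1))
        have h4 : R / c ^ (K+1) * (c / (c-1)) + R / c ^ K = R / c ^ K * (c / (c - 1)) := by
          rw [pow_succ]; field_simp; ring
        nlinarith
      · have h2 : min 1 (R / c ^ K) = 1 := min_eq_left (by rw [one_le_div hK]; exact not_lt.1 h)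
        rw [h2] at ih
        nlinarith [min_le_left 1 (R / c ^ (K+1))]
  have : 0 ≤ min 1 (R / c ^ K) * (c / (c - 1)) :=
    mul_nonneg (le_min (by norm_num) (by positivity)) (by positivity)
  linarith

lemma geo_sum_mid (c q B : ℝ) (hc : 1 < c) (hq : 0 < q) (hB : q ≤ B) (K : ℕ) :
    ∑ k ∈ Finset.range K, (if q < c ^ k ∧ c ^ k ≤ B then (1:ℝ) else 0)
      ≤ (Real.log B - Real.log q + Real.log c) / Real.log c := by
  have hl : 0 < Real.log c := Real.log_pos hc
  have hqB : Real.log q ≤ Real.log B := Real.log_le_log hq hB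
  have key : (∑ k ∈ Finset.range K, (if q < c ^ k ∧ c ^ k ≤ B then (1:ℝ) else 0)) * Real.log c
      ≤ max (Real.log q) (min (K * Real.log c) (Real.log B + Real.log c)) - Real.log q := by
    induction K with
    | zero => simp
    | succ K ih =>
      rw [Finset.sum_range_succ, add_mul]
      push_cast
      split_ifs with h
      · have e1 : Real.log q < K * Real.log c := by
          rw [← Real.log_pow]; exact Real.log_lt_log hq h.1
        have e2 : K * Real.log c ≤ Real.log B := by
          rw [← Real.log_pow]; exact Real.log_le_log (by positivity) h.2
        rw [min_eq_left (by linarith), max_eq_right e1.le] at ih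
        have : (K + 1) * Real.log c ≤ max (Real.log q) (min ((K + 1) * Real.log c) (Real.log B + Real.log c)) :=
          le_max_of_le_right (le_min le_rfl (by linarith))
        linarith
      · have : max (Real.log q) (min (K * Real.log c) (Real.log B + Real.log c)) ≤ max (Real.log q) (min ((K + 1) * Real.log c) (Real.log B + Real.log c)) := by
          gcongr; linarith
        linarith
  rw [le_div_iff₀ hl]
  refine key.trans ?_
  have : max (Real.log q) (min (K * Real.log c) (Real.log B + Real.log c)) ≤ Real.log B + Real.log c :=
    max_le (by linarith) (min_le_right _ _)
  linarith

/-- the basic integrand -/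
noncomputable def bb (q A N : ℝ) : ℝ := if N ≤ A * q then min q N else A * q ^ 2 / N

lemma bb_nonneg {q A N : ℝ} (hq : 0 ≤ q) (hA : 0 ≤ A) (hN : 0 ≤ N) : 0 ≤ bb q A N := by
  unfold bb; split_ifs
  · exact le_min hq hN
  · positivity

lemma bb_sum (c : ℝ) (hc : 1 < c) : ∃ C : ℝ, 0 ≤ C ∧ ∀ q A : ℝ, 0 < q → 1 ≤ A → ∀ K : ℕ,
    ∑ k ∈ Finset.range K, bb q A (⌊c ^ k⌋₊ : ℝ) ≤ C * (q * (1 + Real.log A)) := by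
  have hl : 0 < Real.log c := Real.log_pos hc
  have h1 : 0 < c - 1 := by linarith
  have hl2 : 0 < Real.log 2 := Real.log_pos (by norm_num)
  refine ⟨c / (c - 1) + (1 + Real.log 2 / Real.log c + 1 / Real.log c) + 2 * (c / (c - 1)), by positivity, ?_⟩
  intro q A hq hA K
  have hLA : 0 ≤ Real.log A := Real.log_nonneg hA
  have s1 := geo_sum_low c q hc hq.le K
  have s2 := geo_sum_mid c q (2 * (A * q)) hc hq (by nlinarith) K
  have s3 := geo_sum_high c (A * q) hc (by positivity) K
  have pt : ∀ k ∈ Finset.range K, bb q A (⌊c ^ k⌋₊ : ℝ) ≤ (if c ^ k ≤ q then c ^ k else 0)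
      + q * (if q < c ^ k ∧ c ^ k ≤ 2 * (A * q) then (1:ℝ) else 0)
      + 2 * q * (if A * q < c ^ k then A * q / c ^ k else 0) := by
    intro k _
    have hx1 : 1 ≤ c ^ k := one_le_pow₀ hc.le
    generalize c ^ k = x at *
    have hN1 : (⌊x⌋₊ : ℝ) ≤ x := Nat.floor_le (by linarith)
    have hN2 : x < (⌊x⌋₊ : ℝ) + 1 := Nat.lt_floor_add_one x
    have hN3 : (1:ℝ) ≤ (⌊x⌋₊ : ℝ) := by
      have : 1 ≤ ⌊x⌋₊ := Nat.le_floor (by simpa using hx1)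
      exact_mod_cast this
    generalize (⌊x⌋₊ : ℝ) = N at *
    have t3 : 0 ≤ 2 * q * (if A * q < x then A * q / x else 0) := by
      split_ifs
      · positivity
      · simp
    have t1 : 0 ≤ (if x ≤ q then x else 0) := by split_ifs <;> linarith
    have t2 : 0 ≤ q * (if q < x ∧ x ≤ 2 * (A * q) then (1:ℝ) else 0) := by split_ifs <;> linarith
    unfold bb
    by_cases h : N ≤ A * q
    · rw [if_pos h]
      by_cases hxq : x ≤ q
      · rw [if_pos hxq] at t1 ⊢
        have := min_le_right q N
        linarith
      · push Not at hxq
        have hcnd : q < x ∧ x ≤ 2 * (A * q) := ⟨hxq, by linarith⟩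
        rw [if_pos hcnd]
        have := min_le_left q N
        linarith
    · rw [if_neg h]
      push Not at h
      rw [if_pos (lt_of_lt_of_le h hN1)] at t3 ⊢
      have : A * q ^ 2 / N ≤ 2 * q * (A * q / x) := by
        have e : 2 * q * (A * q / x) = A * q ^ 2 / (x / 2) := by field_simp
        rw [e]
        apply div_le_div_of_nonneg_left (by positivity) (by linarith) (by linarith)
      linarith
  refine (Finset.sum_le_sum pt).trans ?_
  rw [Finset.sum_add_distrib, Finset.sum_add_distrib, ← Finset.mul_sum, ← Finset.mul_sum]
  have s1' : ∑ k ∈ Finset.range K, (if c ^ k ≤ q then c ^ k else 0) ≤ c / (c - 1) * q := by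
    refine s1.trans ?_
    rw [div_mul_eq_mul_div]
    gcongr
    exact min_le_right _ _
  have e2 : (Real.log (2 * (A * q)) - Real.log q + Real.log c) / Real.log c = 
     1 + Real.log 2 / Real.log c + (1 / Real.log c) * Real.log A := by
    rw [Real.log_mul (by norm_num) (by positivity), Real.log_mul (by positivity) (by positivity)]
    field_simp; ring
  rw [e2] at s2
  have m2 := mul_le_mul_of_nonneg_left s2 hq.le
  have m3 := mul_le_mul_of_nonneg_left s3 (by positivity : (0:ℝ) ≤ 2 * q)
  have p1 : 0 ≤ q * Real.log A := by positivity
  have c1 : 0 ≤ c / (c - 1) * (q * Real.log A) := by positivity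
  have c2 : 0 ≤ (1 / Real.log c) * q := by positivity
  have c3 : 0 ≤ (Real.log 2 / Real.log c) * (q * Real.log A) := by positivity
  nlinarith

lemma choose_pM (al : ℕ → ℝ) (hal : Tendsto al atTop (nhds 0)) (H : ℝ → ℝ) (ε : ℝ) (hε : 0 < ε)
    (hH : ∀ t, 0 ≤ t → t < ε → H t = 1) (N : ℕ) (hN : 1 ≤ N) :
    ∃ (p : ℕ) (M : ℝ), 1 ≤ p ∧ 0 < M ∧ M ≤ N ∧ (N : ℝ) ≤ p * M ∧ p * M ≤ 2 * N ∧ al p ≤ H (N / p) ∧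
      (M = N ∨ (2 ≤ p ∧ H M < al (p - 1))) := by
  have hN' : (1:ℝ) ≤ N := by exact_mod_cast hN
  have hex : ∃ p : ℕ, 1 ≤ p ∧ al p ≤ H (N / p) := by
    have h1 : ∀ᶠ p : ℕ in atTop, al p < 1 := hal.eventually_lt_const (by norm_num)
    have h2 : Tendsto (fun p : ℕ => (N : ℝ) / p) atTop (nhds 0) := tendsto_const_div_atTop_nhds_zero_nat _
    have h3 := h2.eventually_lt_const hε
    obtain ⟨p, hp1, hp2, hp3⟩ := (h1.and (h3.and (eventually_ge_atTop 1))).exists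
    exact ⟨p, hp3, by rw [hH _ (by positivity) hp2]; exact hp1.le⟩
  classical
  obtain ⟨hp1, hp2⟩ := Nat.find_spec hex
  have hmin : ∀ m, m < Nat.find hex → ¬ (1 ≤ m ∧ al m ≤ H (N / m)) := fun m hm => Nat.find_min hex hm
  generalize Nat.find hex = p at *
  rcases Nat.lt_or_ge p 2 with h | h
  · have : p = 1 := by omega
    subst this
    exact ⟨1, N, le_rfl, by linarith, le_rfl, by simp, by push_cast; linarith, hp2, Or.inl rfl⟩
  · have hc : ((p - 1 : ℕ) : ℝ) = (p : ℝ) - 1 := by push_cast [hp1]; ring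
    have hp : (2:ℝ) ≤ p := by exact_mod_cast h
    have hpos : (0:ℝ) < (p:ℝ) - 1 := by linarith
    refine ⟨p, N / ((p - 1 : ℕ) : ℝ), hp1, ?_, ?_, ?_, ?_, hp2, Or.inr ⟨h, ?_⟩⟩
    · rw [hc]; positivity
    · rw [hc]; rw [div_le_iff₀ hpos]; nlinarith
    · rw [hc, mul_div_assoc', le_div_iff₀ hpos]; nlinarith
    · rw [hc, mul_div_assoc', div_le_iff₀ hpos]; nlinarith
    · have := hmin (p - 1) (by omega)
      push Not at this
      exact this (by omega)

lemma bb_pointwise (al : ℕ → ℝ) (H : ℝ → ℝ) (N p : ℕ) (hN : 1 ≤ N) (M : ℝ)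
    (hp : 1 ≤ p) (hM : 0 < M) (hMN : M ≤ N) (hpM1 : (N : ℝ) ≤ p * M) (hpM : p * M ≤ 2 * N) (hpH : al p ≤ H (N / p))
    (hor : M = N ∨ (2 ≤ p ∧ H M < al (p - 1))) (u q A : ℝ) (hq : 0 < q) (hA : 1 ≤ A)
    (hqH : ∀ t, 0 ≤ t → (t < q ↔ u < H t)) (hAal : ∀ d : ℕ, 1 ≤ d → u < al d → (d : ℝ) + 1 ≤ A) :
    min q N - min q M ≤ bb q A N ∧
    (1 / (N : ℝ)) * ∑ d ∈ Finset.range p, (if d = 0 ∨ u < al d then (min q M) ^ 2 else 0) ≤ 2 * bb q A N ∧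
    (if u < al p then 2 * M else 0) ≤ 4 * bb q A N ∧
    (if (N : ℝ) < q then (N : ℝ) else 0) ≤ bb q A N := by
  have hN' : (1:ℝ) ≤ N := by exact_mod_cast hN
  have hp' : (1:ℝ) ≤ p := by exact_mod_cast hp
  have hb0 : 0 ≤ bb q A N := bb_nonneg hq.le (by linarith) (by linarith)
  have ha0 : 0 ≤ min q M := le_min hq.le hM.le
  refine ⟨?_, ?_, ?_, ?_⟩
  · by_cases h : q ≤ M
    · rw [min_eq_left h, min_eq_left (h.trans hMN)]; linarith
    · push Not at h
      have hR : (N : ℝ) ≤ A * q := by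
        rcases hor with h' | ⟨h2, h3⟩
        · nlinarith
        · have h4 : u < al (p - 1) := ((hqH M hM.le).1 h).trans h3
          have h5 := hAal (p - 1) (by omega) h4
          have hc : ((p - 1 : ℕ) : ℝ) = (p : ℝ) - 1 := by push_cast [hp]; ring
          rw [hc] at h5
          have : (p:ℝ) * M ≤ A * q := mul_le_mul (by linarith) h.le hM.le (by linarith)
          linarith
      unfold bb; rw [if_pos hR]; linarith [le_min hq.le hM.le]
  · have hcard : ∑ d ∈ Finset.range p, (if d = 0 ∨ u < al d then (min q M) ^ 2 else 0) ≤ min (p:ℝ) A * (min q M) ^ 2 := by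
      rw [← Finset.sum_filter, Finset.sum_const, nsmul_eq_mul]
      gcongr
      apply le_min
      · exact_mod_cast (Finset.card_filter_le _ _).trans (by simp)
      · have : (Finset.range p).filter (fun d => d = 0 ∨ u < al d) ⊆ Finset.range ⌊A⌋₊ := by
          intro d hd
          simp only [Finset.mem_filter, Finset.mem_range] at hd ⊢
          apply Nat.lt_of_succ_le
          apply Nat.le_floor
          push_cast
          by_cases h0 : d = 0
          · subst h0; simpa using hA
          · rcases hd.2 with h | h
            · exact absurd h h0
            · exact hAal d (by omega) h
        have h2 := Finset.card_le_card this
        rw [Finset.card_range] at h2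
        calc _ ≤ ((⌊A⌋₊ : ℕ) : ℝ) := by exact_mod_cast h2
          _ ≤ A := Nat.floor_le (by linarith)
    rw [one_div_mul_eq_div, div_le_iff₀ (by linarith)]
    refine hcard.trans ?_
    unfold bb
    split_ifs with h
    · have h1 : min (p:ℝ) A * min q M ^ 2 ≤ p * (M * min q N) := by
        have : min q M ^ 2 ≤ M * min q N := by
          rw [sq]; exact mul_le_mul (min_le_right _ _) (min_le_min le_rfl hMN) ha0 hM.le
        exact mul_le_mul (min_le_left _ _) this (by positivity) (by linarith)
      have h2 : 0 ≤ min q (N:ℝ) := le_min hq.le (by linarith)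
      nlinarith
    · have h1 : min (p:ℝ) A * min q M ^ 2 ≤ A * q ^ 2 := by
        gcongr
        · exact min_le_right _ _
        · exact min_le_left _ _
      have h2 : 2 * (A * q ^ 2 / (N:ℝ)) * N = 2 * (A * q ^ 2) := by field_simp
      rw [h2]
      have : 0 ≤ A * q ^ 2 := by positivity
      linarith
  · split_ifs with h
    · have h1 : (N : ℝ) / p < q := (hqH _ (by positivity)).2 (lt_of_lt_of_le h hpH)
      have h2 := hAal p hp h
      rw [div_lt_iff₀ (by linarith)] at h1
      have hR : (N : ℝ) ≤ A * q := by nlinarith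
      unfold bb; rw [if_pos hR]
      have h3 : M ≤ 2 * q := by
        by_contra hcon
        push Not at hcon
        nlinarith
      have : M / 2 ≤ min q N := le_min (by linarith) (by linarith)
      linarith
    · linarith
  · split_ifs with h
    · unfold bb; rw [if_pos (by nlinarith), min_eq_right h.le]
    · exact hb0

open scoped ENNReal

lemma layer_one {Ω : Type*} [MeasurableSpace Ω] (ν : Measure Ω) [SFinite ν] (U : Ω → ℝ)
    (hU : Measurable U) (g : Ω → ℝ≥0∞) (hg : Measurable g) :
    ∫⁻ ω, ENNReal.ofReal (U ω) * g ω ∂ν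
      = ∫⁻ s in Ioi (0:ℝ), ∫⁻ ω, ({ω | s < U ω}.indicator 1 ω) * g ω ∂ν := by
  rw [lintegral_lintegral_swap]
  · apply lintegral_congr
    intro ω
    have : ∀ s : ℝ, ({ω | s < U ω}.indicator (1 : Ω → ℝ≥0∞) ω) * g ω = (Iio (U ω)).indicator 1 s * g ω := by
      intro s; simp [indicator]
    simp_rw [this]
    rw [lintegral_mul_const _ (measurable_one.indicator measurableSet_Iio)]
    rw [lintegral_indicator_one measurableSet_Iio, Measure.restrict_apply measurableSet_Iio, Iio_inter_Ioi, Real.volume_Ioo]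
    simp
  · apply Measurable.aemeasurable
    apply Measurable.mul _ (hg.comp measurable_snd)
    have : (fun a : ℝ × Ω => ({ω | a.1 < U ω}.indicator (1 : Ω → ℝ≥0∞) a.2))
        = {a : ℝ × Ω | a.1 < U a.2}.indicator 1 := by
      ext a; simp [indicator]
    rw [this]
    exact measurable_one.indicator (measurableSet_lt measurable_fst (hU.comp measurable_snd))

lemma layer_two {Ω : Type*} [MeasurableSpace Ω] (ν : Measure Ω) [SFinite ν] (U V : Ω → ℝ)
    (hU : Measurable U) (hV : Measurable V) :
    ∫⁻ ω, ENNReal.ofReal (U ω) * ENNReal.ofReal (V ω) ∂ν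
      = ∫⁻ s in Ioi (0:ℝ), ∫⁻ t in Ioi (0:ℝ), ν ({ω | s < U ω} ∩ {ω | t < V ω}) := by
  rw [layer_one ν U hU _ (by fun_prop)]
  apply lintegral_congr
  intro s
  have hs : MeasurableSet {ω | s < U ω} := measurableSet_lt measurable_const hU
  simp_rw [mul_comm ({ω | s < U ω}.indicator 1 _)]
  rw [layer_one ν V hV _ (measurable_one.indicator hs)]
  apply lintegral_congr
  intro t
  have ht : MeasurableSet {ω | t < V ω} := measurableSet_lt measurable_const hV
  rw [← lintegral_indicator_one (hs.inter ht)]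
  apply lintegral_congr
  intro ω
  rw [inter_comm, inter_indicator_one]; rfl

lemma layer_single {Ω : Type*} [MeasurableSpace Ω] (ν : Measure Ω) [SFinite ν] (U : Ω → ℝ)
    (hU : Measurable U) :
    ∫⁻ ω, ENNReal.ofReal (U ω) ∂ν = ∫⁻ s in Ioi (0:ℝ), ν {ω | s < U ω} := by
  have := layer_one ν U hU 1 measurable_one
  simp only [Pi.one_apply, mul_one] at this
  rw [this]
  apply lintegral_congr
  intro s
  exact lintegral_indicator_one (measurableSet_lt measurable_const hU)

/-- Lebesgue measure on the open unit interval -/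
noncomputable def lam : Measure ℝ := volume.restrict (Ioo (0:ℝ) 1)

instance : IsProbabilityMeasure lam := ⟨by simp [lam]⟩

lemma lam_Iio (x : ℝ) (h1 : x ≤ 1) : lam (Iio x) = ENNReal.ofReal x := by
  rw [lam, Measure.restrict_apply measurableSet_Iio, Iio_inter_Ioo, min_eq_left h1, Real.volume_Ioo, sub_zero]

lemma lam_congr {s t : Set ℝ} (h : ∀ u ∈ Ioo (0:ℝ) 1, u ∈ s ↔ u ∈ t) : lam s = lam t := by
  apply measure_congr
  have : ∀ᵐ u ∂lam, u ∈ Ioo (0:ℝ) 1 := ae_restrict_mem measurableSet_Ioo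
  filter_upwards [this] with u hu
  exact propext (h u hu)

/-- Upper covariance inequality via layer cake. -/
lemma cov_lintegral {Ω : Type*} [MeasurableSpace Ω] (P : Measure Ω) [IsProbabilityMeasure P]
    (U V : Ω → ℝ) (hU : Measurable U) (hV : Measurable V) (al : ℝ) (hal1 : al ≤ 1)
    (hmix : ∀ s t : ℝ, P ({ω | s < U ω} ∩ {ω | t < V ω})
      ≤ P {ω | s < U ω} * P {ω | t < V ω} + ENNReal.ofReal al)
    (a b : ℝ → ℝ) (ha : Measurable a) (hb : Measurable b) (hx hy : ℝ → ℝ)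
    (hax : ∀ s, 0 < s → ∀ u ∈ Ioo (0:ℝ) 1, s < a u ↔ u < hx s)
    (hby : ∀ s, 0 < s → ∀ u ∈ Ioo (0:ℝ) 1, s < b u ↔ u < hy s)
    (hUx : ∀ s, 0 < s → P {ω | s < U ω} ≤ ENNReal.ofReal (hx s))
    (hVy : ∀ s, 0 < s → P {ω | s < V ω} ≤ ENNReal.ofReal (hy s)) :
    ∫⁻ ω, ENNReal.ofReal (U ω) * ENNReal.ofReal (V ω) ∂P
      ≤ (∫⁻ ω, ENNReal.ofReal (U ω) ∂P) * (∫⁻ ω, ENNReal.ofReal (V ω) ∂P)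
        + ∫⁻ u, ENNReal.ofReal (a u) * ENNReal.ofReal (b u) ∂(lam.restrict (Iio al)) := by
  rw [layer_two P U V hU hV, layer_single P U hU, layer_single P V hV, layer_two _ a b ha hb]
  have mU : Measurable fun s : ℝ => P {ω | s < U ω} := by
    apply Antitone.measurable
    intro s t hst
    exact measure_mono fun ω (hω : t < U ω) => lt_of_le_of_lt hst hω
  have mV : Measurable fun s : ℝ => P {ω | s < V ω} := by
    apply Antitone.measurable
    intro s t hst
    exact measure_mono fun ω (hω : t < V ω) => lt_of_le_of_lt hst hω
  rw [← lintegral_mul_const _ mU]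
  rw [← lintegral_add_left (mU.mul_const _)]
  apply setLIntegral_mono' measurableSet_Ioi
  intro s hs
  rw [← lintegral_const_mul _ mV, ← lintegral_add_left (mV.const_mul _)]
  apply setLIntegral_mono' measurableSet_Ioi
  intro t ht
  have hs' : (0:ℝ) < s := hs
  have ht' : (0:ℝ) < t := ht
  have hset : (lam.restrict (Iio al)) ({u | s < a u} ∩ {u | t < b u})
      = ENNReal.ofReal (min (min (hx s) (hy t)) al) := by
    rw [Measure.restrict_apply ((measurableSet_lt measurable_const ha).inter
      (measurableSet_lt measurable_const hb)), ← lam_Iio _ ((min_le_right _ _).trans hal1)]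
    apply lam_congr
    intro u hu
    have e1 := hax s hs' u hu
    have e2 := hby t ht' u hu
    simp only [mem_inter_iff, mem_ofPred_eq, mem_Iio, lt_min_iff, e1, e2]
  rw [hset]
  rcases le_total (min (hx s) (hy t)) al with h | h
  · rw [min_eq_left h]
    refine le_trans ?_ le_add_self
    rcases le_total (hx s) (hy t) with h' | h'
    · rw [min_eq_left h']; exact (measure_mono inter_subset_left).trans (hUx s hs')
    · rw [min_eq_right h']; exact (measure_mono inter_subset_right).trans (hVy t ht')
  · rw [min_eq_right h]; exact hmix s t

lemma cov_real {Ω : Type*} [MeasurableSpace Ω] (P : Measure Ω) [IsProbabilityMeasure P]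
    (U V : Ω → ℝ) (hU : Measurable U) (hV : Measurable V) (al : ℝ) (hal1 : al ≤ 1)
    (C : ℝ) (hU0 : ∀ ω, 0 ≤ U ω) (hV0 : ∀ ω, 0 ≤ V ω) (hUC : ∀ ω, U ω ≤ C) (hVC : ∀ ω, V ω ≤ C)
    (hmix : ∀ s t : ℝ, P ({ω | s < U ω} ∩ {ω | t < V ω})
      ≤ P {ω | s < U ω} * P {ω | t < V ω} + ENNReal.ofReal al)
    (a b : ℝ → ℝ) (ha : Measurable a) (hb : Measurable b)
    (ha0 : ∀ u, 0 ≤ a u) (hb0 : ∀ u, 0 ≤ b u) (haC : ∀ u, a u ≤ C) (hbC : ∀ u, b u ≤ C)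
    (hx hy : ℝ → ℝ)
    (hax : ∀ s, 0 < s → ∀ u ∈ Ioo (0:ℝ) 1, s < a u ↔ u < hx s)
    (hby : ∀ s, 0 < s → ∀ u ∈ Ioo (0:ℝ) 1, s < b u ↔ u < hy s)
    (hUx : ∀ s, 0 < s → P {ω | s < U ω} ≤ ENNReal.ofReal (hx s))
    (hVy : ∀ s, 0 < s → P {ω | s < V ω} ≤ ENNReal.ofReal (hy s)) :
    ∫ ω, U ω * V ω ∂P ≤ (∫ ω, U ω ∂P) * (∫ ω, V ω ∂P)
        + ∫ u, (if u < al then a u * b u else 0) ∂lam := by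
  have key := cov_lintegral P U V hU hV al hal1 hmix a b ha hb hx hy hax hby hUx hVy
  have bdd : ∀ {Ω' : Type _} [MeasurableSpace Ω'] (ν : Measure Ω') [IsFiniteMeasure ν] (f : Ω' → ℝ) (D : ℝ),
      Measurable f → (∀ x, 0 ≤ f x) → (∀ x, f x ≤ D) → Integrable f ν := by
    intro Ω' _ ν _ f D hf h0 hD
    exact Integrable.of_bound hf.aestronglyMeasurable D (Eventually.of_forall fun x => by
      rw [Real.norm_of_nonneg (h0 x)]; exact hD x)
  have iU := bdd P U C hU hU0 hUC
  have iV := bdd P V C hV hV0 hVC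
  have iUV := bdd P (fun ω => U ω * V ω) (C * C) (hU.mul hV) (fun ω => mul_nonneg (hU0 ω) (hV0 ω))
    (fun ω => mul_le_mul (hUC ω) (hVC ω) (hV0 ω) ((hU0 ω).trans (hUC ω)))
  have iab : Integrable (fun u => a u * b u) (lam.restrict (Iio al)) :=
    Integrable.of_bound (ha.mul hb).aestronglyMeasurable (C * C) (Eventually.of_forall fun u => by
      rw [Real.norm_of_nonneg (mul_nonneg (ha0 u) (hb0 u))]
      exact mul_le_mul (haC u) (hbC u) (hb0 u) ((ha0 u).trans (haC u)))
  simp_rw [← ENNReal.ofReal_mul (hU0 _), ← ENNReal.ofReal_mul (ha0 _)] at key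
  rw [← ofReal_integral_eq_lintegral_ofReal iU (Eventually.of_forall hU0),
    ← ofReal_integral_eq_lintegral_ofReal iV (Eventually.of_forall hV0),
    ← ofReal_integral_eq_lintegral_ofReal iUV (Eventually.of_forall fun ω => mul_nonneg (hU0 ω) (hV0 ω)),
    ← ofReal_integral_eq_lintegral_ofReal iab (Eventually.of_forall fun u => mul_nonneg (ha0 u) (hb0 u)),
    ← ENNReal.ofReal_mul (integral_nonneg hU0),
    ← ENNReal.ofReal_add (mul_nonneg (integral_nonneg hU0) (integral_nonneg hV0)) (integral_nonneg fun u => mul_nonneg (ha0 u) (hb0 u)),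
    ENNReal.ofReal_le_ofReal_iff (add_nonneg (mul_nonneg (integral_nonneg hU0) (integral_nonneg hV0)) (integral_nonneg fun u => mul_nonneg (ha0 u) (hb0 u)))] at key
  refine key.trans_eq ?_
  congr 1
  rw [← integral_indicator measurableSet_Iio]
  rfl

/-- Past σ-algebra. -/
def pastSig {Ω : Type*} (X : ℕ → Ω → ℝ) (k : ℕ) : MeasurableSpace Ω :=
  ⨆ i ∈ {i : ℕ | i ≤ k}, MeasurableSpace.comap (X i) Real.measurableSpace

/-- Future σ-algebra. -/
def futSig {Ω : Type*} (X : ℕ → Ω → ℝ) (k : ℕ) : MeasurableSpace Ω :=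
  ⨆ i ∈ {i : ℕ | k ≤ i}, MeasurableSpace.comap (X i) Real.measurableSpace

lemma alphaCoef_bdd {Ω : Type*} [MeasurableSpace Ω] (P : Measure Ω) [IsProbabilityMeasure P]
    (X : ℕ → Ω → ℝ) (n : ℕ) : ∀ c ∈ { c : ℝ | ∃ (k : ℕ) (A B : Set Ω),
    MeasurableSet[⨆ i ∈ {i : ℕ | i ≤ k}, MeasurableSpace.comap (X i) Real.measurableSpace] A ∧
    MeasurableSet[⨆ i ∈ {i : ℕ | k + n ≤ i}, MeasurableSpace.comap (X i) Real.measurableSpace] B ∧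
    c = |(P (A ∩ B)).toReal - (P A).toReal * (P B).toReal| }, c ≤ 1 := by
  rintro c ⟨k, A, B, -, -, rfl⟩
  have h1 : (P (A ∩ B)).toReal ≤ 1 := measureReal_le_one
  have h2 : (P A).toReal ≤ 1 := measureReal_le_one
  have h3 : (P B).toReal ≤ 1 := measureReal_le_one
  have g1 : 0 ≤ (P (A ∩ B)).toReal := ENNReal.toReal_nonneg
  have g2 : 0 ≤ (P A).toReal := ENNReal.toReal_nonneg
  have g3 : 0 ≤ (P B).toReal := ENNReal.toReal_nonneg
  rw [abs_le]; constructor <;> nlinarith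

lemma alphaCoef_le_one {Ω : Type*} [MeasurableSpace Ω] (P : Measure Ω) [IsProbabilityMeasure P]
    (X : ℕ → Ω → ℝ) (n : ℕ) : alphaCoef P X n ≤ 1 :=
  Real.sSup_le (alphaCoef_bdd P X n) (by norm_num)

lemma mix_le {Ω : Type*} [MeasurableSpace Ω] (P : Measure Ω) [IsProbabilityMeasure P]
    (X : ℕ → Ω → ℝ) (k n : ℕ) (A B : Set Ω) (hA : MeasurableSet[pastSig X k] A)
    (hB : MeasurableSet[futSig X (k + n)] B) :
    P (A ∩ B) ≤ P A * P B + ENNReal.ofReal (alphaCoef P X n) := by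
  have h : |(P (A ∩ B)).toReal - (P A).toReal * (P B).toReal| ≤ alphaCoef P X n :=
    le_csSup ⟨1, alphaCoef_bdd P X n⟩ ⟨k, A, B, hA, hB, rfl⟩
  have h0 := (abs_nonneg _).trans h
  have h1 := (le_abs_self _).trans h
  rw [← ENNReal.ofReal_toReal (measure_ne_top P (A ∩ B)), ← ENNReal.ofReal_toReal (measure_ne_top P A),
    ← ENNReal.ofReal_toReal (measure_ne_top P B), ← ENNReal.ofReal_mul ENNReal.toReal_nonneg,
    ← ENNReal.ofReal_add (by positivity) h0]
  exact ENNReal.ofReal_le_ofReal (by linarith)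

lemma pastSig_le {Ω : Type*} [mΩ : MeasurableSpace Ω] (X : ℕ → Ω → ℝ) (hX : ∀ i, Measurable (X i)) (k : ℕ) :
    pastSig X k ≤ mΩ := iSup₂_le fun i _ => (hX i).comap_le

lemma meas_past {Ω : Type*} (X : ℕ → Ω → ℝ) {i k : ℕ} (h : i ≤ k) : Measurable[pastSig X k] (X i) := by
  apply Measurable.mono (comap_measurable (X i)) _ le_rfl
  exact le_iSup₂_of_le i h le_rfl

lemma meas_fut {Ω : Type*} (X : ℕ → Ω → ℝ) {i k : ℕ} (h : k ≤ i) : Measurable[futSig X k] (X i) := by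
  apply Measurable.mono (comap_measurable (X i)) _ le_rfl
  exact le_iSup₂_of_le i h le_rfl

/-- clamp to `[-1,1]` -/
noncomputable def clp (x : ℝ) : ℝ := max (-1) (min 1 x)

/-- Huber function -/
noncomputable def hub (x : ℝ) : ℝ := |x - clp x| + (clp x) ^ 2 / 2

lemma clp_cases (x : ℝ) : (x ≤ -1 ∧ clp x = -1) ∨ (-1 ≤ x ∧ x ≤ 1 ∧ clp x = x) ∨ (1 ≤ x ∧ clp x = 1) := by
  unfold clp
  rcases le_total x 1 with h | h
  · rw [min_eq_right h]
    rcases le_total x (-1) with h' | h'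
    · left; exact ⟨h', max_eq_left h'⟩
    · right; left; exact ⟨h', h, max_eq_right h'⟩
  · right; right; rw [min_eq_left h]; exact ⟨h, max_eq_right (by norm_num)⟩

lemma clp_abs (x : ℝ) : -1 ≤ clp x ∧ clp x ≤ 1 := by
  rcases clp_cases x with h | h | h <;> constructor <;> linarith [h.2]

lemma clp_inc (x y : ℝ) (h : x ≤ y) : 0 ≤ clp y - clp x ∧ clp y - clp x ≤ y - x := by
  rcases clp_cases x with h1 | h1 | h1 <;> rcases clp_cases y with h2 | h2 | h2 <;> 
    constructor <;> grind

@[fun_prop]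
lemma clp_meas : Measurable clp := by unfold clp; fun_prop

@[fun_prop]
lemma hub_meas : Measurable hub := by
  unfold hub
  have : Measurable fun x => clp x := clp_meas
  exact ((measurable_id.sub this).abs).add ((this.pow_const 2).div_const 2)

lemma hub_nonneg (x : ℝ) : 0 ≤ hub x := by unfold hub; positivity

lemma hub_le (z y : ℝ) : hub z ≤ |y| + (z - y) ^ 2 / 2 := by
  unfold hub
  rcases clp_cases z with h1 | h1 | h1
  · rw [h1.2, abs_of_nonpos (by linarith)]
    have := neg_abs_le y
    nlinarith [sq_nonneg (z - y + 1)]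
  · rw [h1.2.2]
    simp only [sub_self, abs_zero]
    rcases abs_cases y with h | h <;> nlinarith [sq_nonneg y]
  · rw [h1.2, abs_of_nonneg (by linarith)]
    have := le_abs_self y
    nlinarith [sq_nonneg (z - y - 1)]

lemma hub_step (x h : ℝ) : hub (x + h) ≤ hub x + clp x * h + h ^ 2 / 2 := by
  refine (hub_le (x + h) (x - clp x)).trans ?_
  unfold hub
  apply le_of_eq; ring

lemma abs_le_hub (x : ℝ) : |x| ≤ Real.sqrt (2 * hub x) + 2 * hub x := by
  have h0 := hub_nonneg x
  rcases clp_cases x with h1 | h1 | h1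
  · have : hub x = -x - 1/2 := by unfold hub; rw [h1.2, abs_of_nonpos (by linarith)]; ring
    rw [abs_of_nonpos (by linarith)]
    have := Real.sqrt_nonneg (2 * hub x)
    linarith
  · have : 2 * hub x = x ^ 2 := by unfold hub; rw [h1.2.2]; simp; ring
    rw [this, Real.sqrt_sq_eq_abs]; nlinarith [sq_nonneg x]
  · have : hub x = x - 1/2 := by unfold hub; rw [h1.2, abs_of_nonneg (by linarith)]; ring
    rw [abs_of_nonneg (by linarith)]
    have := Real.sqrt_nonneg (2 * hub x)
    linarith

lemma tendsto_of_hub {T : ℕ → ℝ} (h : Tendsto (fun n => hub (T n)) atTop (nhds 0)) :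
    Tendsto T atTop (nhds 0) := by
  apply squeeze_zero_norm (a := fun n => Real.sqrt (2 * hub (T n)) + 2 * hub (T n))
  · intro n; exact abs_le_hub _
  · have h2 : Tendsto (fun n => 2 * hub (T n)) atTop (nhds 0) := by simpa using h.const_mul 2
    have h3 := h2.sqrt.add h2
    simpa using h3

lemma hub_le_abs (x : ℝ) : hub x ≤ |x| := by simpa using hub_le x x

/-- partial sums -/
noncomputable def psum {Ω : Type*} (X : ℕ → Ω → ℝ) (z : ℝ → ℝ) (j : ℕ) (ω : Ω) : ℝ :=
  ∑ l ∈ Finset.range j, z (X l ω)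

lemma psum_meas_past {Ω : Type*} (X : ℕ → Ω → ℝ) (z : ℝ → ℝ) (hz : Measurable z) (j k : ℕ) (h : j ≤ k + 1) :
    Measurable[pastSig X k] (psum X z j) := by
  unfold psum
  let _ : MeasurableSpace Ω := pastSig X k
  refine Finset.measurable_fun_sum _ ?_
  intro l hl
  have : l < j := Finset.mem_range.1 hl
  exact hz.comp (meas_past X (by omega))

lemma psum_meas {Ω : Type*} [MeasurableSpace Ω] (X : ℕ → Ω → ℝ) (hX : ∀ i, Measurable (X i)) (z : ℝ → ℝ) (hz : Measurable z) (j : ℕ) :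
    Measurable (psum X z j) := by
  unfold psum
  exact Finset.measurable_fun_sum _ fun l _ => hz.comp (hX l)

/-- covariance bound at lag d -/
noncomputable def cdc (a : ℝ → ℝ) (al : ℕ → ℝ) (d : ℕ) : ℝ :=
  ∫ u, (if d = 0 ∨ u < al d then a u ^ 2 else 0) ∂lam

lemma cdc_nonneg (a : ℝ → ℝ) (al : ℕ → ℝ) (d : ℕ) : 0 ≤ cdc a al d := by
  apply integral_nonneg
  intro u
  show 0 ≤ (if d = 0 ∨ u < al d then a u ^ 2 else 0)
  split_ifs <;> positivity

lemma inc_bound {Ω : Type*} [MeasurableSpace Ω] (P : Measure Ω) [IsProbabilityMeasure P] (X : ℕ → Ω → ℝ)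
    (hX : ∀ i, Measurable (X i)) (z : ℝ → ℝ) (hz : Measurable z) (M m : ℝ) (hM : 0 < M) (hz0 : ∀ x, 0 ≤ z x)
    (hzM : ∀ x, z x ≤ M) (hm : ∀ i, ∫ ω, z (X i ω) ∂P = m) (a hx : ℝ → ℝ) (ha : Measurable a)
    (ha0 : ∀ u, 0 ≤ a u) (haM : ∀ u, a u ≤ M) (hax : ∀ s, 0 < s → ∀ u ∈ Ioo (0:ℝ) 1, s < a u ↔ u < hx s)
    (hzx : ∀ i s, 0 < s → P {ω | s < z (X i ω)} ≤ ENNReal.ofReal (hx s)) (N : ℕ) (hN : 1 ≤ N)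
    (i j : ℕ) (hji : j < i) :
    ∫ ω, (clp ((psum X z (j+1) ω - i * m) / N) - clp ((psum X z j ω - i * m) / N)) * (z (X i ω) - m) ∂P
      ≤ cdc a (alphaCoef P X) (i - j) / N := by
  have hN' : (0:ℝ) < N := by exact_mod_cast hN
  set D : Ω → ℝ := fun ω => clp ((psum X z (j+1) ω - i * m) / N) - clp ((psum X z j ω - i * m) / N) with hD
  have hDp : Measurable[pastSig X j] (fun ω => N * D ω) := by
    have h1 := psum_meas_past X z hz (j+1) j le_rfl
    have h2 := psum_meas_past X z hz j j (by omega)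
    exact (((clp_meas.comp ((h1.sub_const _).div_const _)).sub (clp_meas.comp ((h2.sub_const _).div_const _)))).const_mul _
  have hDm : Measurable (fun ω => N * D ω) := hDp.mono (pastSig_le X hX j) le_rfl
  have hZf : Measurable[futSig X (j + (i - j))] (fun ω => z (X i ω)) := hz.comp (meas_fut X (by omega))
  have hZm : Measurable (fun ω => z (X i ω)) := hz.comp (hX i)
  have hDi : ∀ ω, 0 ≤ D ω ∧ D ω ≤ z (X j ω) / N := by
    intro ω
    have hle : (psum X z j ω - i * m) / N ≤ (psum X z (j+1) ω - i * m) / N := by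
      gcongr
      unfold psum; rw [Finset.sum_range_succ]; linarith [hz0 (X j ω)]
    have := clp_inc _ _ hle
    refine ⟨this.1, this.2.trans (le_of_eq ?_)⟩
    unfold psum; rw [Finset.sum_range_succ]; ring
  have hND : ∀ ω, N * D ω ≤ z (X j ω) := by
    intro ω
    have := (hDi ω).2
    rw [le_div_iff₀ hN'] at this; linarith
  have hND0 : ∀ ω, 0 ≤ N * D ω := fun ω => mul_nonneg hN'.le (hDi ω).1
  have key := cov_real P (fun ω => N * D ω) (fun ω => z (X i ω)) hDm hZm (alphaCoef P X (i - j))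
    (alphaCoef_le_one P X _) M hND0 (fun ω => hz0 _) (fun ω => (hND ω).trans (hzM _))
    (fun ω => hzM _) (fun s t => mix_le P X j (i - j) _ _ (hDp measurableSet_Ioi) (hZf measurableSet_Ioi))
    a a ha ha ha0 ha0 haM haM hx hx hax hax
    (fun s hs => (measure_mono fun ω (hω : s < N * D ω) => hω.trans_le (hND ω)).trans (hzx j s hs)) (fun s hs => hzx i s hs)
  have iD : Integrable (fun ω => N * D ω) P := Integrable.of_bound hDm.aestronglyMeasurable M
    (Eventually.of_forall fun ω => by rw [Real.norm_of_nonneg (hND0 ω)]; exact (hND ω).trans (hzM _))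
  have iDZ : Integrable (fun ω => N * D ω * z (X i ω)) P := 
    Integrable.of_bound (hDm.mul hZm).aestronglyMeasurable (M * M)
    (Eventually.of_forall fun ω => by
      rw [Real.norm_of_nonneg (mul_nonneg (hND0 ω) (hz0 _))]
      exact mul_le_mul ((hND ω).trans (hzM _)) (hzM _) (hz0 _) hM.le)
  rw [hm i] at key
  have e1 : cdc a (alphaCoef P X) (i - j) = ∫ u, (if u < alphaCoef P X (i - j) then a u * a u else 0) ∂lam := by
    unfold cdc
    congr 1; ext u
    have : i - j ≠ 0 := by omega
    simp only [this, false_or, sq]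
  rw [← e1] at key
  rw [le_div_iff₀ hN', mul_comm, ← integral_const_mul]
  have e2 : ∫ ω, (N:ℝ) * (D ω * (z (X i ω) - m)) ∂P = ∫ ω, N * D ω * z (X i ω) ∂P - (∫ ω, N * D ω ∂P) * m := by
    rw [← integral_mul_const, ← integral_sub iDZ (iD.mul_const m)]
    congr 1; ext ω; ring
  rw [e2]; linarith

lemma rem_bound {Ω : Type*} [MeasurableSpace Ω] (P : Measure Ω) [IsProbabilityMeasure P] (X : ℕ → Ω → ℝ)
    (hX : ∀ i, Measurable (X i)) (z : ℝ → ℝ) (hz : Measurable z) (M m : ℝ) (hM : 0 < M) (hz0 : ∀ x, 0 ≤ z x)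
    (hzM : ∀ x, z x ≤ M) (hm : ∀ i, ∫ ω, z (X i ω) ∂P = m) (N : ℕ)
    (i j p : ℕ) (hji : j + p = i + 1) (hj : 1 ≤ j) :
    ∫ ω, (clp ((psum X z j ω - i * m) / N)) * (z (X i ω) - m) ∂P
      ≤ ∫ u, (if u < alphaCoef P X p then 2 * M else 0) ∂lam := by
  set w : Ω → ℝ := fun ω => clp ((psum X z j ω - i * m) / N) with hw
  have hwp : Measurable[pastSig X (j-1)] (fun ω => w ω + 1) := by
    have h1 := psum_meas_past X z hz j (j-1) (by omega)
    exact (clp_meas.comp ((h1.sub_const _).div_const _)).add_const 1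
  have hwm : Measurable (fun ω => w ω + 1) := hwp.mono (pastSig_le X hX _) le_rfl
  have hZf : Measurable[futSig X (j - 1 + p)] (fun ω => z (X i ω)) := hz.comp (meas_fut X (by omega))
  have hZm : Measurable (fun ω => z (X i ω)) := hz.comp (hX i)
  have hw0 : ∀ ω, 0 ≤ w ω + 1 := fun ω => by linarith [(clp_abs ((psum X z j ω - i * m) / N)).1]
  have hw2 : ∀ ω, w ω + 1 ≤ 2 := fun ω => by linarith [(clp_abs ((psum X z j ω - i * m) / N)).2]
  have step : ∀ (C : ℝ) (s : ℝ), ∀ u ∈ Ioo (0:ℝ) 1, (s < C ↔ u < (if s < C then 1 else 0)) := by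
    intro C s u hu
    split_ifs with h
    · simp [h, hu.2]
    · simp [h, hu.1.le]
  have stepm : ∀ (C : ℝ) (f : Ω → ℝ), (∀ ω, f ω ≤ C) → ∀ s, 0 < s → P {ω | s < f ω} ≤ ENNReal.ofReal (if s < C then 1 else 0) := by
    intro C f hf s _
    split_ifs with h
    · simpa using prob_le_one
    · have : {ω | s < f ω} = ∅ := by
        ext ω
        simp only [mem_ofPred_eq, mem_empty_iff_false, iff_false, not_lt]
        exact (hf ω).trans (not_lt.1 h)
      rw [this]; simp
  have key := cov_real P (fun ω => w ω + 1) (fun ω => z (X i ω)) hwm hZm (alphaCoef P X p)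
    (alphaCoef_le_one P X _) (max 2 M) hw0 (fun ω => hz0 _) (fun ω => (hw2 ω).trans (le_max_left _ _))
    (fun ω => (hzM _).trans (le_max_right _ _))
    (fun s t => mix_le P X (j-1) p _ _ (hwp measurableSet_Ioi) (hZf measurableSet_Ioi))
    (fun _ => 2) (fun _ => M) measurable_const measurable_const (fun _ => by norm_num) (fun _ => hM.le)
    (fun _ => le_max_left _ _) (fun _ => le_max_right _ _)
    (fun s => if s < 2 then 1 else 0) (fun s => if s < M then 1 else 0) (fun s _ => step 2 s) (fun s _ => step M s)
    (stepm 2 _ hw2) (stepm M _ fun ω => hzM _)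
  have iw : Integrable (fun ω => w ω + 1) P := Integrable.of_bound hwm.aestronglyMeasurable 2
    (Eventually.of_forall fun ω => by rw [Real.norm_of_nonneg (hw0 ω)]; exact hw2 ω)
  have iZ : Integrable (fun ω => z (X i ω)) P := Integrable.of_bound hZm.aestronglyMeasurable M
    (Eventually.of_forall fun ω => by rw [Real.norm_of_nonneg (hz0 _)]; exact hzM _)
  have iwZ : Integrable (fun ω => (w ω + 1) * z (X i ω)) P := 
    Integrable.of_bound (hwm.mul hZm).aestronglyMeasurable (2 * M)
    (Eventually.of_forall fun ω => by
      rw [Real.norm_of_nonneg (mul_nonneg (hw0 ω) (hz0 _))]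
      exact mul_le_mul (hw2 ω) (hzM _) (hz0 _) (by norm_num))
  have e2 : ∫ ω, (w ω * (z (X i ω) - m)) ∂P = ∫ ω, (w ω + 1) * z (X i ω) ∂P - (∫ ω, (w ω + 1) ∂P) * m
     - (∫ ω, z (X i ω) ∂P - ∫ _ω, m ∂P) := by
    rw [← integral_mul_const, ← integral_sub iwZ (iw.mul_const m), ← integral_sub iZ (integrable_const m),
      ← integral_sub (f := fun ω => (w ω + 1) * z (X i ω) - (w ω + 1) * m) (g := fun ω => z (X i ω) - m)
        (iwZ.sub (iw.mul_const m)) (iZ.sub (integrable_const m))]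
    congr 1; ext ω; ring
  rw [e2]
  rw [hm i] at key ⊢
  simp only [integral_const, probReal_univ, smul_eq_mul, one_mul, sub_self, sub_zero] at key ⊢
  linarith

lemma e_bound {Ω : Type*} [MeasurableSpace Ω] (P : Measure Ω) [IsProbabilityMeasure P] (X : ℕ → Ω → ℝ)
    (hX : ∀ i, Measurable (X i)) (z : ℝ → ℝ) (hz : Measurable z) (M m : ℝ) (hM : 0 < M) (hz0 : ∀ x, 0 ≤ z x)
    (hzM : ∀ x, z x ≤ M) (hm : ∀ i, ∫ ω, z (X i ω) ∂P = m) (a hx : ℝ → ℝ) (ha : Measurable a)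
    (ha0 : ∀ u, 0 ≤ a u) (haM : ∀ u, a u ≤ M) (hax : ∀ s, 0 < s → ∀ u ∈ Ioo (0:ℝ) 1, s < a u ↔ u < hx s)
    (hzx : ∀ i s, 0 < s → P {ω | s < z (X i ω)} ≤ ENNReal.ofReal (hx s)) (N : ℕ) (hN : 1 ≤ N)
    (i p : ℕ) (hp : 1 ≤ p) :
    ∫ ω, (clp ((psum X z i ω - i * m) / N)) * (z (X i ω) - m) ∂P
      ≤ (1 / N) * ∑ d ∈ Finset.range (p-1), cdc a (alphaCoef P X) (d+1)
        + ∫ u, (if u < alphaCoef P X p then 2 * M else 0) ∂lam := by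
  have hN' : (0:ℝ) < N := by exact_mod_cast hN
  have hr : 0 ≤ ∫ u, (if u < alphaCoef P X p then 2 * M else 0) ∂lam := by
    apply integral_nonneg; intro u
    show 0 ≤ (if u < alphaCoef P X p then 2 * M else 0)
    split_ifs <;> positivity
  set e : ℕ → ℝ := fun j => ∫ ω, (clp ((psum X z j ω - i * m) / N)) * (z (X i ω) - m) ∂P with he
  have hZm : Measurable (fun ω => z (X i ω)) := hz.comp (hX i)
  have iZ : Integrable (fun ω => z (X i ω)) P := Integrable.of_bound hZm.aestronglyMeasurable M
    (Eventually.of_forall fun ω => by rw [Real.norm_of_nonneg (hz0 _)]; exact hzM _)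
  have hint : ∀ j, Integrable (fun ω => (clp ((psum X z j ω - i * m) / N)) * (z (X i ω) - m)) P := by
    intro j
    apply (iZ.sub (integrable_const m)).bdd_mul (c := 1)
    · exact (clp_meas.comp (((psum_meas X hX z hz j).sub_const _).div_const _)).aestronglyMeasurable
    · refine Eventually.of_forall fun ω => ?_
      rw [Real.norm_eq_abs, abs_le]; exact clp_abs _
  have hinc : ∀ j, j < i → e (j+1) ≤ e j + cdc a (alphaCoef P X) (i - j) / N := by
    intro j hj
    have := inc_bound P X hX z hz M m hM hz0 hzM hm a hx ha ha0 haM hax hzx N hN i j hj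
    have e3 : ∫ ω, (clp ((psum X z (j+1) ω - i * m) / N) - clp ((psum X z j ω - i * m) / N)) * (z (X i ω) - m) ∂P
       = e (j+1) - e j := by
      rw [he]; simp only
      rw [← integral_sub (hint _) (hint _)]
      congr 1; ext ω; ring
    linarith
  have htel : ∀ D, D ≤ i → e i ≤ (1 / N) * ∑ d ∈ Finset.range D, cdc a (alphaCoef P X) (d+1) + e (i - D) := by
    intro D
    induction D with
    | zero => intro _; simp
    | succ D ih =>
      intro hD
      have h1 := ih (by omega)
      have h2 := hinc (i - (D+1)) (by omega)
      have h3 : i - (D+1) + 1 = i - D := by omega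
      have h4 : i - (i - (D+1)) = D + 1 := by omega
      rw [h3, h4] at h2
      rw [Finset.sum_range_succ, mul_add]
      have : 1 / (N:ℝ) * cdc a (alphaCoef P X) (D+1) = cdc a (alphaCoef P X) (D+1) / N := by ring
      linarith
  show e i ≤ _
  rcases Nat.lt_or_ge i p with h | h
  · have h1 := htel i le_rfl
    have h2 : e (i - i) = 0 := by
      rw [he]; simp only [Nat.sub_self]
      unfold psum
      simp only [Finset.range_zero, Finset.sum_empty]
      rw [integral_const_mul, integral_sub iZ (integrable_const m), hm i]; simp
    rw [h2] at h1
    have h3 : ∑ d ∈ Finset.range i, cdc a (alphaCoef P X) (d+1) ≤ ∑ d ∈ Finset.range (p-1), cdc a (alphaCoef P X) (d+1) := by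
      apply Finset.sum_le_sum_of_subset_of_nonneg
      · intro d hd; simp only [Finset.mem_range] at hd ⊢; omega
      · intro d _ _; exact cdc_nonneg _ _ _
    have : 1 / (N:ℝ) * ∑ d ∈ Finset.range i, cdc a (alphaCoef P X) (d+1) ≤ 1 / (N:ℝ) * ∑ d ∈ Finset.range (p-1), cdc a (alphaCoef P X) (d+1) := by gcongr
    linarith
  · have h1 := htel (p-1) (by omega)
    have h2 := rem_bound P X hX z hz M m hM hz0 hzM hm N i (i - (p-1)) p (by omega) (by omega)
    exact h1.trans (by gcongr)

lemma hub_bound {Ω : Type*} [MeasurableSpace Ω] (P : Measure Ω) [IsProbabilityMeasure P] (X : ℕ → Ω → ℝ)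
    (hX : ∀ i, Measurable (X i)) (z : ℝ → ℝ) (hz : Measurable z) (M m : ℝ) (hM : 0 < M) (hz0 : ∀ x, 0 ≤ z x)
    (hzM : ∀ x, z x ≤ M) (hm : ∀ i, ∫ ω, z (X i ω) ∂P = m) (a hx : ℝ → ℝ) (ha : Measurable a)
    (ha0 : ∀ u, 0 ≤ a u) (haM : ∀ u, a u ≤ M) (hax : ∀ s, 0 < s → ∀ u ∈ Ioo (0:ℝ) 1, s < a u ↔ u < hx s)
    (hzx : ∀ i s, 0 < s → P {ω | s < z (X i ω)} ≤ ENNReal.ofReal (hx s))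
    (hz2 : ∀ i, ∫ ω, z (X i ω) ^ 2 ∂P ≤ ∫ u, a u ^ 2 ∂lam) (N : ℕ) (hN : 1 ≤ N)
    (p : ℕ) (hp : 1 ≤ p) :
    ∫ ω, hub ((psum X z N ω - N * m) / N) ∂P
      ≤ (1 / N) * ∑ d ∈ Finset.range p, cdc a (alphaCoef P X) d
        + ∫ u, (if u < alphaCoef P X p then 2 * M else 0) ∂lam := by
  have hN' : (0:ℝ) < N := by exact_mod_cast hN
  set r := ∫ u, (if u < alphaCoef P X p then 2 * M else 0) ∂lam with hrdef
  set Sc := ∑ d ∈ Finset.range p, cdc a (alphaCoef P X) d with hS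
  have hSe : Sc = ∑ d ∈ Finset.range (p-1), cdc a (alphaCoef P X) (d+1) + cdc a (alphaCoef P X) 0 := by
    rw [hS, ← Finset.sum_range_succ', Nat.sub_add_cancel hp]
  have hZm : ∀ i, Measurable (fun ω => z (X i ω)) := fun i => hz.comp (hX i)
  have iZ : ∀ i, Integrable (fun ω => z (X i ω)) P := fun i => Integrable.of_bound (hZm i).aestronglyMeasurable M
    (Eventually.of_forall fun ω => by rw [Real.norm_of_nonneg (hz0 _)]; exact hzM _)
  have iZ2 : ∀ i, Integrable (fun ω => z (X i ω) ^ 2) P := fun i => Integrable.of_bound ((hZm i).pow_const 2).aestronglyMeasurable (M ^ 2)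
    (Eventually.of_forall fun ω => by rw [Real.norm_of_nonneg (by positivity)]; exact pow_le_pow_left₀ (hz0 _) (hzM _) 2)
  have iS : ∀ j, Integrable (psum X z j) P := fun j => by
    unfold psum; exact integrable_finsetSum _ fun l _ => iZ l
  have ih : ∀ j : ℕ, Integrable (fun ω => hub ((psum X z j ω - j * m) / N)) P := by
    intro j
    refine Integrable.mono (((iS j).sub (integrable_const (j * m))).div_const (N:ℝ)) (hub_meas.comp (((psum_meas X hX z hz j).sub_const _).div_const _)).aestronglyMeasurable (Eventually.of_forall fun ω => ?_)
    rw [Real.norm_of_nonneg (hub_nonneg _), Real.norm_eq_abs]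
    exact hub_le_abs _
  have main : ∀ i : ℕ, ∫ ω, hub ((psum X z i ω - i * m) / N) ∂P ≤ i * ((1 / N) * ((1/N) * Sc + r)) := by
    intro i
    induction i with
    | zero => unfold psum hub clp; simp
    | succ i IH =>
      have hb := e_bound P X hX z hz M m hM hz0 hzM hm a hx ha ha0 haM hax hzx N hN i p hp
      have hi1 : Integrable (fun ω => (clp ((psum X z i ω - i * m) / N)) * (z (X i ω) - m)) P := by
        apply ((iZ i).sub (integrable_const m)).bdd_mul (c := 1)
        · exact (clp_meas.comp (((psum_meas X hX z hz i).sub_const _).div_const _)).aestronglyMeasurable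
        · refine Eventually.of_forall fun ω => ?_
          rw [Real.norm_eq_abs, abs_le]; exact clp_abs _
      have hi2 : Integrable (fun ω => (z (X i ω) - m) ^ 2) P := by
        have : (fun ω => (z (X i ω) - m) ^ 2) = fun ω => z (X i ω) ^ 2 - 2 * m * z (X i ω) + m ^ 2 := by ext ω; ring
        rw [this]
        exact ((iZ2 i).sub ((iZ i).const_mul _)).add (integrable_const _)
      have hv : ∫ ω, (z (X i ω) - m) ^ 2 ∂P ≤ cdc a (alphaCoef P X) 0 := by
        have : (fun ω => (z (X i ω) - m) ^ 2) = fun ω => (z (X i ω) ^ 2 - 2 * m * z (X i ω)) + m ^ 2 := by ext ω; ring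
        have h5 : Integrable (fun ω => z (X i ω) ^ 2 - 2 * m * z (X i ω)) P := (iZ2 i).sub ((iZ i).const_mul _)
        rw [this, integral_add h5 (integrable_const _), integral_sub (iZ2 i) ((iZ i).const_mul _), integral_const_mul, hm i]
        have h0 : cdc a (alphaCoef P X) 0 = ∫ u, a u ^ 2 ∂lam := by unfold cdc; simp
        rw [h0]
        simp only [integral_const, probReal_univ, one_smul]
        nlinarith [hz2 i, sq_nonneg m]
      have h6 : Integrable (fun ω => hub ((psum X z i ω - i * m) / N) + (1 / N) * ((clp ((psum X z i ω - i * m) / N)) * (z (X i ω) - m))) P :=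
        (ih i).add (hi1.const_mul _)
      have h7 : Integrable (fun ω => hub ((psum X z i ω - i * m) / N) + (1 / N) * ((clp ((psum X z i ω - i * m) / N)) * (z (X i ω) - m))
            + (1 / (2 * N ^ 2)) * (z (X i ω) - m) ^ 2) P := h6.add (hi2.const_mul _)
      have hs : ∫ ω, hub ((psum X z (i+1) ω - (i+1 : ℕ) * m) / N) ∂P ≤
          ∫ ω, (hub ((psum X z i ω - i * m) / N) + (1 / N) * ((clp ((psum X z i ω - i * m) / N)) * (z (X i ω) - m))
            + (1 / (2 * N ^ 2)) * (z (X i ω) - m) ^ 2) ∂P := by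
        apply integral_mono (ih (i+1)) h7
        intro ω
        have e1 : (psum X z (i+1) ω - (i+1 : ℕ) * m) / N = (psum X z i ω - i * m) / N + (z (X i ω) - m) / N := by
          unfold psum; rw [Finset.sum_range_succ]; push_cast; ring
        simp only [e1]
        refine (hub_step _ _).trans (le_of_eq ?_)
        field_simp
      rw [integral_add h6 (hi2.const_mul _), integral_add (ih i) (hi1.const_mul _), integral_const_mul, integral_const_mul] at hs
      have t1 : 1 / (N:ℝ) * ∫ ω, (clp ((psum X z i ω - i * m) / N)) * (z (X i ω) - m) ∂P ≤ 1 / (N:ℝ) * ((1 / N) * ∑ d ∈ Finset.range (p-1), cdc a (alphaCoef P X) (d+1) + r) := by gcongr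
      have t2 : (1 / (2 * (N:ℝ) ^ 2)) * ∫ ω, (z (X i ω) - m) ^ 2 ∂P ≤ (1 / (N:ℝ) ^ 2) * cdc a (alphaCoef P X) 0 := by
        apply mul_le_mul _ hv (integral_nonneg fun ω => by positivity) (by positivity)
        apply one_div_le_one_div_of_le (by positivity); nlinarith [sq_nonneg (N:ℝ)]
      have t3 : 1 / (N:ℝ) * ((1 / N) * Sc + r) = 1 / (N:ℝ) * ((1 / N) * ∑ d ∈ Finset.range (p-1), cdc a (alphaCoef P X) (d+1) + r) + (1 / (N:ℝ) ^ 2) * cdc a (alphaCoef P X) 0 := by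
        rw [hSe]; field_simp; ring
      push_cast at hs ⊢
      linarith
  refine (main N).trans (le_of_eq ?_)
  field_simp

lemma distFun_eq_cdf {Ω : Type*} [MeasurableSpace Ω] (P : Measure Ω) [IsProbabilityMeasure P] (Y : Ω → ℝ)
    (hY : Measurable Y) (x : ℝ) : distFun P Y x = ProbabilityTheory.cdf (P.map Y) x := by
  have := Measure.isProbabilityMeasure_map (μ := P) hY.aemeasurable
  rw [ProbabilityTheory.cdf_eq_real, measureReal_def, Measure.map_apply hY measurableSet_Iic]
  rfl

lemma rcInv_lt_iff (ν : Measure ℝ) [IsProbabilityMeasure ν] (u t : ℝ) (hu : 0 < u) (ht : 0 ≤ t) :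
    t < rcInv (fun x => 1 - ProbabilityTheory.cdf ν x) u ↔ u < 1 - ProbabilityTheory.cdf ν t := by
  unfold rcInv
  have hmono := ProbabilityTheory.monotone_cdf ν
  have hbdd : BddAbove {x : ℝ | 0 ≤ x ∧ u < 1 - ProbabilityTheory.cdf ν x} := by
    have h1 := (ProbabilityTheory.tendsto_cdf_atTop ν).eventually_const_lt (show 1 - u < 1 by linarith)
    obtain ⟨b, hb⟩ := h1.exists
    refine ⟨b, fun x hx => ?_⟩
    by_contra hcon
    push Not at hcon
    have := hmono hcon.le
    linarith [hx.2]
  constructor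
  · intro h
    rcases eq_empty_or_nonempty {x : ℝ | 0 ≤ x ∧ u < 1 - ProbabilityTheory.cdf ν x} with he | hne
    · rw [he, Real.sSup_empty] at h; linarith
    · obtain ⟨x, hx, htx⟩ := exists_lt_of_lt_csSup hne h
      have := hmono htx.le
      linarith [hx.2]
  · intro h
    have hrc : ContinuousWithinAt (ProbabilityTheory.cdf ν) (Ici t) t := (ProbabilityTheory.cdf ν).right_continuous t
    have h1 : ∀ᶠ x in nhdsWithin t (Ioi t), ProbabilityTheory.cdf ν x < 1 - u :=
      (hrc.mono_left (nhdsWithin_mono _ Ioi_subset_Ici_self)).eventually_lt_const (by linarith)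
    obtain ⟨x, hx1, hx2⟩ := (h1.and self_mem_nhdsWithin).exists
    have hx2' : t < x := hx2
    exact lt_of_lt_of_le hx2' (le_csSup hbdd ⟨by linarith, by linarith⟩)

/-- quantile function (upper tail) supported on `(0,1)` -/
noncomputable def QQ (ν : Measure ℝ) : ℝ → ℝ :=
  (Ioo (0:ℝ) 1).indicator (rcInv (fun x => 1 - ProbabilityTheory.cdf ν x))

lemma QQ_nonneg (ν : Measure ℝ) (u : ℝ) : 0 ≤ QQ ν u := by
  unfold QQ
  apply indicator_nonneg
  intro x _
  exact Real.sSup_nonneg fun y hy => hy.1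

lemma QQ_lt_iff (ν : Measure ℝ) [IsProbabilityMeasure ν] (u : ℝ) (hu : u ∈ Ioo (0:ℝ) 1) (t : ℝ) (ht : 0 ≤ t) :
    t < QQ ν u ↔ u < 1 - ProbabilityTheory.cdf ν t := by
  unfold QQ
  rw [indicator_of_mem hu]
  exact rcInv_lt_iff ν u t hu.1 ht

lemma QQ_meas (ν : Measure ℝ) [IsProbabilityMeasure ν] : Measurable (QQ ν) := by
  apply measurable_of_Ioi
  intro t
  rcases lt_or_ge t 0 with h | h
  · have : QQ ν ⁻¹' Ioi t = univ := by
      ext u; simp only [mem_preimage, mem_Ioi, mem_univ, iff_true]; exact h.trans_le (QQ_nonneg ν u)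
    rw [this]; exact MeasurableSet.univ
  · have : QQ ν ⁻¹' Ioi t = Ioo (0:ℝ) 1 ∩ Iio (1 - ProbabilityTheory.cdf ν t) := by
      ext u
      simp only [mem_preimage, mem_Ioi, mem_inter_iff, mem_Iio]
      constructor
      · intro hu
        have hmem : u ∈ Ioo (0:ℝ) 1 := by
          by_contra hc
          rw [QQ, indicator_of_notMem hc] at hu; linarith
        exact ⟨hmem, (QQ_lt_iff ν u hmem t h).1 hu⟩
      · intro hu
        exact (QQ_lt_iff ν u hu.1 t h).2 hu.2
    rw [this]; exact measurableSet_Ioo.inter measurableSet_Iio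

lemma QQ_map (ν : Measure ℝ) [IsProbabilityMeasure ν] (h0 : ν (Iio 0) = 0) : lam.map (QQ ν) = ν := by
  have := Measure.isProbabilityMeasure_map (μ := lam) (QQ_meas ν).aemeasurable
  apply Measure.ext_of_Iic
  intro t
  rw [Measure.map_apply (QQ_meas ν) measurableSet_Iic]
  rcases lt_or_ge t 0 with h | h
  · have e1 : QQ ν ⁻¹' Iic t = ∅ := by
      ext u; simp only [mem_preimage, mem_Iic, mem_empty_iff_false, iff_false, not_le]; exact h.trans_le (QQ_nonneg ν u)
    rw [e1, measure_empty]
    exact (measure_mono_null (fun x (hx : x ≤ t) => show x < 0 by linarith) h0).symm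
  · have e1 : lam (QQ ν ⁻¹' Iic t) = lam (Iio (1 - ProbabilityTheory.cdf ν t))ᶜ := by
      apply lam_congr
      intro u hu
      have := QQ_lt_iff ν u hu t h
      simp only [mem_preimage, mem_Iic, mem_compl_iff, mem_Iio, ← this, not_lt]
    have c0 := ProbabilityTheory.cdf_nonneg ν t
    have c1 := ProbabilityTheory.cdf_le_one ν t
    rw [e1, prob_compl_eq_one_sub measurableSet_Iio, lam_Iio _ (by linarith), ← ENNReal.ofReal_one,
      ← ENNReal.ofReal_sub _ (by linarith), ← ProbabilityTheory.ofReal_cdf]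
    congr 1; ring

lemma rcInv_nonneg (h : ℝ → ℝ) (u : ℝ) : 0 ≤ rcInv h u := Real.sSup_nonneg fun y hy => hy.1

lemma le_rcInv_alpha (al : ℕ → ℝ) (hal : Tendsto al atTop (nhds 0)) (u : ℝ) (hu : 0 < u) (d : ℕ) (hd : 1 ≤ d)
    (h : u < al d) : (d : ℝ) ≤ rcInv (alphaExt al) (u / 2) := by
  unfold rcInv
  have hd' : (1:ℝ) ≤ d := by exact_mod_cast hd
  apply le_csSup
  · obtain ⟨n, hn⟩ := eventually_atTop.1 (hal.eventually_lt_const (show 0 < u / 2 by linarith))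
    refine ⟨n + 1, fun x hx => ?_⟩
    by_contra hcon
    push Not at hcon
    have h2 := hx.2
    unfold alphaExt at h2
    have hn0 : (0:ℝ) ≤ n := by positivity
    rw [if_neg (by linarith)] at h2
    have := hn ⌊x⌋₊ (Nat.le_floor (by linarith))
    linarith
  · refine ⟨by linarith, ?_⟩
    unfold alphaExt
    rw [if_neg (by linarith), Nat.floor_natCast]
    linarith

lemma ae_tendsto_of_tsum {Ω : Type*} [MeasurableSpace Ω] (P : Measure Ω) (g : ℕ → Ω → ℝ)
    (hg : ∀ k, Measurable (g k)) (hg0 : ∀ k ω, 0 ≤ g k ω) (B : ℕ → ℝ≥0∞) (C : ℝ≥0∞) (hC : C ≠ ∞)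
    (hB : ∑' k, B k ≠ ∞) (h : ∀ k, ∫⁻ ω, ENNReal.ofReal (g k ω) ∂P ≤ C * B k) :
    ∀ᵐ ω ∂P, Tendsto (fun k => g k ω) atTop (nhds 0) := by
  have h1 : ∫⁻ ω, ∑' k, ENNReal.ofReal (g k ω) ∂P ≠ ∞ := by
    rw [lintegral_tsum fun k => (hg k).ennreal_ofReal.aemeasurable]
    refine ne_top_of_le_ne_top ?_ (ENNReal.tsum_le_tsum h)
    rw [ENNReal.tsum_mul_left]
    exact ENNReal.mul_ne_top hC hB
  have h2 := ae_lt_top (Measurable.tsum fun k => (hg k).ennreal_ofReal) h1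
  filter_upwards [h2] with ω hω
  have h3 := ENNReal.tendsto_atTop_zero_of_tsum_ne_top hω.ne
  have h4 := (ENNReal.tendsto_toReal (ENNReal.zero_ne_top)).comp h3
  simpa [Function.comp_def, ENNReal.toReal_ofReal (hg0 _ ω)] using h4

/-- the dominating quantity -/
noncomputable def BB (Q A : ℝ → ℝ) (n : ℕ) : ℝ≥0∞ := ∫⁻ u, ENNReal.ofReal (bb (Q u) (A u) n) ∂lam

lemma ae_lam : ∀ᵐ u ∂lam, u ∈ Ioo (0:ℝ) 1 := by
  unfold lam; exact ae_restrict_mem measurableSet_Ioo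

lemma sum_lintegral_le {α : Type*} [MeasurableSpace α] (μ : Measure α) (f : ℕ → α → ℝ≥0∞) (K : ℕ) :
    ∑ k ∈ Finset.range K, ∫⁻ a, f k a ∂μ ≤ ∫⁻ a, ∑ k ∈ Finset.range K, f k a ∂μ := by
  induction K with
  | zero => simp
  | succ K ih =>
    simp_rw [Finset.sum_range_succ]
    exact (add_le_add_left ih _).trans (le_lintegral_add _ _)

lemma tsumB (Q A : ℝ → ℝ) (hQ : ∀ u ∈ Ioo (0:ℝ) 1, 0 < Q u) (hA : ∀ u, 1 ≤ A u)
    (iQ : Integrable Q lam) (iAQ : Integrable (fun u => Real.log (A u) * Q u) lam) (c : ℝ) (hc : 1 < c) :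
    ∑' k : ℕ, BB Q A ⌊c ^ k⌋₊ ≠ ⊤ := by
  obtain ⟨C, hC, h⟩ := bb_sum c hc
  have i2 : Integrable (fun u => C * (Q u * (1 + Real.log (A u)))) lam := by
    refine Integrable.const_mul ?_ _
    have := iQ.add iAQ
    refine this.congr (Eventually.of_forall fun u => ?_)
    show Q u + Real.log (A u) * Q u = _
    ring
  have hfin : ∫⁻ u, ENNReal.ofReal (C * (Q u * (1 + Real.log (A u)))) ∂lam ≠ ⊤ :=
    i2.lintegral_lt_top.ne
  refine ne_top_of_le_ne_top hfin ?_
  rw [ENNReal.tsum_eq_iSup_nat]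
  refine iSup_le fun K => ?_
  unfold BB
  refine (sum_lintegral_le _ _ _).trans ?_
  refine lintegral_mono_ae ?_
  filter_upwards [ae_lam] with u hu
  rw [← ENNReal.ofReal_sum_of_nonneg]
  · exact ENNReal.ofReal_le_ofReal (h _ _ (hQ u hu) (hA u) K)
  · intro i _
    exact bb_nonneg (hQ u hu).le (by linarith [hA u]) (by positivity)

lemma transfer {Ω : Type*} [MeasurableSpace Ω] (P : Measure Ω) (Y W : Ω → ℝ) (hYW : ∀ ω, Y ω ≤ W ω)
    (hW : Measurable W) (ν : Measure ℝ) [IsProbabilityMeasure ν] (h0 : ν (Iio 0) = 0) (hWν : P.map W = ν)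
    (g : ℝ → ℝ) (hg : Monotone g) :
    ∫⁻ ω, ENNReal.ofReal (g (Y ω)) ∂P ≤ ∫⁻ u, ENNReal.ofReal (g (QQ ν u)) ∂lam := by
  have hgm : Measurable (fun x => ENNReal.ofReal (g x)) := hg.measurable.ennreal_ofReal
  calc _ ≤ ∫⁻ ω, ENNReal.ofReal (g (W ω)) ∂P := lintegral_mono fun ω => ENNReal.ofReal_le_ofReal (hg (hYW ω))
    _ = ∫⁻ x, ENNReal.ofReal (g x) ∂(P.map W) := (lintegral_map hgm hW).symm
    _ = ∫⁻ x, ENNReal.ofReal (g x) ∂(lam.map (QQ ν)) := by rw [hWν, QQ_map ν h0]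
    _ = _ := lintegral_map hgm (QQ_meas ν)

lemma min_sub_mono (M N : ℝ) (h : M ≤ N) : Monotone fun x : ℝ => min x N - min x M := by
  intro x y hxy
  show min x N - min x M ≤ min y N - min y M
  rcases min_cases x N with h1 | h1 <;> rcases min_cases x M with h2 | h2 <;>
  rcases min_cases y N with h3 | h3 <;> rcases min_cases y M with h4 | h4 <;> linarith

/-- per-`N` bounds -/
lemma step {Ω : Type*} [MeasurableSpace Ω] (P : Measure Ω) [IsProbabilityMeasure P]
    (X : ℕ → Ω → ℝ) (hX : ∀ i, Measurable (X i)) (hident : ∀ i, Measure.map (X i) P = Measure.map (X 0) P)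
    (hmix : Tendsto (alphaCoef P X) atTop (nhds 0))
    (f : ℝ → ℝ) (hf : Measurable f) (hf0 : ∀ x, 0 ≤ f x)
    (W : ℕ → Ω → ℝ) (hW : ∀ i, Measurable (W i)) (hfW : ∀ i ω, f (X i ω) ≤ W i ω)
    (ν : Measure ℝ) [IsProbabilityMeasure ν] (h0 : ν (Iio 0) = 0) (hWν : ∀ i, P.map (W i) = ν)
    (ε : ℝ) (hε : 0 < ε) (hνε : ∀ t, 0 ≤ t → t < ε → ProbabilityTheory.cdf ν t = 0)
    (A : ℝ → ℝ) (hA : ∀ u, 1 ≤ A u)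
    (hAal : ∀ u ∈ Ioo (0:ℝ) 1, ∀ d : ℕ, 1 ≤ d → u < alphaCoef P X d → (d:ℝ) + 1 ≤ A u)
    (N : ℕ) (hN : 1 ≤ N) :
    ∃ M : ℝ, 0 < M ∧ M ≤ N ∧
      ∫⁻ ω, ENNReal.ofReal (hub ((psum X (fun x => min (f x) M) N ω - N * ∫ ω, min (f (X 0 ω)) M ∂P) / N)) ∂P
        ≤ 6 * BB (QQ ν) A N ∧
      (∀ i, ∫⁻ ω, ENNReal.ofReal (min (f (X i ω)) N - min (f (X i ω)) M) ∂P ≤ BB (QQ ν) A N) ∧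
      (∀ i, ∫⁻ ω, ENNReal.ofReal (if (N:ℝ) < f (X i ω) then (N:ℝ) else 0) ∂P ≤ BB (QQ ν) A N) := by
  set al := alphaCoef P X with hal
  set H : ℝ → ℝ := fun t => 1 - ProbabilityTheory.cdf ν t with hH
  have hQpos : ∀ u ∈ Ioo (0:ℝ) 1, 0 < QQ ν u := by
    intro u hu
    have := (QQ_lt_iff ν u hu 0 le_rfl).2 (by rw [hνε 0 le_rfl hε]; linarith [hu.2])
    exact this
  obtain ⟨p, M, hp, hM, hMN, hpM1, hpM, hpH, hor⟩ := choose_pM al hmix H ε hε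
    (fun t ht ht' => by simp [hH, hνε t ht ht']) N hN
  have key : ∀ u ∈ Ioo (0:ℝ) 1, _ := fun u hu => bb_pointwise al H N p hN M hp hM hMN hpM1 hpM hpH hor u (QQ ν u) (A u)
    (hQpos u hu) (hA u) (fun t ht => QQ_lt_iff ν u hu t ht) (hAal u hu)
  refine ⟨M, hM, hMN, ?_, ?_, ?_⟩
  · have hz : Measurable (fun x => min (f x) M) := hf.min measurable_const
    have hz0 : ∀ x, 0 ≤ min (f x) M := fun x => le_min (hf0 x) hM.le
    set m := ∫ ω, min (f (X 0 ω)) M ∂P with hm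
    have hmi : ∀ i, ∫ ω, min (f (X i ω)) M ∂P = m := by
      intro i
      rw [hm, ← integral_map (φ := X i) (f := fun x => min (f x) M) (hX i).aemeasurable hz.aestronglyMeasurable, hident i,
        integral_map (hX 0).aemeasurable hz.aestronglyMeasurable]
    have ha : Measurable (fun u => min (QQ ν u) M) := (QQ_meas ν).min measurable_const
    have ha0 : ∀ u, 0 ≤ min (QQ ν u) M := fun u => le_min (QQ_nonneg ν u) hM.le
    have hb := hub_bound P X hX (fun x => min (f x) M) hz M m hM hz0 (fun x => min_le_right _ _) hmi
      (fun u => min (QQ ν u) M) (fun s => if s < M then H s else 0) ha ha0 (fun u => min_le_right _ _)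
      (by
        intro s hs u hu
        have := QQ_lt_iff ν u hu s hs.le
        by_cases h : s < M
        · simp only [h, if_true, lt_min_iff, and_true]; exact this
        · simp only [h, if_false, lt_min_iff, and_false, false_iff]; linarith [hu.1])
      (by
        intro i s hs
        by_cases h : s < M
        · simp only [h, if_true, lt_min_iff, and_true]
          calc P {ω | s < f (X i ω)} ≤ P {ω | s < W i ω} := measure_mono fun ω hω => lt_of_lt_of_le hω (hfW i ω)
            _ = ν (Ioi s) := by rw [← hWν i, Measure.map_apply (hW i) measurableSet_Ioi]; rfl
            _ = ENNReal.ofReal (H s) := by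
              rw [← compl_Iic, prob_compl_eq_one_sub measurableSet_Iic, hH]
              simp only
              rw [ENNReal.ofReal_sub _ (ProbabilityTheory.cdf_nonneg ν s), ProbabilityTheory.ofReal_cdf, ENNReal.ofReal_one]
            _ ≤ _ := le_rfl
        · simp [h])
      (by
        intro i
        rw [integral_eq_lintegral_of_nonneg_ae (Eventually.of_forall fun ω => by positivity)
            (show Measurable fun ω => (min (f (X i ω)) M) ^ 2 from (hz.comp (hX i)).pow_const 2).aestronglyMeasurable,
          integral_eq_lintegral_of_nonneg_ae (Eventually.of_forall fun ω => by positivity)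
            (ha.pow_const 2).aestronglyMeasurable]
        apply ENNReal.toReal_mono
        · have : Integrable (fun u => (min (QQ ν u) M) ^ 2) lam := Integrable.of_bound (ha.pow_const 2).aestronglyMeasurable (M ^ 2)
            (Eventually.of_forall fun u => by
              rw [Real.norm_of_nonneg (by positivity)]; exact pow_le_pow_left₀ (ha0 u) (min_le_right _ _) 2)
          exact this.lintegral_lt_top.ne
        · have := transfer P (fun ω => f (X i ω)) (W i) (hfW i) (hW i) ν h0 (hWν i) (fun x => (max 0 (min x M)) ^ 2)
            (by
              intro x y hxy
              apply pow_le_pow_left₀ (le_max_left _ _)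
              exact max_le_max le_rfl (min_le_min hxy le_rfl))
          simpa only [max_eq_right (hz0 _), max_eq_right (ha0 _)] using this)
      N hN p hp
    have iS : Integrable (fun ω => hub ((psum X (fun x => min (f x) M) N ω - N * m) / N)) P := by
      have iZ : ∀ i, Integrable (fun ω => min (f (X i ω)) M) P := fun i => Integrable.of_bound (hz.comp (hX i)).aestronglyMeasurable M
        (Eventually.of_forall fun ω => by rw [Real.norm_of_nonneg (hz0 _)]; exact min_le_right _ _)
      have i1 : Integrable (psum X (fun x => min (f x) M) N) P := by
        unfold psum; exact integrable_finsetSum _ fun l _ => iZ l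
      refine Integrable.mono ((i1.sub (integrable_const (N * m))).div_const (N:ℝ)) (hub_meas.comp (((psum_meas X hX _ hz N).sub_const _).div_const _)).aestronglyMeasurable (Eventually.of_forall fun ω => ?_)
      rw [Real.norm_of_nonneg (hub_nonneg _), Real.norm_eq_abs]
      exact hub_le_abs _
    rw [← ofReal_integral_eq_lintegral_ofReal iS (Eventually.of_forall fun ω => hub_nonneg _)]
    refine (ENNReal.ofReal_le_ofReal hb).trans ?_
    have jm : ∀ d : ℕ, Measurable (fun u => if d = 0 ∨ u < al d then (min (QQ ν u) M) ^ 2 else 0) := by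
      intro d
      refine Measurable.ite ?_ (ha.pow_const 2) measurable_const
      by_cases hd : d = 0
      · simp [hd]
      · simp only [hd, false_or]; exact measurableSet_Iio
    have i1 : ∀ d : ℕ, Integrable (fun u => if d = 0 ∨ u < al d then (min (QQ ν u) M) ^ 2 else 0) lam := by
      intro d
      refine Integrable.of_bound (jm d).aestronglyMeasurable (M ^ 2) (Eventually.of_forall fun u => ?_)
      split_ifs
      · rw [Real.norm_of_nonneg (by positivity)]; exact pow_le_pow_left₀ (ha0 u) (min_le_right _ _) 2
      · simp; positivity
    have i2 : Integrable (fun u => if u < al p then 2 * M else 0) lam := by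
      refine Integrable.of_bound (Measurable.ite measurableSet_Iio measurable_const measurable_const).aestronglyMeasurable (2 * M) (Eventually.of_forall fun u => ?_)
      split_ifs
      · rw [Real.norm_of_nonneg (by positivity)]
      · simp; positivity
    have i3 : Integrable (fun u => 1 / (N:ℝ) * ∑ d ∈ Finset.range p, if d = 0 ∨ u < al d then (min (QQ ν u) M) ^ 2 else 0) lam :=
      (integrable_finsetSum _ fun d _ => i1 d).const_mul _
    have i4 : Integrable (fun u => (1 / (N:ℝ) * ∑ d ∈ Finset.range p, if d = 0 ∨ u < al d then (min (QQ ν u) M) ^ 2 else 0)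
        + if u < al p then 2 * M else 0) lam := i3.add i2
    unfold cdc
    rw [← integral_finsetSum _ (fun d _ => i1 d), ← integral_const_mul, ← integral_add i3 i2,
      ofReal_integral_eq_lintegral_ofReal i4]
    · unfold BB
      rw [← lintegral_const_mul' _ _ (by norm_num)]
      refine lintegral_mono_ae ?_
      filter_upwards [ae_lam] with u hu
      obtain ⟨k1, k2, k3, k4⟩ := key u hu
      rw [show (6:ℝ≥0∞) = ENNReal.ofReal 6 by norm_num, ← ENNReal.ofReal_mul (by norm_num)]
      apply ENNReal.ofReal_le_ofReal
      linarith
    · refine Eventually.of_forall fun u => ?_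
      show (0:ℝ) ≤ 1 / (N:ℝ) * (∑ d ∈ Finset.range p, if d = 0 ∨ u < al d then (min (QQ ν u) M) ^ 2 else 0) + (if u < al p then 2 * M else 0)
      have : 0 ≤ ∑ d ∈ Finset.range p, if d = 0 ∨ u < al d then (min (QQ ν u) M) ^ 2 else 0 :=
        Finset.sum_nonneg fun d _ => by split_ifs <;> positivity
      split_ifs <;> positivity
  · intro i
    refine (transfer P (fun ω => f (X i ω)) (W i) (hfW i) (hW i) ν h0 (hWν i) _ (min_sub_mono M N hMN)).trans ?_
    refine lintegral_mono_ae ?_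
    filter_upwards [ae_lam] with u hu
    exact ENNReal.ofReal_le_ofReal (key u hu).1
  · intro i
    refine (transfer P (fun ω => f (X i ω)) (W i) (hfW i) (hW i) ν h0 (hWν i) (fun x => if (N:ℝ) < x then (N:ℝ) else 0) ?_).trans ?_
    · intro x y hxy
      show (if (N:ℝ) < x then (N:ℝ) else 0) ≤ if (N:ℝ) < y then (N:ℝ) else 0
      split_ifs
      · rfl
      · linarith
      · positivity
      · rfl
    refine lintegral_mono_ae ?_
    filter_upwards [ae_lam] with u hu
    exact ENNReal.ofReal_le_ofReal (key u hu).2.2.2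

lemma avg_bound {Ω : Type*} [MeasurableSpace Ω] (P : Measure Ω) (g : ℕ → Ω → ℝ) (hg : ∀ i, Measurable (g i))
    (hg0 : ∀ i ω, 0 ≤ g i ω) (B : ℝ≥0∞) (hB : ∀ i, ∫⁻ ω, ENNReal.ofReal (g i ω) ∂P ≤ B) (n : ℕ) (hn : 1 ≤ n) :
    ∫⁻ ω, ENNReal.ofReal ((∑ i ∈ Finset.range n, g i ω) / n) ∂P ≤ 1 * B := by
  have hn' : (0:ℝ) < n := by exact_mod_cast hn
  have h1 : ∀ ω, ENNReal.ofReal ((∑ i ∈ Finset.range n, g i ω) / n) = (n:ℝ≥0∞)⁻¹ * ∑ i ∈ Finset.range n, ENNReal.ofReal (g i ω) := by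
    intro ω
    rw [ENNReal.ofReal_div_of_pos hn', ENNReal.ofReal_sum_of_nonneg (fun i _ => hg0 i ω), ENNReal.ofReal_natCast,
      div_eq_mul_inv, mul_comm]
  simp_rw [h1]
  rw [lintegral_const_mul _ (Finset.measurable_fun_sum _ fun i _ => (hg i).ennreal_ofReal),
    lintegral_finsetSum _ fun i _ => (hg i).ennreal_ofReal]
  calc _ ≤ (n:ℝ≥0∞)⁻¹ * ∑ i ∈ Finset.range n, B := by gcongr with i; exact hB i
    _ = (n:ℝ≥0∞)⁻¹ * n * B := by rw [Finset.sum_const, Finset.card_range, nsmul_eq_mul, mul_assoc]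
    _ = 1 * B := by
      rw [ENNReal.inv_mul_cancel] 
      · simp; omega
      · simp

lemma slln_sub {Ω : Type*} [MeasurableSpace Ω] (P : Measure Ω) [IsProbabilityMeasure P]
    (X : ℕ → Ω → ℝ) (hX : ∀ i, Measurable (X i)) (hident : ∀ i, Measure.map (X i) P = Measure.map (X 0) P)
    (hmix : Tendsto (alphaCoef P X) atTop (nhds 0))
    (f : ℝ → ℝ) (hf : Measurable f) (hf0 : ∀ x, 0 ≤ f x) (hfi : Integrable (fun ω => f (X 0 ω)) P)
    (W : ℕ → Ω → ℝ) (hW : ∀ i, Measurable (W i)) (hfW : ∀ i ω, f (X i ω) ≤ W i ω)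
    (ν : Measure ℝ) [IsProbabilityMeasure ν] (h0 : ν (Iio 0) = 0) (hWν : ∀ i, P.map (W i) = ν)
    (ε : ℝ) (hε : 0 < ε) (hνε : ∀ t, 0 ≤ t → t < ε → ProbabilityTheory.cdf ν t = 0)
    (A : ℝ → ℝ) (hA : ∀ u, 1 ≤ A u)
    (hAal : ∀ u ∈ Ioo (0:ℝ) 1, ∀ d : ℕ, 1 ≤ d → u < alphaCoef P X d → (d:ℝ) + 1 ≤ A u)
    (c : ℝ) (hc : 1 < c) (hts : ∑' k : ℕ, BB (QQ ν) A ⌊c ^ k⌋₊ ≠ ⊤) :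
    ∀ᵐ ω ∂P, Tendsto (fun k : ℕ => psum X f ⌊c ^ k⌋₊ ω / (⌊c ^ k⌋₊ : ℝ)) atTop (nhds (∫ ω, f (X 0 ω) ∂P)) := by
  set n : ℕ → ℕ := fun k => ⌊c ^ k⌋₊ with hn
  have hn1 : ∀ k, 1 ≤ n k := fun k => Nat.le_floor (by push_cast; exact one_le_pow₀ hc.le)
  have hnp : ∀ k, (0:ℝ) < n k := fun k => by exact_mod_cast hn1 k
  have hninf : Tendsto (fun k => (n k : ℝ)) atTop atTop :=
    tendsto_natCast_atTop_atTop.comp (tendsto_nat_floor_atTop.comp (tendsto_pow_atTop_atTop_of_one_lt hc))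
  choose M hM hMn h1 h2 h3 using fun k => step P X hX hident hmix f hf hf0 W hW hfW ν h0 hWν ε hε hνε A hA hAal (n k) (hn1 k)
  set B : ℕ → ℝ≥0∞ := fun k => BB (QQ ν) A (n k) with hB
  set m : ℕ → ℝ := fun k => ∫ ω, min (f (X 0 ω)) (M k) ∂P with hm
  have hmz : ∀ k, Measurable (fun x => min (f x) (M k)) := fun k => hf.min measurable_const
  have hmz' : ∀ k, Measurable (fun x => min (f x) (n k : ℝ)) := fun k => hf.min measurable_const
  -- the three a.s. limits
  have a1 := ae_tendsto_of_tsum P (fun k ω => hub ((psum X (fun x => min (f x) (M k)) (n k) ω - n k * m k) / n k))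
    (fun k => hub_meas.comp (((psum_meas X hX _ (hmz k) (n k)).sub_const _).div_const _)) (fun k ω => hub_nonneg _) B 6
    (by norm_num) hts h1
  have a2 := ae_tendsto_of_tsum P (fun k ω => (∑ i ∈ Finset.range (n k), (min (f (X i ω)) (n k) - min (f (X i ω)) (M k))) / n k)
    (fun k => (Finset.measurable_fun_sum _ fun i _ => ((hmz' k).comp (hX i)).sub ((hmz k).comp (hX i))).div_const _)
    (fun k ω => div_nonneg (Finset.sum_nonneg fun i _ => sub_nonneg.2 (min_le_min le_rfl (hMn k))) (hnp k).le) B 1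
    (by norm_num) hts
    (fun k => avg_bound P (fun i ω => min (f (X i ω)) (n k) - min (f (X i ω)) (M k)) (fun i => ((hmz' k).comp (hX i)).sub ((hmz k).comp (hX i)))
      (fun i ω => sub_nonneg.2 (min_le_min le_rfl (hMn k))) (B k) (h2 k) (n k) (hn1 k))
  have ho : ∀ k i, Measurable (fun ω => if (n k : ℝ) < f (X i ω) then (n k : ℝ) else 0) := fun k i =>
    Measurable.ite (measurableSet_lt measurable_const (hf.comp (hX i))) measurable_const measurable_const
  have ho0 : ∀ k i ω, (0:ℝ) ≤ (if (n k : ℝ) < f (X i ω) then (n k : ℝ) else 0) := fun k i ω => by split_ifs <;> positivity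
  have a3 := ae_tendsto_of_tsum P (fun k ω => (∑ i ∈ Finset.range (n k), (if (n k : ℝ) < f (X i ω) then (n k : ℝ) else 0)) / n k)
    (fun k => (Finset.measurable_fun_sum _ fun i _ => ho k i).div_const _)
    (fun k ω => div_nonneg (Finset.sum_nonneg fun i _ => ho0 k i ω) (hnp k).le) B 1
    (by norm_num) hts
    (fun k => avg_bound P (fun i ω => if (n k : ℝ) < f (X i ω) then (n k : ℝ) else 0) (ho k) (ho0 k) (B k) (h3 k) (n k) (hn1 k))
  -- convergence of the means
  have iM : ∀ (t : ℝ), 0 < t → Integrable (fun ω => min (f (X 0 ω)) t) P := fun t ht =>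
    Integrable.of_bound ((hf.min measurable_const).comp (hX 0)).aestronglyMeasurable t
        (Eventually.of_forall fun ω => by rw [Real.norm_of_nonneg (le_min (hf0 _) ht.le)]; exact min_le_right _ _)
  have e1 : Tendsto (fun k => ∫ ω, min (f (X 0 ω)) (n k) ∂P) atTop (nhds (∫ ω, f (X 0 ω) ∂P)) := by
    apply tendsto_integral_of_dominated_convergence (fun ω => f (X 0 ω))
    · exact fun k => (iM _ (hnp k)).aestronglyMeasurable
    · exact hfi
    · intro k
      refine Eventually.of_forall fun ω => ?_
      rw [Real.norm_of_nonneg (le_min (hf0 _) (hnp k).le)]; exact min_le_left _ _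
    · refine Eventually.of_forall fun ω => ?_
      apply tendsto_const_nhds.congr'
      filter_upwards [hninf.eventually_ge_atTop (f (X 0 ω))] with k hk
      rw [min_eq_left hk]
  have hBne : ∀ k, B k ≠ ⊤ := fun k => ENNReal.ne_top_of_tsum_ne_top hts k
  have e2 : Tendsto (fun k => (B k).toReal) atTop (nhds 0) := by
    have := ENNReal.tendsto_atTop_zero_of_tsum_ne_top hts
    have := (ENNReal.tendsto_toReal ENNReal.zero_ne_top).comp this
    rw [ENNReal.toReal_zero] at this
    exact this
  have e3 : Tendsto (fun k => ∫ ω, min (f (X 0 ω)) (n k) ∂P - m k) atTop (nhds 0) := by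
    have hrep : ∀ k, ∫ ω, min (f (X 0 ω)) (n k) ∂P - m k = ∫ ω, (min (f (X 0 ω)) (n k) - min (f (X 0 ω)) (M k)) ∂P :=
      fun k => (integral_sub (iM _ (hnp k)) (iM _ (hM k))).symm
    refine squeeze_zero (fun k => ?_) (fun k => ?_) e2
    · rw [hrep]; exact integral_nonneg fun ω => sub_nonneg.2 (min_le_min le_rfl (hMn k))
    · rw [hrep, integral_eq_lintegral_of_nonneg_ae (Eventually.of_forall fun ω => sub_nonneg.2 (min_le_min le_rfl (hMn k)))
        ((iM _ (hnp k)).sub (iM _ (hM k))).aestronglyMeasurable]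
      exact ENNReal.toReal_mono (hBne k) (h2 k 0)
  have e4 : Tendsto m atTop (nhds (∫ ω, f (X 0 ω) ∂P)) := by
    have := e1.sub e3
    simpa using this
  filter_upwards [a1, a2, a3] with ω b1 b2 b3
  have b1' := tendsto_of_hub b1
  have b := (b1'.add e4).add b2
  rw [zero_add, add_zero] at b
  refine b.congr' ?_
  filter_upwards [b3.eventually_lt_const (show (0:ℝ) < 1 by norm_num)] with k hk
  have hle : ∀ i ∈ Finset.range (n k), f (X i ω) ≤ n k := by
    intro i hi
    by_contra hcon
    push Not at hcon
    have := Finset.single_le_sum (f := fun i => if (n k : ℝ) < f (X i ω) then (n k : ℝ) else 0) (fun i _ => ho0 k i ω) hi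
    simp only [hcon, if_true] at this
    rw [div_lt_one (hnp k)] at hk
    linarith
  have hs : ∑ i ∈ Finset.range (n k), (min (f (X i ω)) (n k) - min (f (X i ω)) (M k)) = psum X f (n k) ω - psum X (fun x => min (f x) (M k)) (n k) ω := by
    unfold psum
    rw [← Finset.sum_sub_distrib]
    exact Finset.sum_congr rfl fun i hi => by rw [min_eq_left (hle i hi)]
  rw [hs]
  have := (hnp k).ne'
  show _ = psum X f (n k) ω / (n k : ℝ)
  field_simp
  ring

/-- strong law for `0 ≤ f ≤ φ` -/
lemma slln {Ω : Type*} [MeasurableSpace Ω] (P : Measure Ω) [IsProbabilityMeasure P]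
    (X : ℕ → Ω → ℝ) (hX : ∀ i, Measurable (X i))
    (hident : ∀ i, Measure.map (X i) P = Measure.map (X 0) P)
    (φ : ℝ → ℝ) (hφ : Measurable φ) (ε : ℝ) (hε : 0 < ε) (hφε : ∀ x, ε ≤ φ x)
    (hint : Integrable (fun ω => φ (X 0 ω)) P)
    (hmix : Tendsto (alphaCoef P X) atTop (nhds 0))
    (hcond : IntegrableOn
      (fun s => Real.log (1 + rcInv (alphaExt (alphaCoef P X)) (s / 2)) *
        rcInv (fun x => 1 - distFun P (fun ω => φ (X 0 ω)) x) s)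
      (Set.Ioo (0 : ℝ) 1))
    (f : ℝ → ℝ) (hf : Measurable f) (hf0 : ∀ x, 0 ≤ f x) (hfφ : ∀ x, f x ≤ φ x) :
    ∀ᵐ ω ∂P, Tendsto (fun n : ℕ => psum X f n ω / (n : ℝ)) atTop (nhds (∫ ω, f (X 0 ω) ∂P)) := by
  have hWm : ∀ i, Measurable (fun ω => φ (X i ω)) := fun i => hφ.comp (hX i)
  set ν := P.map (fun ω => φ (X 0 ω)) with hν
  have hpν : IsProbabilityMeasure ν := Measure.isProbabilityMeasure_map (hWm 0).aemeasurable
  have hlow : ∀ t, t < ε → ν (Iic t) = 0 := by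
    intro t ht
    rw [hν, Measure.map_apply (hWm 0) measurableSet_Iic]
    convert measure_empty (μ := P)
    ext ω
    simp only [mem_preimage, mem_Iic, mem_empty_iff_false, iff_false, not_le]
    exact lt_of_lt_of_le ht (hφε _)
  have h0 : ν (Iio 0) = 0 := measure_mono_null Iio_subset_Iic_self (hlow 0 hε)
  have hWν : ∀ i, P.map (fun ω => φ (X i ω)) = ν := by
    intro i
    have h : ∀ i, P.map (fun ω => φ (X i ω)) = (P.map (X i)).map φ := fun i => (Measure.map_map hφ (hX i)).symm
    rw [hν, h, h, hident]
  have hνε : ∀ t, 0 ≤ t → t < ε → ProbabilityTheory.cdf ν t = 0 := by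
    intro t _ ht
    rw [ProbabilityTheory.cdf_eq_real, measureReal_def, hlow t ht]; rfl
  set A : ℝ → ℝ := fun u => 1 + rcInv (alphaExt (alphaCoef P X)) (u / 2) with hAdef
  have hA : ∀ u, 1 ≤ A u := fun u => by have := rcInv_nonneg (alphaExt (alphaCoef P X)) (u/2); simp only [hAdef]; linarith
  have hAal : ∀ u ∈ Ioo (0:ℝ) 1, ∀ d : ℕ, 1 ≤ d → u < alphaCoef P X d → (d:ℝ) + 1 ≤ A u := by
    intro u hu d hd h
    have := le_rcInv_alpha _ hmix u hu.1 d hd h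
    simp only [hAdef]; linarith
  have hQpos : ∀ u ∈ Ioo (0:ℝ) 1, 0 < QQ ν u := by
    intro u hu
    exact (QQ_lt_iff ν u hu 0 le_rfl).2 (by rw [hνε 0 le_rfl hε]; linarith [hu.2])
  have iQ : Integrable (QQ ν) lam := by
    have i1 : Integrable (fun x : ℝ => x) ν := (integrable_map_measure aestronglyMeasurable_id (hWm 0).aemeasurable).2 hint
    rw [← QQ_map ν h0] at i1
    exact (integrable_map_measure aestronglyMeasurable_id (QQ_meas ν).aemeasurable).1 i1
  have iAQ : Integrable (fun u => Real.log (A u) * QQ ν u) lam := by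
    refine Integrable.congr hcond ?_
    filter_upwards [ae_lam] with u hu
    unfold QQ
    rw [indicator_of_mem hu]
    have : (fun x => 1 - distFun P (fun ω => φ (X 0 ω)) x) = fun x => 1 - ProbabilityTheory.cdf ν x := by
      ext x; rw [distFun_eq_cdf P _ (hWm 0)]
    rw [this]
  have hfi : Integrable (fun ω => f (X 0 ω)) P := by
    refine hint.mono (hf.comp (hX 0)).aestronglyMeasurable (Eventually.of_forall fun ω => ?_)
    rw [Real.norm_of_nonneg (hf0 _), Real.norm_of_nonneg ((hf0 _).trans (hfφ _))]; exact hfφ _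
  have hall : ∀ᵐ ω ∂P, ∀ j : ℕ, Tendsto (fun k : ℕ => psum X f ⌊(1 + 1 / ((j:ℝ) + 1)) ^ k⌋₊ ω / (⌊(1 + 1 / ((j:ℝ) + 1)) ^ k⌋₊ : ℝ)) atTop (nhds (∫ ω, f (X 0 ω) ∂P)) := by
    rw [ae_all_iff]
    intro j
    have hc : (1:ℝ) < 1 + 1 / ((j:ℝ) + 1) := by
      have : 0 < 1 / ((j:ℝ) + 1) := by positivity
      linarith
    exact slln_sub P X hX hident hmix f hf hf0 hfi (fun i ω => φ (X i ω)) hWm (fun i ω => hfφ _) ν h0 hWν ε hε hνε A hA hAal _ hc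
      (tsumB (QQ ν) A hQpos hA iQ iAQ _ hc)
  filter_upwards [hall] with ω hω
  refine tendsto_div_of_monotone_of_tendsto_div_floor_pow (fun n => psum X f n ω) _ ?_ (fun j : ℕ => 1 + 1 / ((j:ℝ) + 1)) ?_ ?_ hω
  · refine monotone_nat_of_le_succ fun n => ?_
    unfold psum
    rw [Finset.sum_range_succ]
    linarith [hf0 (X n ω)]
  · intro j
    have : 0 < 1 / ((j:ℝ) + 1) := by positivity
    linarith
  · have := (tendsto_one_div_add_atTop_nhds_zero_nat (𝕜 := ℝ)).const_add 1
    simpa using this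

lemma psum_mono {Ω : Type*} (X : ℕ → Ω → ℝ) {f g : ℝ → ℝ} (h : ∀ x, f x ≤ g x) (n : ℕ) (ω : Ω) :
    psum X f n ω / n ≤ psum X g n ω / n := by
  unfold psum
  gcongr
  exact h _

lemma psum_const_mul {Ω : Type*} (X : ℕ → Ω → ℝ) (c : ℝ) (f : ℝ → ℝ) (n : ℕ) (ω : Ω) :
    psum X (fun x => c * f x) n ω / n = c * (psum X f n ω / n) := by
  unfold psum
  rw [← Finset.mul_sum, mul_div_assoc]

lemma empDF_eq {Ω : Type*} (X : ℕ → Ω → ℝ) (n : ℕ) (ω : Ω) (y : ℝ) :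
    empDF X n ω y = psum X ((Iic y).indicator fun _ => 1) n ω / n := by
  unfold empDF psum
  congr 1
  rw [Finset.card_filter]
  push_cast
  refine Finset.sum_congr rfl fun i _ => ?_
  simp [indicator]

lemma ind_mono {s t : Set ℝ} (h : s ⊆ t) (x : ℝ) :
    s.indicator (fun _ => (1:ℝ)) x ≤ t.indicator (fun _ => (1:ℝ)) x :=
  indicator_le_indicator_of_subset h (fun _ => zero_le_one) x

lemma distFun_real {Ω : Type*} [MeasurableSpace Ω] (P : Measure Ω) (Y : Ω → ℝ) (hY : Measurable Y) (y : ℝ) :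
    distFun P Y y = (P.map Y).real (Iic y) := by
  rw [measureReal_def, Measure.map_apply hY measurableSet_Iic]; rfl

lemma exists_left (μ : Measure ℝ) [IsProbabilityMeasure μ] (x δ : ℝ) (hδ : 0 < δ) :
    ∃ l < x, μ.real (Iio x) - δ < μ.real (Iic l) := by
  have h1 : μ (Iio x) = ENNReal.ofReal (Function.leftLim (ProbabilityTheory.cdf μ) x - 0) := by
    rw [← StieltjesFunction.measure_Iio _ (ProbabilityTheory.tendsto_cdf_atBot μ), ProbabilityTheory.measure_cdf]
  have h2 : μ.real (Iio x) ≤ Function.leftLim (ProbabilityTheory.cdf μ) x := by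
    rw [measureReal_def, h1, sub_zero]
    refine le_of_eq (ENNReal.toReal_ofReal ?_)
    have := (ProbabilityTheory.monotone_cdf μ).le_leftLim (show x - 1 < x by linarith)
    exact (ProbabilityTheory.cdf_nonneg μ _).trans this
  have h3 := (ProbabilityTheory.monotone_cdf μ).tendsto_leftLim x
  have h4 := (h3.eventually_const_lt (show μ.real (Iio x) - δ < Function.leftLim (ProbabilityTheory.cdf μ) x by linarith)).and self_mem_nhdsWithin
  obtain ⟨l, hl, hl'⟩ := h4.exists
  exact ⟨l, hl', by rwa [ProbabilityTheory.cdf_eq_real] at hl⟩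

lemma exists_right (μ : Measure ℝ) [IsProbabilityMeasure μ] (x δ : ℝ) (hδ : 0 < δ) :
    ∃ r > x, μ.real (Iic r) < μ.real (Iic x) + δ := by
  have h1 := ((ProbabilityTheory.cdf μ).right_continuous x).mono Ioi_subset_Ici_self
  have h2 : Tendsto (ProbabilityTheory.cdf μ) (nhdsWithin x (Ioi x)) (nhds (ProbabilityTheory.cdf μ x)) := h1
  have h4 := (h2.eventually_lt_const (show ProbabilityTheory.cdf μ x < ProbabilityTheory.cdf μ x + δ by linarith)).and self_mem_nhdsWithin
  obtain ⟨l, hl, hl'⟩ := h4.exists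
  exact ⟨l, hl', by rwa [ProbabilityTheory.cdf_eq_real, ProbabilityTheory.cdf_eq_real] at hl⟩

/-- the uniform closeness property on a set -/
def GoodOn {Ω : Type*} [MeasurableSpace Ω] (P : Measure Ω) (X : ℕ → Ω → ℝ) (φ : ℝ → ℝ) (η : ℝ) (s : Set ℝ) : Prop :=
  ∀ᵐ ω ∂P, ∀ᶠ n : ℕ in atTop, ∀ y ∈ s, |empDF X n ω y - distFun P (X 0) y| * φ y ≤ η

lemma GoodOn.mono {Ω : Type*} [MeasurableSpace Ω] {P : Measure Ω} {X : ℕ → Ω → ℝ} {φ : ℝ → ℝ} {η : ℝ} {s t : Set ℝ}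
    (h : GoodOn P X φ η t) (hst : s ⊆ t) : GoodOn P X φ η s := by
  unfold GoodOn at *
  filter_upwards [h] with ω hω
  filter_upwards [hω] with n hn y hy
  exact hn y (hst hy)

lemma GoodOn.union {Ω : Type*} [MeasurableSpace Ω] {P : Measure Ω} {X : ℕ → Ω → ℝ} {φ : ℝ → ℝ} {η : ℝ} {s t : Set ℝ}
    (hs : GoodOn P X φ η s) (ht : GoodOn P X φ η t) : GoodOn P X φ η (s ∪ t) := by
  unfold GoodOn at *
  filter_upwards [hs, ht] with ω h1 h2
  filter_upwards [h1, h2] with n h3 h4 y hy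
  rcases hy with hy | hy
  · exact h3 y hy
  · exact h4 y hy

lemma good_local {Ω : Type*} [MeasurableSpace Ω] (P : Measure Ω) [IsProbabilityMeasure P]
    (X : ℕ → Ω → ℝ) (hX : ∀ i, Measurable (X i)) (φ : ℝ → ℝ) (hφ : Continuous φ) (hφ0 : ∀ x, 0 < φ x)
    (hE : ∀ s : Set ℝ, MeasurableSet s → ∀ᵐ ω ∂P, Tendsto (fun n : ℕ => psum X (s.indicator fun _ => 1) n ω / (n:ℝ)) atTop
      (nhds ((P.map (X 0)).real s)))
    (η : ℝ) (hη : 0 < η) (x : ℝ) : ∃ t ∈ nhds x, GoodOn P X φ η t := by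
  set μ := P.map (X 0) with hμ
  have hpμ : IsProbabilityMeasure μ := Measure.isProbabilityMeasure_map (hX 0).aemeasurable
  set B := φ x + 1 with hB
  have hBp : 0 < B := by linarith [hφ0 x]
  set δ := η / (2 * B) with hδd
  have hδ : 0 < δ := by positivity
  have hδB : 2 * δ * B = η := by rw [hδd]; field_simp
  obtain ⟨l, hl, hl'⟩ := exists_left μ x δ hδ
  obtain ⟨r, hr, hr'⟩ := exists_right μ x δ hδ
  have hnb : {y | φ y < B} ∈ nhds x := hφ.continuousAt.eventually_lt_const (show φ x < B by linarith)
  refine ⟨Ioo l r ∩ {y | φ y < B}, inter_mem (Ioo_mem_nhds hl hr) hnb, ?_⟩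
  unfold GoodOn
  filter_upwards [hE _ (measurableSet_Iic (a := r)), hE _ (measurableSet_Iic (a := l)), hE _ (measurableSet_Iic (a := x)),
    hE _ (measurableSet_Iio (a := x))] with ω h1 h2 h3 h4
  filter_upwards [h1.eventually_lt_const (show μ.real (Iic r) < μ.real (Iic r) + δ by linarith),
    h2.eventually_const_lt (show μ.real (Iic l) - δ < μ.real (Iic l) by linarith),
    h3.eventually_const_lt (show μ.real (Iic x) - δ < μ.real (Iic x) by linarith),
    h4.eventually_lt_const (show μ.real (Iio x) < μ.real (Iio x) + δ by linarith)] with n k1 k2 k3 k4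
  rintro y ⟨⟨hy1, hy2⟩, hyB⟩
  rw [empDF_eq, distFun_real P (X 0) (hX 0)]
  have hyB' : φ y < B := hyB
  have hms : ∀ s t : Set ℝ, s ⊆ t → μ.real s ≤ μ.real t := fun s t h => measureReal_mono h
  have hps : ∀ s t : Set ℝ, s ⊆ t → psum X (s.indicator fun _ => 1) n ω / (n:ℝ) ≤ psum X (t.indicator fun _ => 1) n ω / (n:ℝ) :=
    fun s t h => psum_mono X (ind_mono h) n ω
  have hmain : |psum X ((Iic y).indicator fun _ => 1) n ω / (n:ℝ) - μ.real (Iic y)| ≤ 2 * δ := by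
    rw [abs_le]
    rcases le_or_gt x y with hxy | hxy
    · have s1 := Iic_subset_Iic.2 hxy
      have s2 := Iic_subset_Iic.2 hy2.le
      have := hms _ _ s1
      have := hms _ _ s2
      have := hps _ _ s1
      have := hps _ _ s2
      constructor <;> linarith
    · have s1 := Iic_subset_Iio.2 hxy
      have s2 := Iic_subset_Iic.2 hy1.le
      have := hms _ _ s1
      have := hms _ _ s2
      have := hps _ _ s1
      have := hps _ _ s2
      constructor <;> linarith
  calc _ ≤ 2 * δ * B := by
        apply mul_le_mul hmain hyB'.le (hφ0 y).le (by positivity)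
    _ = η := hδB

lemma exists_tail {Ω : Type*} [MeasurableSpace Ω] (P : Measure Ω) (Y : Ω → ℝ) (hY : Measurable Y) (φ : ℝ → ℝ) (hφ : Measurable φ)
    (hint : Integrable (fun ω => φ (Y ω)) P) (S : ℕ → Set ℝ) (hS : ∀ j, MeasurableSet (S j))
    (hSe : ∀ x, ∀ᶠ j in atTop, x ∉ S j) (η : ℝ) (hη : 0 < η) :
    ∀ᶠ j in atTop, ∫ ω, (S j).indicator φ (Y ω) ∂P < η := by
  have : Tendsto (fun j => ∫ ω, (S j).indicator φ (Y ω) ∂P) atTop (nhds (∫ ω, (0:ℝ) ∂P)) := by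
    apply tendsto_integral_of_dominated_convergence (fun ω => |φ (Y ω)|)
    · exact fun j => ((hφ.indicator (hS j)).comp hY).aestronglyMeasurable
    · exact hint.abs
    · exact fun j => Eventually.of_forall fun ω => norm_indicator_le_norm_self _ _
    · refine Eventually.of_forall fun ω => ?_
      apply tendsto_const_nhds.congr'
      filter_upwards [hSe (Y ω)] with j hj
      rw [indicator_of_notMem hj]
  rw [integral_zero] at this
  exact this.eventually_lt_const hη

lemma ind_integral {Ω : Type*} [MeasurableSpace Ω] (P : Measure Ω) (Y : Ω → ℝ) (hY : Measurable Y) (s : Set ℝ) (hs : MeasurableSet s) (c : ℝ) :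
    ∫ ω, c * s.indicator (fun _ => (1:ℝ)) (Y ω) ∂P = c * (P.map Y).real s := by
  rw [integral_const_mul, ← integral_map (f := s.indicator fun _ => (1:ℝ)) hY.aemeasurable
    (measurable_const.indicator hs).aestronglyMeasurable, integral_indicator_const _ hs]
  simp

/-- common tail lemma -/
lemma good_tail {Ω : Type*} [MeasurableSpace Ω] (P : Measure Ω) [IsProbabilityMeasure P]
    (X : ℕ → Ω → ℝ) (hX : ∀ i, Measurable (X i)) (φ : ℝ → ℝ) (hφ : Measurable φ) (hφ0 : ∀ x, 0 < φ x)
    (hint : Integrable (fun ω => φ (X 0 ω)) P)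
    (S : Set ℝ) (hS : MeasurableSet S) (η : ℝ) (hlt : ∫ ω, S.indicator φ (X 0 ω) ∂P < η)
    (hE : ∀ᵐ ω ∂P, Tendsto (fun n : ℕ => psum X (S.indicator φ) n ω / (n:ℝ)) atTop (nhds (∫ ω, S.indicator φ (X 0 ω) ∂P)))
    (s : Set ℝ) (D : ℝ → Set ℝ) (hD : ∀ y ∈ s, (D y = Iic y ∨ D y = Ioi y)) (hDS : ∀ y ∈ s, D y ⊆ S)
    (hDφ : ∀ y ∈ s, ∀ x ∈ D y, φ y ≤ φ x) : GoodOn P X φ η s := by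
  set μ := P.map (X 0) with hμ
  have hpμ : IsProbabilityMeasure μ := Measure.isProbabilityMeasure_map (hX 0).aemeasurable
  unfold GoodOn
  filter_upwards [hE] with ω hω
  filter_upwards [hω.eventually_lt_const hlt, eventually_ge_atTop 1] with n hn hn1 y hy
  have hn' : (0:ℝ) < n := by exact_mod_cast hn1
  rw [empDF_eq, distFun_real P (X 0) (hX 0)]
  have hDm : MeasurableSet (D y) := by
    rcases hD y hy with h | h <;> rw [h] <;> measurability
  have hpt : ∀ x, φ y * (D y).indicator (fun _ => (1:ℝ)) x ≤ S.indicator φ x := by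
    intro x
    by_cases hx : x ∈ D y
    · rw [indicator_of_mem hx, indicator_of_mem (hDS y hy hx), mul_one]; exact hDφ y hy x hx
    · rw [indicator_of_notMem hx, mul_zero]; exact indicator_nonneg (fun x _ => (hφ0 x).le) x
  have e1 : φ y * (psum X ((D y).indicator fun _ => 1) n ω / n) ≤ η := by
    rw [← psum_const_mul]
    exact (psum_mono X hpt n ω).trans hn.le
  have e2 : φ y * μ.real (D y) ≤ η := by
    rw [← ind_integral P (X 0) (hX 0) _ hDm]
    refine (integral_mono ?_ ?_ fun ω => hpt (X 0 ω)).trans hlt.le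
    · refine Integrable.const_mul ?_ _
      refine Integrable.of_bound ((measurable_const.indicator hDm).comp (hX 0)).aestronglyMeasurable 1 (Eventually.of_forall fun ω => ?_)
      by_cases h : X 0 ω ∈ D y <;> simp [h]
    · refine hint.mono ((hφ.indicator hS).comp (hX 0)).aestronglyMeasurable (Eventually.of_forall fun ω => norm_indicator_le_norm_self _ _)
  have e3 : |psum X ((Iic y).indicator fun _ => 1) n ω / (n:ℝ) - μ.real (Iic y)|
      = |psum X ((D y).indicator fun _ => 1) n ω / (n:ℝ) - μ.real (D y)| := by
    rcases hD y hy with h | h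
    · rw [h]
    · have h1 : psum X ((D y).indicator fun _ => 1) n ω / (n:ℝ) = 1 - psum X ((Iic y).indicator fun _ => 1) n ω / (n:ℝ) := by
        rw [eq_sub_iff_add_eq, ← add_div, div_eq_one_iff_eq hn'.ne']
        unfold psum
        rw [← Finset.sum_add_distrib]
        have : ∀ i ∈ Finset.range n, (D y).indicator (fun _ => (1:ℝ)) (X i ω) + (Iic y).indicator (fun _ => (1:ℝ)) (X i ω) = 1 := by
          intro i _
          rw [h]
          rcases le_or_gt (X i ω) y with h' | h'
          · simp [indicator, h', not_lt.2 h']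
          · simp [indicator, h', not_le.2 h']
        rw [Finset.sum_congr rfl this]; simp
      have h2 : μ.real (D y) = 1 - μ.real (Iic y) := by
        rw [h, ← compl_Iic, probReal_compl_eq_one_sub measurableSet_Iic]
      rw [h1, h2, abs_sub_comm]
      congr 1; ring
  rw [e3]
  have g1 : 0 ≤ psum X ((D y).indicator fun _ => 1) n ω / (n:ℝ) := by
    unfold psum
    exact div_nonneg (Finset.sum_nonneg fun i _ => indicator_nonneg (fun _ _ => zero_le_one) _) hn'.le
  have g2 : 0 ≤ μ.real (D y) := measureReal_nonneg
  have := hφ0 y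
  rcases abs_cases (psum X ((D y).indicator fun _ => 1) n ω / (n:ℝ) - μ.real (D y)) with ⟨h, _⟩ | ⟨h, _⟩ <;> rw [h] <;> nlinarith

/-- **SLLN for weighted empirical distribution functions of α-mixing data.**
If `(X i)` is identically distributed with df `F`, α-mixing, `φ` a weight function with
`∫ φ dF < ∞`, and `∫_0^1 log(1 + α^→(s/2)) Ḡ^→(s) ds < ∞` where `G` is the df of `φ(X 1)`,
then `sup_x |F̂_n(x) - F(x)| φ(x) → 0` almost surely. -/
theorem slln_weighted_empirical_alpha_mixing
    {Ω : Type*} [MeasurableSpace Ω] (P : Measure Ω) [IsProbabilityMeasure P]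
    (X : ℕ → Ω → ℝ) (hmeas : ∀ i, Measurable (X i))
    (hident : ∀ i, Measure.map (X i) P = Measure.map (X 0) P)
    (φ : ℝ → ℝ) (hφ : IsWeightFun φ)
    (hint : Integrable (fun ω => φ (X 0 ω)) P)
    (hmix : Tendsto (alphaCoef P X) atTop (nhds 0))
    (hcond : IntegrableOn
      (fun s => Real.log (1 + rcInv (alphaExt (alphaCoef P X)) (s / 2)) *
        rcInv (fun x => 1 - distFun P (fun ω => φ (X 0 ω)) x) s)
      (Set.Ioo (0 : ℝ) 1)) :
    ∀ᵐ ω ∂P, Tendsto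
      (fun n : ℕ => ⨆ x : ℝ, |empDF X n ω x - distFun P (X 0) x| * φ x)
      atTop (nhds 0) := by
  obtain ⟨hcont, ⟨ε, hε, hφε⟩, x₀, hdec, hinc⟩ := hφ
  have hφ0 : ∀ x, 0 < φ x := fun x => hε.trans_le (hφε x)
  have hS := fun f hf hf0 hfφ => slln P X hmeas hident φ hcont.measurable ε hε hφε hint hmix hcond f hf hf0 hfφ
  have hE : ∀ s : Set ℝ, MeasurableSet s → ∀ᵐ ω ∂P, Tendsto (fun n : ℕ => psum X (s.indicator fun _ => 1) n ω / (n:ℝ)) atTop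
      (nhds ((P.map (X 0)).real s)) := by
    intro s hs
    have h1 := hS (fun x => ε * s.indicator (fun _ => (1:ℝ)) x) (measurable_const.mul (measurable_const.indicator hs))
      (fun x => mul_nonneg hε.le (indicator_nonneg (fun _ _ => zero_le_one) _))
      (fun x => by
        by_cases hx : x ∈ s
        · rw [indicator_of_mem hx, mul_one]; exact hφε x
        · rw [indicator_of_notMem hx, mul_zero]; exact (hφ0 x).le)
    filter_upwards [h1] with ω hω
    rw [ind_integral P (X 0) (hmeas 0) s hs] at hω
    simp_rw [psum_const_mul] at hω
    have := hω.const_mul (ε⁻¹)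
    simpa only [inv_mul_cancel_left₀ hε.ne'] using this
  have hSφ : ∀ s : Set ℝ, MeasurableSet s → ∀ᵐ ω ∂P, Tendsto (fun n : ℕ => psum X (s.indicator φ) n ω / (n:ℝ)) atTop
      (nhds (∫ ω, s.indicator φ (X 0 ω) ∂P)) := fun s hs =>
    hS _ (hcont.measurable.indicator hs) (fun x => indicator_nonneg (fun x _ => (hφ0 x).le) x)
      (fun x => indicator_le_self' (fun x _ => (hφ0 x).le) x)
  have hgood : ∀ η > 0, GoodOn P X φ η univ := by
    intro η hη
    have t1 := exists_tail P (X 0) (hmeas 0) φ hcont.measurable hint (fun j : ℕ => Ioi (j:ℝ)) (fun j => measurableSet_Ioi)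
      (fun x => by
        filter_upwards [tendsto_natCast_atTop_atTop.eventually_ge_atTop x] with j hj
        simpa using hj) η hη
    have t2 := exists_tail P (X 0) (hmeas 0) φ hcont.measurable hint (fun j : ℕ => Iic (-(j:ℝ))) (fun j => measurableSet_Iic)
      (fun x => by
        filter_upwards [tendsto_natCast_atTop_atTop.eventually_gt_atTop (-x)] with j hj
        simp only [mem_Iic, not_le]; linarith) η hη
    obtain ⟨j, h1, h2, h3⟩ := (t1.and (t2.and (tendsto_natCast_atTop_atTop.eventually_ge_atTop |x₀|))).exists
    have hx0 := abs_le.1 h3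
    have g1 : GoodOn P X φ η (Ici (j:ℝ)) := by
      refine good_tail P X hmeas φ hcont.measurable hφ0 hint (Ioi (j:ℝ)) measurableSet_Ioi η h1 (hSφ _ measurableSet_Ioi) _ (fun y => Ioi y)
        (fun y _ => Or.inr rfl) (fun y hy => Ioi_subset_Ioi hy) ?_
      intro y hy x hx
      have : (j:ℝ) ≤ y := hy
      exact hinc y x (by linarith [hx0.2]) (le_of_lt hx)
    have g2 : GoodOn P X φ η (Iic (-(j:ℝ))) := by
      refine good_tail P X hmeas φ hcont.measurable hφ0 hint (Iic (-(j:ℝ))) measurableSet_Iic η h2 (hSφ _ measurableSet_Iic) _ (fun y => Iic y)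
        (fun y _ => Or.inl rfl) (fun y hy => Iic_subset_Iic.2 hy) ?_
      intro y hy x hx
      have : y ≤ -(j:ℝ) := hy
      exact hdec x y hx (by linarith [hx0.1])
    have g3 : GoodOn P X φ η (Icc (-(j:ℝ)) j) := by
      refine isCompact_Icc.induction_on (p := GoodOn P X φ η) ?_ (fun s t hst ht => ht.mono hst) (fun s t hs ht => hs.union ht) ?_
      · unfold GoodOn; simp
      · intro x _
        obtain ⟨t, ht, hg⟩ := good_local P X hmeas φ hcont hφ0 hE η hη x
        exact ⟨t, mem_nhdsWithin_of_mem_nhds ht, hg⟩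
    refine ((g1.union g2).union g3).mono fun y _ => ?_
    rcases le_or_gt (j:ℝ) y with h | h
    · exact Or.inl (Or.inl h)
    · rcases le_or_gt y (-(j:ℝ)) with h' | h'
      · exact Or.inl (Or.inr h')
      · exact Or.inr ⟨h'.le, h.le⟩
  have hall : ∀ᵐ ω ∂P, ∀ m : ℕ, ∀ᶠ n : ℕ in atTop, ∀ y ∈ (univ : Set ℝ), |empDF X n ω y - distFun P (X 0) y| * φ y ≤ 1 / ((m:ℝ) + 1) := by
    rw [ae_all_iff]
    intro m
    exact hgood _ (by positivity)
  filter_upwards [hall] with ω hω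
  rw [Metric.tendsto_atTop']
  intro e he
  obtain ⟨m, hm⟩ := exists_nat_one_div_lt he
  obtain ⟨N, hN⟩ := eventually_atTop.1 (hω m)
  refine ⟨N, fun n hn => ?_⟩
  have h1 : ⨆ x : ℝ, |empDF X n ω x - distFun P (X 0) x| * φ x ≤ 1 / ((m:ℝ) + 1) :=
    Real.iSup_le (fun y => hN n (le_of_lt hn) y (mem_univ y)) (by positivity)
  have h2 : 0 ≤ ⨆ x : ℝ, |empDF X n ω x - distFun P (X 0) x| * φ x :=
    Real.iSup_nonneg fun y => mul_nonneg (abs_nonneg _) (hφ0 y).le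
  rw [Real.dist_eq, sub_zero, abs_of_nonneg h2]
  exact h1.trans_lt hm
end
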